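/- In the setting of the energy-stable semi-implicit scheme: let κ > 0, ρ ≥ 0, q ∈ (2,4], e₀ > 0, and let c' > 0 be the stability constant (depending only on κ, ρ, e₀, q); let τ > 0 satisfy τ c' ≤ 1/2 and let (u^k)_{k=0,…,K} be C² periodic curves ℝ/ℤ → ℝ³ with |(u⁰)'| ≡ 1 and E(u⁰) ≤ e₀ satisfying (i) (d_t u^k)'·(u^{k−1})' = 0 pointwise and (ii) the weak scheme equation (d_t u^k, w)_{H²} + κ ∫ (u^k)''·w'' = −ρ δTP(u^{k−1})[w] for all C² periodic w with w'·(u^{k−1})' = 0. Then the iterates remain close to arclength parametrization: max_{k=0,…,K} ‖ |(u^k)'|² − 1 ‖_{L^∞} ≤ 4 τ c_∞² e₀, where c_∞ is the constant in the Sobolev inequality ‖w'‖_{L^∞} ≤ c_∞ ‖w''‖_{L²} for C² periodic w. -/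

import Mathlib

open MeasureTheory Set Filter
open scoped RealInnerProductSpace ENNReal Topology

noncomputable section

/-- The distance on the circle `ℝ/ℤ` between the points represented by `x` and `y`. -/
def circDist (x y : ℝ) : ℝ := ‖((x - y : ℝ) : AddCircle (1 : ℝ))‖

/-- The representative of `z` modulo `1` lying in `(-1/2, 1/2]`. -/
def wrap (z : ℝ) : ℝ := 1 / 2 - Int.fract (1 / 2 - z)

/-- Squared wedge norm `|a ∧ b|² = |a|²|b|² - ⟨a,b⟩²`. -/
def wedgeSq {n : ℕ} (a b : EuclideanSpace ℝ (Fin n)) : ℝ :=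
  ‖a‖ ^ 2 * ‖b‖ ^ 2 - ⟪a, b⟫ ^ 2

/-- Wedge inner product `⟨a∧b, c∧d⟩ = ⟨a,c⟩⟨b,d⟩ - ⟨a,d⟩⟨b,c⟩`. -/
def wedgeInner {n : ℕ} (a b c d : EuclideanSpace ℝ (Fin n)) : ℝ :=
  ⟪a, c⟫ * ⟪b, d⟫ - ⟪a, d⟫ * ⟪b, c⟫

/-- Fundamental domain for double integrals over `(ℝ/ℤ)²`. -/
def unitSq : Set (ℝ × ℝ) := Ioc (0 : ℝ) 1 ×ˢ Ioc (0 : ℝ) 1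

/-- The tangent-point functional `TP` (extended-real-valued). -/
def TPe {n : ℕ} (q : ℝ) (u : ℝ → EuclideanSpace ℝ (Fin n)) : ℝ≥0∞ :=
  ENNReal.ofReal (1 / q) *
    ∫⁻ p in unitSq, ENNReal.ofReal
      (wedgeSq (deriv u p.2) (u p.1 - u p.2) ^ (q / 2) / ‖u p.1 - u p.2‖ ^ (2 * q))

/-- The tangent-point functional `TP` (real-valued). -/
def TPr {n : ℕ} (q : ℝ) (u : ℝ → EuclideanSpace ℝ (Fin n)) : ℝ := (TPe q u).toReal

/-- The `q`-th power of the Sobolev–Slobodeckii seminorm `[f]_{W^{s,q}}` on `ℝ/ℤ`. -/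
def sobSemPow {n : ℕ} (s q : ℝ) (f : ℝ → EuclideanSpace ℝ (Fin n)) : ℝ≥0∞ :=
  ∫⁻ p in unitSq, ENNReal.ofReal (‖f p.1 - f p.2‖ ^ q / circDist p.1 p.2 ^ (1 + s * q))

/-- The `W^{s,q}`-norm `‖f‖_{L^q} + [f]_{W^{s,q}}`. -/
def Wnorm {n : ℕ} (s q : ℝ) (f : ℝ → EuclideanSpace ℝ (Fin n)) : ℝ :=
  (∫ x in Ioc (0 : ℝ) 1, ‖f x‖ ^ q) ^ (1 / q) + (sobSemPow s q f).toReal ^ (1 / q)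

/-- The bi-Lipschitz constant `bil(u) = sup_{x ≢ y} |x-y|_{ℝ/ℤ}/|u(x)-u(y)|`. -/
def bil {n : ℕ} (u : ℝ → EuclideanSpace ℝ (Fin n)) : ℝ≥0∞ :=
  ⨆ (x : ℝ) (y : ℝ) (_ : circDist x y ≠ 0),
    ENNReal.ofReal (circDist x y) / ENNReal.ofReal ‖u x - u y‖

/-- The `L^∞`-norm of the derivative of `u`. -/
def linfD {n : ℕ} (u : ℝ → EuclideanSpace ℝ (Fin n)) : ℝ≥0∞ :=
  ⨆ x : ℝ, (‖deriv u x‖₊ : ℝ≥0∞)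

/-- A periodic curve is embedded if it is injective on the circle `ℝ/ℤ`. -/
def Embedded {n : ℕ} (u : ℝ → EuclideanSpace ℝ (Fin n)) : Prop :=
  ∀ x y : ℝ, u x = u y → ((x : AddCircle (1 : ℝ)) = (y : AddCircle (1 : ℝ)))

/-- A curve is regular if `min_{ℝ/ℤ} |u'| > 0`. -/
def Regular {n : ℕ} (u : ℝ → EuclideanSpace ℝ (Fin n)) : Prop :=
  0 < ⨅ x : ℝ, ‖deriv u x‖

/-- Orthogonal projection of `b` onto the orthogonal complement of `ℝ a`. -/
def projPerp {n : ℕ} (a b : EuclideanSpace ℝ (Fin n)) : EuclideanSpace ℝ (Fin n) :=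
  b - (⟪b, a⟫ / ‖a‖ ^ 2) • a

/-- The classical tangent-point functional (extended-real-valued). -/
def TPcle {n : ℕ} (q : ℝ) (u : ℝ → EuclideanSpace ℝ (Fin n)) : ℝ≥0∞ :=
  ENNReal.ofReal (1 / q) *
    ∫⁻ p in unitSq, ENNReal.ofReal
      (‖projPerp (deriv u p.2) (u p.1 - u p.2)‖ ^ q / ‖u p.1 - u p.2‖ ^ (2 * q) *
        (‖deriv u p.1‖ * ‖deriv u p.2‖))

/-- The integrand of the functional `M(u; v, w)`. -/
def Mintegrand {n : ℕ} (q : ℝ) (u v w : ℝ → EuclideanSpace ℝ (Fin n)) (p : ℝ × ℝ) : ℝ :=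
  wedgeSq (deriv u p.2) (u p.1 - u p.2) ^ ((q - 2) / 2) / ‖u p.1 - u p.2‖ ^ (2 * q) *
    wedgeInner (deriv u p.2) (u p.1 - u p.2) (deriv v p.2)
      (w p.1 - w p.2 - wrap (p.1 - p.2) • deriv w p.2)

/-- The functional `M(u; v, w)` appearing in the first variation of `TP`. -/
def Mfun {n : ℕ} (q : ℝ) (u v w : ℝ → EuclideanSpace ℝ (Fin n)) : ℝ :=
  ∫ p in unitSq, Mintegrand q u v w p

/-- The integrand of the functional `A(u; v, w)`. -/
def Aintegrand {n : ℕ} (q : ℝ) (u v w : ℝ → EuclideanSpace ℝ (Fin n)) (p : ℝ × ℝ) : ℝ :=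
  wedgeSq (deriv u p.2) (u p.1 - u p.2) ^ (q / 2) / ‖u p.1 - u p.2‖ ^ (2 * q + 2) *
    ⟪v p.1 - v p.2, w p.1 - w p.2⟫

/-- The functional `A(u; v, w)` appearing in the first variation of `TP`. -/
def Afun {n : ℕ} (q : ℝ) (u v w : ℝ → EuclideanSpace ℝ (Fin n)) : ℝ :=
  ∫ p in unitSq, Aintegrand q u v w p

/-- The first variation `δTP(u)[w] = M(u;u,w) + M(u;w,u) - 2A(u;u,w)`. -/
def deltaTP {n : ℕ} (q : ℝ) (u w : ℝ → EuclideanSpace ℝ (Fin n)) : ℝ :=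
  Mfun q u u w + Mfun q u w u - 2 * Afun q u u w

/-- The `H²` inner product on periodic curves. -/
def H2inner (v w : ℝ → EuclideanSpace ℝ (Fin 3)) : ℝ :=
  ∫ x in Ioc (0 : ℝ) 1,
    (⟪v x, w x⟫ + ⟪deriv v x, deriv w x⟫ + ⟪deriv (deriv v) x, deriv (deriv w) x⟫)

/-- The total energy `E(u) = (κ/2)∫|u''|² + ρ TP(u)`. -/
def energyE (κ ρ q : ℝ) (u : ℝ → EuclideanSpace ℝ (Fin 3)) : ℝ :=
  κ / 2 * (∫ x in Ioc (0 : ℝ) 1, ‖deriv (deriv u) x‖ ^ 2) + ρ * TPr q u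

/-- The ambient space. -/
abbrev E3 := EuclideanSpace ℝ (Fin 3)

/-- `C²` curves on the circle `ℝ/ℤ`. -/
structure C2Per (u : ℝ → E3) : Prop where
  smooth : ContDiff ℝ 2 u
  periodic : Function.Periodic u 1

/-- The squared `L²`-norm of the second derivative. -/
def bend (u : ℝ → E3) : ℝ := ∫ x in Ioc (0 : ℝ) 1, ‖deriv (deriv u) x‖ ^ 2

lemma bend_nonneg (u : ℝ → E3) : 0 ≤ bend u := by unfold bend; positivity

lemma deriv_comp_add_right (u : ℝ → E3) (a : ℝ) :
    deriv (fun t => u (t + a)) = fun t => deriv u (t + a) := by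
  ext1 t; exact deriv_comp_add_const u a t

lemma periodic_deriv {u : ℝ → E3} {a : ℝ} (h : Function.Periodic u a) :
    Function.Periodic (deriv u) a := by
  have h1 : (fun t => u (t + a)) = u := funext h
  intro x
  have h2 := congrFun (deriv_comp_add_right u a) x
  rw [h1] at h2
  exact h2.symm

namespace C2Per

variable {u v : ℝ → E3}

lemma contDiff_deriv (hu : C2Per u) : ContDiff ℝ 1 (deriv u) := by
  have h := hu.smooth
  rw [show (2 : WithTop ℕ∞) = 1 + 1 by norm_num, contDiff_succ_iff_deriv] at h
  exact h.2.2

lemma hasDerivAt (hu : C2Per u) (x : ℝ) : HasDerivAt u (deriv u x) x :=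
  (hu.smooth.differentiable (by norm_num) x).hasDerivAt

lemma hasDerivAt_deriv (hu : C2Per u) (x : ℝ) : HasDerivAt (deriv u) (deriv (deriv u) x) x :=
  (hu.contDiff_deriv.differentiable (by norm_num) x).hasDerivAt

lemma continuous (hu : C2Per u) : Continuous u := hu.smooth.continuous

lemma continuous_deriv (hu : C2Per u) : Continuous (deriv u) := hu.contDiff_deriv.continuous

lemma continuous_deriv2 (hu : C2Per u) : Continuous (deriv (deriv u)) :=
  hu.contDiff_deriv.continuous_deriv (by norm_num)

lemma periodic_deriv (hu : C2Per u) : Function.Periodic (deriv u) 1 :=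
  _root_.periodic_deriv hu.periodic

lemma periodic_deriv2 (hu : C2Per u) : Function.Periodic (deriv (deriv u)) 1 :=
  _root_.periodic_deriv hu.periodic_deriv

lemma add (hu : C2Per u) (hv : C2Per v) : C2Per (fun t => u t + v t) :=
  ⟨hu.smooth.add hv.smooth, fun x => by simp [hu.periodic x, hv.periodic x]⟩

lemma sub (hu : C2Per u) (hv : C2Per v) : C2Per (fun t => u t - v t) :=
  ⟨hu.smooth.sub hv.smooth, fun x => by simp [hu.periodic x, hv.periodic x]⟩

lemma smul (hu : C2Per u) (c : ℝ) : C2Per (fun t => c • u t) :=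
  ⟨hu.smooth.const_smul c, fun x => by simp [hu.periodic x]⟩

lemma shift (hu : C2Per u) (a : ℝ) : C2Per (fun t => u (t + a)) :=
  ⟨hu.smooth.comp (contDiff_id.add contDiff_const), fun x => by
    have := hu.periodic (x + a)
    show u (x + 1 + a) = u (x + a)
    rw [← this]; congr 1; ring⟩

lemma deriv_add (hu : C2Per u) (hv : C2Per v) :
    deriv (fun t => u t + v t) = fun t => deriv u t + deriv v t := by
  ext1 x; exact ((hu.hasDerivAt x).add (hv.hasDerivAt x)).deriv

lemma deriv2_add (hu : C2Per u) (hv : C2Per v) :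
    deriv (deriv (fun t => u t + v t)) = fun t => deriv (deriv u) t + deriv (deriv v) t := by
  rw [hu.deriv_add hv]
  ext1 x; exact ((hu.hasDerivAt_deriv x).add (hv.hasDerivAt_deriv x)).deriv

lemma deriv_sub (hu : C2Per u) (hv : C2Per v) :
    deriv (fun t => u t - v t) = fun t => deriv u t - deriv v t := by
  ext1 x; exact ((hu.hasDerivAt x).sub (hv.hasDerivAt x)).deriv

lemma deriv2_sub (hu : C2Per u) (hv : C2Per v) :
    deriv (deriv (fun t => u t - v t)) = fun t => deriv (deriv u) t - deriv (deriv v) t := by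
  rw [hu.deriv_sub hv]
  ext1 x; exact ((hu.hasDerivAt_deriv x).sub (hv.hasDerivAt_deriv x)).deriv

lemma deriv_smul (hu : C2Per u) (c : ℝ) :
    deriv (fun t => c • u t) = fun t => c • deriv u t := by
  ext1 x; exact ((hu.hasDerivAt x).const_smul c).deriv

lemma deriv2_smul (hu : C2Per u) (c : ℝ) :
    deriv (deriv (fun t => c • u t)) = fun t => c • deriv (deriv u) t := by
  rw [hu.deriv_smul c]
  ext1 x; exact ((hu.hasDerivAt_deriv x).const_smul c).deriv

end C2Per

section Periodic

lemma lintegral_periodic {g : ℝ → ℝ≥0∞} (hg : Function.Periodic g 1) (a b : ℝ) :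
    ∫⁻ x in Ioc a (a + 1), g x = ∫⁻ x in Ioc b (b + 1), g x := by
  refine (isAddFundamentalDomain_Ioc one_pos a).setLIntegral_eq
    (isAddFundamentalDomain_Ioc one_pos b) g ?_
  rintro ⟨_, ⟨n, rfl⟩⟩ x
  have : g (x + n * 1) = g x := (hg.int_mul n) x
  simpa [AddSubgroup.vadd_def, add_comm] using this

lemma integral_periodic {F : Type*} [NormedAddCommGroup F] [NormedSpace ℝ F] {g : ℝ → F}
    (hg : Function.Periodic g 1) (a b : ℝ) :
    ∫ x in Ioc a (a + 1), g x = ∫ x in Ioc b (b + 1), g x := by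
  have h := hg.intervalIntegral_add_eq a b
  rwa [intervalIntegral.integral_of_le (by linarith),
    intervalIntegral.integral_of_le (by linarith)] at h

lemma integral_shift {g : ℝ → ℝ} (hg : Function.Periodic g 1) (a : ℝ) :
    ∫ x in Ioc (0 : ℝ) 1, g (x + a) = ∫ x in Ioc (0 : ℝ) 1, g x := by
  have h := integral_periodic hg a 0
  rw [zero_add] at h
  rw [← h, ← intervalIntegral.integral_of_le (by norm_num),
    ← intervalIntegral.integral_of_le (by linarith), intervalIntegral.integral_comp_add_right]
  congr 1 <;> ring

lemma lintegral_Ioc_add (g : ℝ → ℝ≥0∞) (a b y : ℝ) :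
    ∫⁻ x in Ioc (a + y) (b + y), g x = ∫⁻ h in Ioc a b, g (y + h) := by
  rw [← lintegral_indicator measurableSet_Ioc, ← lintegral_indicator measurableSet_Ioc,
    ← lintegral_add_left_eq_self _ y]
  congr 1; ext h
  simp only [indicator, mem_Ioc]
  congr 1
  apply propext; constructor <;> rintro ⟨h1, h2⟩ <;> constructor <;> linarith

/-- Integrals of doubly periodic functions over the torus, in the coordinates `(y, x - y)`. -/
lemma lintegral_unitSq {G : ℝ × ℝ → ℝ≥0∞} (hG : Measurable G)
    (h1 : ∀ x y, G (x + 1, y) = G (x, y)) (h2 : ∀ x y, G (x, y + 1) = G (x, y)) (b c : ℝ) :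
    ∫⁻ p in unitSq, G p = ∫⁻ y in Ioc b (b + 1), ∫⁻ h in Ioc c (c + 1), G (y + h, y) := by
  have hin : ∀ y : ℝ, ∫⁻ x in Ioc (0 : ℝ) 1, G (x, y) = ∫⁻ h in Ioc c (c + 1), G (y + h, y) := by
    intro y
    have := lintegral_periodic (g := fun x => G (x, y)) (fun x => h1 x y) 0 (c + y)
    rw [zero_add] at this
    rw [this, ← lintegral_Ioc_add (fun x => G (x, y))]
    congr 3; ring
  unfold unitSq
  rw [Measure.volume_eq_prod, ← Measure.prod_restrict, lintegral_prod_symm _ hG.aemeasurable]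
  have := lintegral_periodic (g := fun y => ∫⁻ x in Ioc (0 : ℝ) 1, G (x, y))
    (fun y => by simp only [h2]) 0 b
  rw [zero_add] at this
  rw [this]
  exact lintegral_congr fun y => hin y

end Periodic

section Wrap

lemma wrap_mem (z : ℝ) : -(1 / 2) < wrap z ∧ wrap z ≤ 1 / 2 := by
  unfold wrap
  have := Int.fract_nonneg (1 / 2 - z); have := Int.fract_lt_one (1 / 2 - z)
  constructor <;> linarith

lemma abs_wrap_le (z : ℝ) : |wrap z| ≤ 1 / 2 := by
  have := wrap_mem z; rw [abs_le]; constructor <;> linarith [this.1, this.2]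

lemma wrap_eq_add (z : ℝ) : ∃ n : ℤ, wrap z = z + n :=
  ⟨⌊1 / 2 - z⌋, by unfold wrap; rw [Int.fract]; ring⟩

lemma wrap_of_mem {z : ℝ} (h : -(1 / 2) < z) (h' : z ≤ 1 / 2) : wrap z = z := by
  unfold wrap
  rw [Int.fract_eq_self.2 ⟨by linarith, by linarith⟩]; ring

lemma wrap_add_one (z : ℝ) : wrap (z + 1) = wrap z := by
  unfold wrap
  rw [show 1 / 2 - (z + 1) = (1 / 2 - z) - 1 by ring, Int.fract_sub_one]

lemma wrap_sub_one (z : ℝ) : wrap (z - 1) = wrap z := by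
  rw [← wrap_add_one, sub_add_cancel]

lemma measurable_wrap : Measurable wrap :=
  measurable_const.sub (measurable_fract.comp (measurable_const.sub measurable_id))

lemma C2Per.sub_eq_wrap {u : ℝ → E3} (hu : C2Per u) (x y : ℝ) :
    u x - u y = u (y + wrap (x - y)) - u y := by
  obtain ⟨n, hn⟩ := wrap_eq_add (x - y)
  rw [hn, show y + (x - y + n) = x + n * 1 by ring, (hu.periodic.int_mul n) x]

end Wrap

section Calculus

variable {u v : ℝ → E3}

lemma C2Per.integral_deriv2_sq (_hu : C2Per u) :
    ∫ t in (0 : ℝ)..1, ‖deriv (deriv u) t‖ ^ 2 = bend u := by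
  rw [intervalIntegral.integral_of_le (by norm_num)]; rfl

lemma C2Per.integral_deriv2_sq' (hu : C2Per u) (a : ℝ) :
    ∫ t in a..(a + 1), ‖deriv (deriv u) t‖ ^ 2 = bend u := by
  have hp : Function.Periodic (fun t => ‖deriv (deriv u) t‖ ^ 2) 1 := fun x => by
    simp only [hu.periodic_deriv2 x]
  rw [hp.intervalIntegral_add_eq a 0, zero_add, hu.integral_deriv2_sq]

/-- Cauchy–Schwarz on an interval. -/
lemma sq_integral_le {f : ℝ → ℝ} (hf : Continuous f) {a b : ℝ} (hab : a ≤ b) :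
    (∫ t in a..b, f t) ^ 2 ≤ (b - a) * ∫ t in a..b, f t ^ 2 := by
  rcases hab.eq_or_lt with rfl | hlt
  · simp
  set m := (∫ t in a..b, f t) / (b - a) with hm
  have hba : 0 < b - a := by linarith
  have hI : ∫ t in a..b, f t = m * (b - a) := by rw [hm]; field_simp
  have h0 : 0 ≤ ∫ t in a..b, (f t - m) ^ 2 :=
    intervalIntegral.integral_nonneg hab fun t _ => sq_nonneg _
  have hi : ∀ g : ℝ → ℝ, Continuous g → IntervalIntegrable g volume a b :=
    fun g hg => hg.intervalIntegrable a b
  have h1 : ∫ t in a..b, (f t - m) ^ 2 =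
      (∫ t in a..b, f t ^ 2) - 2 * m * (∫ t in a..b, f t) + m ^ 2 * (b - a) := by
    have : ∀ t, (f t - m) ^ 2 = (f t ^ 2 - 2 * m * f t) + m ^ 2 := fun t => by ring
    simp only [this]
    rw [intervalIntegral.integral_add (hi _ (by fun_prop)) (hi _ (by fun_prop)),
      intervalIntegral.integral_sub (hi _ (by fun_prop)) (hi _ (by fun_prop)),
      intervalIntegral.integral_const_mul, intervalIntegral.integral_const, smul_eq_mul]
    ring
  rw [h1, hI] at h0
  rw [hI]
  nlinarith

lemma C2Per.sq_integral_norm_deriv2_le (hu : C2Per u) {a b : ℝ} (hab : a ≤ b) (hb : b ≤ a + 1) :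
    (∫ t in a..b, ‖deriv (deriv u) t‖) ^ 2 ≤ (b - a) * bend u := by
  have hc := hu.continuous_deriv2
  refine (sq_integral_le hc.norm hab).trans ?_
  refine mul_le_mul_of_nonneg_left ?_ (by linarith)
  rw [← hu.integral_deriv2_sq' a]
  exact intervalIntegral.integral_mono_interval le_rfl hab hb
    (Filter.Eventually.of_forall fun t => by positivity)
    ((hc.norm.pow 2).intervalIntegrable _ _)

lemma C2Per.norm_deriv_sub_le (hu : C2Per u) {a b : ℝ} (hab : a ≤ b) :
    ‖deriv u b - deriv u a‖ ≤ ∫ t in a..b, ‖deriv (deriv u) t‖ := by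
  rw [← intervalIntegral.integral_eq_sub_of_hasDerivAt (fun x _ => hu.hasDerivAt_deriv x)
    (hu.continuous_deriv2.intervalIntegrable _ _)]
  exact intervalIntegral.norm_integral_le_integral_norm hab

lemma C2Per.norm_deriv_sub_le' (hu : C2Per u) (x y : ℝ) :
    ‖deriv u x - deriv u y‖ ≤ |∫ t in y..x, ‖deriv (deriv u) t‖| := by
  rcases le_total y x with h | h
  · exact (hu.norm_deriv_sub_le h).trans (le_abs_self _)
  · rw [norm_sub_rev, intervalIntegral.integral_symm, abs_neg]
    exact (hu.norm_deriv_sub_le h).trans (le_abs_self _)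

lemma C2Per.norm_deriv_sub_le_sqrt (hu : C2Per u) {x y : ℝ} (h : |x - y| ≤ 1) :
    ‖deriv u x - deriv u y‖ ≤ √(|x - y| * bend u) := by
  refine (hu.norm_deriv_sub_le' x y).trans (Real.abs_le_sqrt ?_)
  rcases le_total y x with hxy | hxy
  · rw [abs_of_nonneg (by linarith)] at h ⊢
    exact hu.sq_integral_norm_deriv2_le hxy (by linarith)
  · rw [abs_of_nonpos (by linarith)] at h ⊢
    rw [intervalIntegral.integral_symm, neg_sq, neg_sub]
    exact hu.sq_integral_norm_deriv2_le hxy (by linarith)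

/-- First order Taylor remainder in terms of the second derivative. -/
lemma C2Per.norm_remainder_le (hu : C2Per u) (y h : ℝ) :
    ‖u (y + h) - u y - h • deriv u y‖ ≤ |h| * |∫ t in y..(y + h), ‖deriv (deriv u) t‖| := by
  have key : ∀ t ∈ uIcc y (y + h),
      ‖deriv u t - deriv u y‖ ≤ |∫ t in y..(y + h), ‖deriv (deriv u) t‖| := by
    intro t ht
    refine (hu.norm_deriv_sub_le' t y).trans ?_
    exact intervalIntegral.abs_integral_mono_interval
      (uIoc_subset_uIoc_of_uIcc_subset_uIcc (uIcc_subset_uIcc_left ht))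
      (Filter.Eventually.of_forall fun t => norm_nonneg _)
      (hu.continuous_deriv2.norm.intervalIntegrable _ _)
  have hI : u (y + h) - u y - h • deriv u y = ∫ t in y..(y + h), (deriv u t - deriv u y) := by
    rw [intervalIntegral.integral_sub (hu.continuous_deriv.intervalIntegrable _ _) (by simp),
      intervalIntegral.integral_eq_sub_of_hasDerivAt (fun x _ => hu.hasDerivAt x)
      (hu.continuous_deriv.intervalIntegrable _ _), intervalIntegral.integral_const]
    simp
  rw [hI]
  have := intervalIntegral.norm_integral_le_of_norm_le_const
    (fun t ht => key t (uIoc_subset_uIcc ht))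
  rw [add_sub_cancel_left] at this
  linarith [mul_comm |h| |∫ t in y..(y + h), ‖deriv (deriv u) t‖|]

lemma C2Per.integral_deriv_eq_zero (hu : C2Per u) (a : ℝ) :
    ∫ t in a..(a + 1), deriv u t = 0 := by
  rw [intervalIntegral.integral_eq_sub_of_hasDerivAt (fun x _ => hu.hasDerivAt x)
    (hu.continuous_deriv.intervalIntegrable _ _), hu.periodic, sub_self]

/-- Sobolev inequality on the circle. -/
lemma C2Per.norm_deriv_sq_le (hu : C2Per u) (x : ℝ) : ‖deriv u x‖ ^ 2 ≤ bend u := by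
  set I := ∫ t in x..(x + 1), ‖deriv (deriv u) t‖ with hI
  have hI0 : 0 ≤ I := intervalIntegral.integral_nonneg (by linarith) fun t _ => norm_nonneg _
  have h1 : ‖deriv u x‖ ≤ I := by
    have h2 : deriv u x = -∫ t in x..(x + 1), (deriv u t - deriv u x) := by
      rw [intervalIntegral.integral_sub (hu.continuous_deriv.intervalIntegrable _ _) (by simp),
        hu.integral_deriv_eq_zero x]
      simp
    rw [h2, norm_neg]
    have := intervalIntegral.norm_integral_le_of_norm_le_const (a := x) (b := x + 1)
      (f := fun t => deriv u t - deriv u x) (C := I) (fun t ht => by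
        rw [uIoc_of_le (by linarith)] at ht
        refine (hu.norm_deriv_sub_le ht.1.le).trans ?_
        exact intervalIntegral.integral_mono_interval le_rfl ht.1.le ht.2
          (Filter.Eventually.of_forall fun t => norm_nonneg _)
          (hu.continuous_deriv2.norm.intervalIntegrable _ _))
    simpa using this
  have h3 := hu.sq_integral_norm_deriv2_le (a := x) (b := x + 1) (by linarith) le_rfl
  have : ‖deriv u x‖ ^ 2 ≤ I ^ 2 := by gcongr
  linarith

lemma C2Per.norm_sub_le (hu : C2Per u) {M : ℝ} (hM : ∀ x, ‖deriv u x‖ ≤ M) (x y : ℝ) :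
    ‖u x - u y‖ ≤ M * |x - y| := by
  have := convex_univ.norm_image_sub_le_of_norm_deriv_le (f := u) (C := M) (x := y) (y := x)
    (fun t _ => (hu.hasDerivAt t).differentiableAt) (fun t _ => hM t) (mem_univ _) (mem_univ _)
  simpa using this

end Calculus

section FourAverage

lemma lintegral_mul_sq_le {α : Type*} [MeasurableSpace α] (μ : Measure α) {f g : α → ℝ≥0∞}
    (hf : AEMeasurable f μ) (hg : AEMeasurable g μ) :
    (∫⁻ t, f t * g t ∂μ) ^ 2 ≤ (∫⁻ t, f t ^ 2 ∂μ) * ∫⁻ t, g t ^ 2 ∂μ := by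
  have h := ENNReal.lintegral_mul_le_Lp_mul_Lq μ (Real.HolderConjugate.two_two) hf hg
  have h2 : ∀ x : ℝ≥0∞, (x ^ (1 / 2 : ℝ)) ^ 2 = x := fun x => by
    rw [← ENNReal.rpow_natCast, ← ENNReal.rpow_mul]; norm_num
  calc _ ≤ _ := pow_le_pow_left' h 2
    _ = _ := by
      rw [mul_pow, h2, h2]; simp

lemma lintegral_rpow_Ioc {d : ℝ} (hd : 0 < d) :
    ∫⁻ r in Ioc 0 d, ENNReal.ofReal (r ^ (-(1 / 2) : ℝ)) = ENNReal.ofReal (2 * √d) := by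
  have hi : IntervalIntegrable (fun r : ℝ => r ^ (-(1 / 2) : ℝ)) volume 0 d :=
    intervalIntegral.intervalIntegrable_rpow' (by norm_num)
  rw [intervalIntegrable_iff_integrableOn_Ioc_of_le hd.le] at hi
  rw [← ofReal_integral_eq_lintegral_ofReal hi, ← intervalIntegral.integral_of_le hd.le,
    integral_rpow (Or.inl (by norm_num))]
  · congr 1
    rw [Real.zero_rpow (by norm_num), Real.sqrt_eq_rpow]
    norm_num; ring
  · filter_upwards [ae_restrict_mem measurableSet_Ioc] with r hr
    exact Real.rpow_nonneg hr.1.le _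

lemma lintegral_abs_rpow_le {x y s : ℝ} (hxy : y < x) (hs : s ∈ Ioc y x) :
    ∫⁻ t in Ioc y x, ENNReal.ofReal (|t - s| ^ (-(1 / 2) : ℝ)) ≤
      4 * ENNReal.ofReal √(x - y) := by
  set d := x - y with hd
  have hd0 : 0 < d := by linarith
  have h1 : ∫⁻ t in Ioc y x, ENNReal.ofReal (|t - s| ^ (-(1 / 2) : ℝ)) ≤
      ∫⁻ t in Ioc (-d + s) (d + s), ENNReal.ofReal (|t - s| ^ (-(1 / 2) : ℝ)) :=
    lintegral_mono_set (Ioc_subset_Ioc (by linarith [hs.2]) (by linarith [hs.1]))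
  refine h1.trans ?_
  rw [lintegral_Ioc_add]
  simp only [add_sub_cancel_left]
  rw [← Ioc_union_Ioc_eq_Ioc (b := 0) (by linarith) hd0.le]
  refine (lintegral_union_le _ _ _).trans ?_
  have h2 : ∫⁻ t in Ioc 0 d, ENNReal.ofReal (|t| ^ (-(1 / 2) : ℝ)) = ENNReal.ofReal (2 * √d) := by
    rw [← lintegral_rpow_Ioc hd0]
    refine setLIntegral_congr_fun measurableSet_Ioc fun t ht => ?_
    simp only [abs_of_pos ht.1]
  have h3 : ∫⁻ t in Ioc (-d) 0, ENNReal.ofReal (|t| ^ (-(1 / 2) : ℝ)) =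
      ENNReal.ofReal (2 * √d) := by
    rw [← h2, ← lintegral_indicator measurableSet_Ioc,
      ← lintegral_indicator (μ := volume) (s := Ioc 0 d) measurableSet_Ioc,
      ← lintegral_neg_eq_self
        ((Ioc (-d) 0).indicator fun t : ℝ => ENNReal.ofReal (|t| ^ (-(1 / 2) : ℝ)))]
    refine lintegral_congr_ae ?_
    have e1 : ∀ᵐ t : ℝ, t ≠ 0 := by simp [ae_iff]
    have e2 : ∀ᵐ t : ℝ, t ≠ d := by simp [ae_iff]
    filter_upwards [e1, e2] with t ht ht2
    simp only [indicator, mem_Ioc, abs_neg]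
    congr 1
    apply propext; constructor
    · rintro ⟨h, h'⟩; exact ⟨lt_of_le_of_ne (by linarith) (Ne.symm ht), by linarith⟩
    · rintro ⟨h, h'⟩
      have := lt_of_le_of_ne h' ht2
      exact ⟨by linarith, by linarith⟩
  rw [h2, h3, ENNReal.ofReal_mul (by norm_num), ENNReal.ofReal_ofNat, ← add_mul]
  gcongr; norm_num

lemma four_avg_pointwise {f : ℝ → ℝ≥0∞} (hf : Measurable f) {x y : ℝ} (hxy : y < x) :
    (∫⁻ t in Ioc y x, f t) ^ 4 ≤ 4 * ENNReal.ofReal ((x - y) ^ (3 / 2 : ℝ)) *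
      ∫⁻ s in Ioc y x, ∫⁻ t in Ioc y x,
        f s ^ 2 * f t ^ 2 * ENNReal.ofReal (|t - s| ^ (1 / 2 : ℝ)) := by
  set μ := volume.restrict (Ioc y x) with hμ
  have hd : 0 < x - y := by linarith
  have h1 : (∫⁻ t, f t ∂μ) ^ 2 ≤ ENNReal.ofReal (x - y) * ∫⁻ s, f s ^ 2 ∂μ := by
    have := lintegral_mul_sq_le μ (f := fun _ => 1) (g := f) aemeasurable_const hf.aemeasurable
    simpa [hμ] using this
  have h2 : ∀ s ∈ Ioc y x, (∫⁻ t, f t ∂μ) ^ 2 ≤ 4 * ENNReal.ofReal √(x - y) *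
      ∫⁻ t, f t ^ 2 * ENNReal.ofReal (|t - s| ^ (1 / 2 : ℝ)) ∂μ := by
    intro s hs
    have e1 : ∀ᵐ t : ℝ ∂μ, t ≠ s := ae_restrict_of_ae (by simp [ae_iff])
    have e2 : ∫⁻ t, f t ∂μ = ∫⁻ t, (f t * ENNReal.ofReal (|t - s| ^ (1 / 4 : ℝ))) *
        ENNReal.ofReal (|t - s| ^ (-(1 / 4) : ℝ)) ∂μ := by
      refine lintegral_congr_ae ?_
      filter_upwards [e1] with t ht
      have : 0 < |t - s| := abs_pos.2 (sub_ne_zero.2 ht)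
      rw [mul_assoc, ← ENNReal.ofReal_mul (by positivity), ← Real.rpow_add this]
      norm_num
    rw [e2]
    refine (lintegral_mul_sq_le μ (by fun_prop) (by fun_prop)).trans ?_
    have e3 : ∀ r : ℝ, 0 ≤ r → ∀ p : ℝ, ENNReal.ofReal (r ^ p) ^ 2 = ENNReal.ofReal (r ^ (p * 2)) := by
      intro r hr p
      rw [← ENNReal.ofReal_pow (Real.rpow_nonneg hr _), ← Real.rpow_natCast, ← Real.rpow_mul hr]
      norm_num
    simp only [mul_pow, e3 _ (abs_nonneg _)]
    rw [mul_comm]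
    refine mul_le_mul' ?_ ?_
    · have := lintegral_abs_rpow_le hxy hs
      rwa [show (-(1 / 2) : ℝ) = -(1 / 4) * 2 by norm_num] at this
    · apply le_of_eq; congr 1; ext t; norm_num
  calc (∫⁻ t, f t ∂μ) ^ 4 = (∫⁻ t, f t ∂μ) ^ 2 * (∫⁻ t, f t ∂μ) ^ 2 := by ring
    _ ≤ (ENNReal.ofReal (x - y) * ∫⁻ s, f s ^ 2 ∂μ) * (∫⁻ t, f t ∂μ) ^ 2 := by gcongr
    _ = ENNReal.ofReal (x - y) * ∫⁻ s, f s ^ 2 * (∫⁻ t, f t ∂μ) ^ 2 ∂μ := by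
      rw [mul_assoc, lintegral_mul_const _ (by fun_prop)]
    _ ≤ ENNReal.ofReal (x - y) * ∫⁻ s, 4 * ENNReal.ofReal √(x - y) * (f s ^ 2 *
          ∫⁻ t, f t ^ 2 * ENNReal.ofReal (|t - s| ^ (1 / 2 : ℝ)) ∂μ) ∂μ := by
      gcongr 1
      refine setLIntegral_mono_ae' measurableSet_Ioc (Filter.Eventually.of_forall fun s hs => ?_)
      calc _ ≤ f s ^ 2 * _ := mul_le_mul_right (h2 s hs) _
        _ = _ := by ring
    _ = _ := by
      rw [lintegral_const_mul' _ _ (ENNReal.mul_ne_top (by simp) ENNReal.ofReal_ne_top), ← mul_assoc]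
      congr 1
      · rw [mul_left_comm, ← ENNReal.ofReal_mul hd.le, Real.sqrt_eq_rpow]
        congr 2
        rw [show (3 / 2 : ℝ) = 1 + 1 / 2 by norm_num, Real.rpow_add hd, Real.rpow_one]
      · refine lintegral_congr fun s => ?_
        rw [← lintegral_const_mul _ (by fun_prop)]
        simp only [mul_assoc]

lemma lintegral_Ioi_rpow {a c : ℝ} (ha : a < -1) (hc : 0 < c) :
    ∫⁻ t in Ioi c, ENNReal.ofReal (t ^ a) = ENNReal.ofReal (-c ^ (a + 1) / (a + 1)) := by
  rw [← ofReal_integral_eq_lintegral_ofReal (integrableOn_Ioi_rpow_of_lt ha hc),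
    integral_Ioi_rpow_of_lt ha hc]
  filter_upwards [ae_restrict_mem measurableSet_Ioi] with r hr
  exact Real.rpow_nonneg (hc.trans hr).le _

/-- The kernel bound behind the `L⁴` estimate for difference quotients. -/
lemma four_avg_kernel {s t : ℝ} (hst : s < t) :
    ∫⁻ y, ∫⁻ x, (if y < s ∧ t ≤ x then ENNReal.ofReal ((x - y) ^ (-(5 / 2) : ℝ)) else 0) ≤
      2 * ENNReal.ofReal ((t - s) ^ (-(1 / 2) : ℝ)) := by
  have h1 : ∀ y, ∫⁻ x, (if y < s ∧ t ≤ x then ENNReal.ofReal ((x - y) ^ (-(5 / 2) : ℝ)) else 0) =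
      if y < s then ENNReal.ofReal (2 / 3 * (t - y) ^ (-(3 / 2) : ℝ)) else 0 := by
    intro y
    by_cases hy : y < s
    · simp only [hy, true_and, if_true]
      have hty : 0 < t - y := by linarith
      have := lintegral_Ioi_rpow (a := -(5 / 2)) (by norm_num) hty
      rw [show 2 / 3 * (t - y) ^ (-(3 / 2) : ℝ) =
        -(t - y) ^ (-(5 / 2) + 1 : ℝ) / (-(5 / 2) + 1) by norm_num; ring, ← this,
        setLIntegral_congr Ioi_ae_eq_Ici, ← lintegral_indicator measurableSet_Ici,
        ← lintegral_sub_right_eq_self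
          ((Ici (t - y)).indicator fun z : ℝ => ENNReal.ofReal (z ^ (-(5 / 2) : ℝ))) y]
      congr 1; ext x
      simp [indicator]
    · simp [hy]
  simp only [h1]
  have h2 : ∫⁻ y, (if y < s then ENNReal.ofReal (2 / 3 * (t - y) ^ (-(3 / 2) : ℝ)) else 0) =
      ∫⁻ z in Ioi (t - s), ENNReal.ofReal (2 / 3) * ENNReal.ofReal (z ^ (-(3 / 2) : ℝ)) := by
    rw [← lintegral_indicator measurableSet_Ioi, ← lintegral_sub_left_eq_self
      ((Ioi (t - s)).indicator fun z : ℝ =>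
        ENNReal.ofReal (2 / 3) * ENNReal.ofReal (z ^ (-(3 / 2) : ℝ))) t]
    congr 1; ext y
    simp only [indicator, mem_Ioi, sub_lt_sub_iff_left]
    split_ifs
    · rw [ENNReal.ofReal_mul (by norm_num)]
    · rfl
  rw [h2, lintegral_const_mul _ (by fun_prop), lintegral_Ioi_rpow (by norm_num) (by linarith),
    ← ENNReal.ofReal_mul (by norm_num), ← ENNReal.ofReal_ofNat 2, ← ENNReal.ofReal_mul (by norm_num)]
  apply ENNReal.ofReal_le_ofReal
  have : 0 ≤ (t - s) ^ (-(1 / 2) : ℝ) := Real.rpow_nonneg (by linarith) _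
  rw [show (-(3 / 2) + 1 : ℝ) = -(1 / 2) by norm_num]
  linarith

lemma four_avg_half {f : ℝ → ℝ≥0∞} (hf : Measurable f) :
    ∫⁻ y, ∫⁻ x in Ioi y, ENNReal.ofReal ((x - y) ^ (-4 : ℝ)) * (∫⁻ t in Ioc y x, f t) ^ 4 ≤
      8 * (∫⁻ t, f t ^ 2) ^ 2 := by
  let k : ℝ × ℝ → ℝ × ℝ → ℝ≥0∞ := fun p r =>
    if p.1 < min r.1 r.2 ∧ max r.1 r.2 ≤ p.2 then
      4 * ENNReal.ofReal ((p.2 - p.1) ^ (-(5 / 2) : ℝ)) *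
        (f r.1 ^ 2 * f r.2 ^ 2 * ENNReal.ofReal (|r.2 - r.1| ^ (1 / 2 : ℝ))) else 0
  have hk : Measurable (Function.uncurry k) := by
    have h1 : MeasurableSet {a : (ℝ × ℝ) × ℝ × ℝ | a.1.1 < min a.2.1 a.2.2} :=
      measurableSet_lt (by fun_prop) (by fun_prop)
    have h2 : MeasurableSet {a : (ℝ × ℝ) × ℝ × ℝ | max a.2.1 a.2.2 ≤ a.1.2} :=
      measurableSet_le (by fun_prop) (by fun_prop)
    exact Measurable.ite (h1.inter h2) (by fun_prop) measurable_const
  have step1 : ∀ y, ∫⁻ x in Ioi y, ENNReal.ofReal ((x - y) ^ (-4 : ℝ)) *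
      (∫⁻ t in Ioc y x, f t) ^ 4 ≤ ∫⁻ x, ∫⁻ r, k (y, x) r := by
    intro y
    rw [← lintegral_indicator measurableSet_Ioi]
    refine lintegral_mono fun x => ?_
    by_cases hx : y < x
    · rw [indicator_of_mem (show x ∈ Ioi y from hx)]
      have hd : 0 < x - y := by linarith
      calc _ ≤ ENNReal.ofReal ((x - y) ^ (-4 : ℝ)) * (4 * ENNReal.ofReal ((x - y) ^ (3 / 2 : ℝ)) *
            ∫⁻ s in Ioc y x, ∫⁻ t in Ioc y x,
              f s ^ 2 * f t ^ 2 * ENNReal.ofReal (|t - s| ^ (1 / 2 : ℝ))) :=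
            mul_le_mul_right (four_avg_pointwise hf hx) _
        _ = 4 * ENNReal.ofReal ((x - y) ^ (-(5 / 2) : ℝ)) * ∫⁻ s in Ioc y x, ∫⁻ t in Ioc y x,
              f s ^ 2 * f t ^ 2 * ENNReal.ofReal (|t - s| ^ (1 / 2 : ℝ)) := by
            rw [← mul_assoc, mul_left_comm, ← ENNReal.ofReal_mul (by positivity),
              ← Real.rpow_add hd]
            norm_num
        _ = ∫⁻ r, k (y, x) r := by
            have hky : Measurable fun r => k (y, x) r := hk.comp measurable_prodMk_left
            rw [Measure.volume_eq_prod, lintegral_prod _ hky.aemeasurable,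
              ← lintegral_const_mul' _ _ (ENNReal.mul_ne_top (by simp) ENNReal.ofReal_ne_top),
              ← lintegral_indicator measurableSet_Ioc]
            refine lintegral_congr fun s => ?_
            by_cases hs : s ∈ Ioc y x
            · rw [indicator_of_mem hs,
                ← lintegral_const_mul' _ _ (ENNReal.mul_ne_top (by simp) ENNReal.ofReal_ne_top),
                ← lintegral_indicator measurableSet_Ioc]
              refine lintegral_congr fun t => ?_
              by_cases ht : t ∈ Ioc y x
              · simp [k, indicator, hs.1, hs.2, ht.1, ht.2]
              · have : ¬ (y < min s t ∧ max s t ≤ x) := fun h =>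
                  ht ⟨h.1.trans_le (min_le_right _ _), (le_max_right _ _).trans h.2⟩
                simp only [k]
                rw [indicator_of_notMem ht, if_neg this]
            · rw [indicator_of_notMem hs]
              symm
              refine lintegral_eq_zero_of_ae_eq_zero (Filter.Eventually.of_forall fun t => ?_)
              have : ¬ (y < min s t ∧ max s t ≤ x) := fun h =>
                hs ⟨h.1.trans_le (min_le_left _ _), (le_max_left _ _).trans h.2⟩
              simp only [k, Pi.zero_apply]
              rw [if_neg this]
    · rw [indicator_of_notMem (show x ∉ Ioi y from hx)]
      exact zero_le
  have step2 : ∀ r : ℝ × ℝ, ∫⁻ p, k p r ≤ 8 * (f r.1 ^ 2 * f r.2 ^ 2) := by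
    rintro ⟨s, t⟩
    rcases eq_or_ne s t with rfl | hne
    · have : ∀ p, k p (s, s) = 0 := fun p => by simp [k]
      simp [this]
    · have hlt : min s t < max s t := min_lt_max.2 hne
      have habs : max s t - min s t = |t - s| := by rw [max_sub_min_eq_abs, ]
      have h0 : 0 < |t - s| := by rw [← habs]; linarith
      have e : ∀ p : ℝ × ℝ, k p (s, t) =
          (if p.1 < min s t ∧ max s t ≤ p.2 then ENNReal.ofReal ((p.2 - p.1) ^ (-(5 / 2) : ℝ))
            else 0) * (4 * (f s ^ 2 * f t ^ 2 * ENNReal.ofReal (|t - s| ^ (1 / 2 : ℝ)))) := by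
        intro p
        simp only [k]
        split_ifs <;> ring
      have hm : Measurable fun p : ℝ × ℝ => (if p.1 < min s t ∧ max s t ≤ p.2 then
          ENNReal.ofReal ((p.2 - p.1) ^ (-(5 / 2) : ℝ)) else 0) := by
        have h1 : MeasurableSet {p : ℝ × ℝ | p.1 < min s t} :=
          measurableSet_lt (by fun_prop) (by fun_prop)
        have h2 : MeasurableSet {p : ℝ × ℝ | max s t ≤ p.2} :=
          measurableSet_le (by fun_prop) (by fun_prop)
        exact Measurable.ite (h1.inter h2) (by fun_prop) measurable_const
      simp only [e]
      rw [lintegral_mul_const _ hm, Measure.volume_eq_prod, lintegral_prod _ hm.aemeasurable]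
      calc _ ≤ (2 * ENNReal.ofReal ((max s t - min s t) ^ (-(1 / 2) : ℝ))) *
            (4 * (f s ^ 2 * f t ^ 2 * ENNReal.ofReal (|t - s| ^ (1 / 2 : ℝ)))) :=
            mul_le_mul_left (four_avg_kernel hlt) _
        _ = 8 * (f s ^ 2 * f t ^ 2) * (ENNReal.ofReal (|t - s| ^ (-(1 / 2) : ℝ)) *
              ENNReal.ofReal (|t - s| ^ (1 / 2 : ℝ))) := by rw [habs]; ring
        _ = 8 * (f s ^ 2 * f t ^ 2) := by
            rw [← ENNReal.ofReal_mul (by positivity), ← Real.rpow_add h0]; norm_num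
        _ ≤ _ := le_rfl
  calc _ ≤ ∫⁻ y, ∫⁻ x, ∫⁻ r, k (y, x) r := lintegral_mono step1
    _ = ∫⁻ p : ℝ × ℝ, ∫⁻ r, k p r := by
        have hkm : Measurable fun p : ℝ × ℝ => ∫⁻ r, k p r := hk.lintegral_prod_right'
        exact (lintegral_prod _ hkm.aemeasurable).symm
    _ = ∫⁻ r, ∫⁻ p, k p r := lintegral_lintegral_swap hk.aemeasurable
    _ ≤ ∫⁻ r : ℝ × ℝ, 8 * (f r.1 ^ 2 * f r.2 ^ 2) := lintegral_mono step2
    _ = 8 * (∫⁻ t, f t ^ 2) ^ 2 := by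
        rw [lintegral_const_mul _ (by fun_prop), Measure.volume_eq_prod,
          lintegral_prod_mul (f := fun s => f s ^ 2) (g := fun s => f s ^ 2)
            (by fun_prop) (by fun_prop), sq]

end FourAverage

section CurvAvg

lemma four_avg {f : ℝ → ℝ≥0∞} (hf : Measurable f) :
    ∫⁻ y, ∫⁻ x, ENNReal.ofReal (|x - y| ^ (-4 : ℝ)) * (∫⁻ t in uIoc y x, f t) ^ 4 ≤
      16 * (∫⁻ t, f t ^ 2) ^ 2 := by
  let F : ℝ → ℝ → ℝ≥0∞ := fun y x =>
    (Ioi y).indicator (fun x => ENNReal.ofReal ((x - y) ^ (-4 : ℝ)) * (∫⁻ t in Ioc y x, f t) ^ 4) x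
  have hF : Measurable (Function.uncurry F) := by
    have h1 : Measurable fun p : ℝ × ℝ => ∫⁻ t in Ioc p.1 p.2, f t := by
      have h2 : ∀ p : ℝ × ℝ, ∫⁻ t in Ioc p.1 p.2, f t =
          ∫⁻ t, (if p.1 < t ∧ t ≤ p.2 then f t else 0) := fun p => by
        rw [← lintegral_indicator measurableSet_Ioc]; simp only [indicator, mem_Ioc]
      simp only [h2]
      have h3 : Measurable fun a : (ℝ × ℝ) × ℝ => (if a.1.1 < a.2 ∧ a.2 ≤ a.1.2 then f a.2 else 0) := by
        have h4 : MeasurableSet {a : (ℝ × ℝ) × ℝ | a.1.1 < a.2} :=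
          measurableSet_lt (by fun_prop) (by fun_prop)
        have h5 : MeasurableSet {a : (ℝ × ℝ) × ℝ | a.2 ≤ a.1.2} :=
          measurableSet_le (by fun_prop) (by fun_prop)
        exact Measurable.ite (h4.inter h5) (by fun_prop) measurable_const
      exact h3.lintegral_prod_right'
    have h6 : MeasurableSet {a : ℝ × ℝ | a.1 < a.2} :=
      measurableSet_lt (by fun_prop) (by fun_prop)
    exact Measurable.ite h6 (by fun_prop) measurable_const
  have hle : ∀ y x, ENNReal.ofReal (|x - y| ^ (-4 : ℝ)) * (∫⁻ t in uIoc y x, f t) ^ 4 =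
      F y x + F x y := by
    intro y x
    rcases lt_trichotomy y x with h | rfl | h
    · simp [F, h, h.le, indicator, abs_of_pos (sub_pos.2 h), not_lt.2 h.le]
    · simp [F]
    · simp [F, h, h.le, indicator, abs_of_neg (sub_neg.2 h), not_lt.2 h.le]
  have hhalf := four_avg_half hf
  have e : ∀ y, ∫⁻ x in Ioi y, ENNReal.ofReal ((x - y) ^ (-4 : ℝ)) * (∫⁻ t in Ioc y x, f t) ^ 4 =
      ∫⁻ x, F y x := fun y => by rw [← lintegral_indicator measurableSet_Ioi]
  simp only [e] at hhalf
  have hFl : ∀ y, Measurable (F y) := fun y => hF.comp measurable_prodMk_left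
  simp only [hle]
  calc ∫⁻ y, ∫⁻ x, (F y x + F x y) = ∫⁻ y, ((∫⁻ x, F y x) + ∫⁻ x, F x y) :=
        lintegral_congr fun y => lintegral_add_left (hFl y) _
    _ = (∫⁻ y, ∫⁻ x, F y x) + ∫⁻ y, ∫⁻ x, F x y := by
        have : Measurable fun y => ∫⁻ x, F y x := hF.lintegral_prod_right'
        exact lintegral_add_left this _
    _ ≤ 8 * (∫⁻ t, f t ^ 2) ^ 2 + 8 * (∫⁻ t, f t ^ 2) ^ 2 := by
        refine add_le_add hhalf ?_
        rw [lintegral_lintegral_swap (f := fun y x => F x y) (hF.comp measurable_swap).aemeasurable]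
        exact hhalf
    _ = _ := by rw [← add_mul]; norm_num

/-- The mean of `‖u''‖` over the interval between `y` and `y + h`. -/
def curvAvg (u : ℝ → E3) (y h : ℝ) : ℝ := |h|⁻¹ * |∫ t in y..(y + h), ‖deriv (deriv u) t‖|

variable {u : ℝ → E3}

lemma curvAvg_nonneg (u : ℝ → E3) (y h : ℝ) : 0 ≤ curvAvg u y h := by unfold curvAvg; positivity

lemma C2Per.norm_remainder_le_curvAvg (hu : C2Per u) (y h : ℝ) :
    ‖u (y + h) - u y - h • deriv u y‖ ≤ h ^ 2 * curvAvg u y h := by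
  rcases eq_or_ne h 0 with rfl | hh
  · simp
  · refine (hu.norm_remainder_le y h).trans (le_of_eq ?_)
    unfold curvAvg
    rw [← sq_abs h]; field_simp

lemma C2Per.curvAvg_periodic (hu : C2Per u) (y h : ℝ) : curvAvg u (y + 1) h = curvAvg u y h := by
  unfold curvAvg
  congr 2
  have := intervalIntegral.integral_comp_add_right
    (f := fun t => ‖deriv (deriv u) t‖) (a := y) (b := y + h) 1
  rw [show y + 1 + h = y + h + 1 by ring, ← this]
  simp only [hu.periodic_deriv2 _]

lemma C2Per.measurable_curvAvg (hu : C2Per u) : Measurable fun p : ℝ × ℝ => curvAvg u p.1 p.2 := by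
  have hc : Continuous fun x => ∫ t in (0 : ℝ)..x, ‖deriv (deriv u) t‖ :=
    intervalIntegral.continuous_primitive
      (fun a b => hu.continuous_deriv2.norm.intervalIntegrable a b) 0
  have h : ∀ p : ℝ × ℝ, curvAvg u p.1 p.2 = |p.2|⁻¹ *
      |(∫ t in (0 : ℝ)..(p.1 + p.2), ‖deriv (deriv u) t‖) -
        ∫ t in (0 : ℝ)..p.1, ‖deriv (deriv u) t‖| := fun p => by
    unfold curvAvg
    rw [intervalIntegral.integral_interval_sub_left] <;>
    exact hu.continuous_deriv2.norm.intervalIntegrable _ _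
  simp only [h]
  have h2 : Measurable fun p : ℝ × ℝ => |(∫ t in (0 : ℝ)..(p.1 + p.2), ‖deriv (deriv u) t‖) -
        ∫ t in (0 : ℝ)..p.1, ‖deriv (deriv u) t‖| :=
    ((hc.comp (continuous_fst.add continuous_snd)).sub (hc.comp continuous_fst)).abs.measurable
  have h3 : Measurable fun p : ℝ × ℝ => |p.2|⁻¹ := measurable_snd.abs.inv
  exact h3.mul h2

lemma C2Per.measurable_curvAvg_wrap (hu : C2Per u) :
    Measurable fun p : ℝ × ℝ => curvAvg u p.2 (wrap (p.1 - p.2)) :=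
  hu.measurable_curvAvg.comp
    (measurable_snd.prodMk (measurable_wrap.comp (measurable_fst.sub measurable_snd)))

lemma C2Per.lintegral_enorm_deriv2_sq (hu : C2Per u) :
    ∫⁻ t in Ioc (-1 : ℝ) 2, ‖deriv (deriv u) t‖ₑ ^ 2 = ENNReal.ofReal (3 * bend u) := by
  have hc : Continuous fun t => ‖deriv (deriv u) t‖ ^ 2 := hu.continuous_deriv2.norm.pow 2
  have h1 : ∀ t, ‖deriv (deriv u) t‖ₑ ^ 2 = ENNReal.ofReal (‖deriv (deriv u) t‖ ^ 2) := fun t => by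
    rw [ENNReal.ofReal_pow (norm_nonneg _), ofReal_norm]
  simp only [h1]
  rw [← ofReal_integral_eq_lintegral_ofReal
    ((hc.integrableOn_Icc (a := -1) (b := 2)).mono_set Ioc_subset_Icc_self)
    (Filter.Eventually.of_forall fun t => by positivity)]
  congr 1
  rw [← intervalIntegral.integral_of_le (by norm_num)]
  have e1 := hu.integral_deriv2_sq' (-1)
  have e2 := hu.integral_deriv2_sq' 0
  have e3 := hu.integral_deriv2_sq' 1
  norm_num at e1 e2 e3
  rw [← intervalIntegral.integral_add_adjacent_intervals (b := 1) (hc.intervalIntegrable _ _)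
    (hc.intervalIntegrable _ _), ← intervalIntegral.integral_add_adjacent_intervals (a := -1)
    (b := 0) (hc.intervalIntegrable _ _) (hc.intervalIntegrable _ _), e1, e2, e3]
  ring

lemma C2Per.lintegral_curvAvg_pow_four (hu : C2Per u) :
    ∫⁻ p in unitSq, ENNReal.ofReal (curvAvg u p.2 (wrap (p.1 - p.2)) ^ 4) ≤
      ENNReal.ofReal (144 * bend u ^ 2) := by
  have hm : Measurable fun p : ℝ × ℝ =>
      ENNReal.ofReal (curvAvg u p.2 (wrap (p.1 - p.2)) ^ 4) :=
    (hu.measurable_curvAvg_wrap.pow_const 4).ennreal_ofReal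
  rw [lintegral_unitSq hm (fun x y => by
      simp only [show x + 1 - y = x - y + 1 by ring, wrap_add_one]) (fun x y => by
      simp only [show x - (y + 1) = x - y - 1 by ring, wrap_sub_one, hu.curvAvg_periodic])
    0 (-(1 / 2))]
  set f : ℝ → ℝ≥0∞ := (Ioc (-1 : ℝ) 2).indicator fun t => ‖deriv (deriv u) t‖ₑ with hf
  have hfm : Measurable f := hu.continuous_deriv2.enorm.measurable.indicator measurableSet_Ioc
  have key : ∀ y ∈ Ioc (0 : ℝ) (0 + 1), ∀ h ∈ Ioc (-(1 / 2) : ℝ) (-(1 / 2) + 1),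
      ENNReal.ofReal (curvAvg u y (wrap (y + h - y)) ^ 4) =
      ENNReal.ofReal (|y + h - y| ^ (-4 : ℝ)) * (∫⁻ t in uIoc y (y + h), f t) ^ 4 := by
    intro y hy h hh
    rw [add_sub_cancel_left, wrap_of_mem hh.1 (by linarith [hh.2])]
    have e1 : ∫⁻ t in uIoc y (y + h), f t =
        ENNReal.ofReal |∫ t in y..(y + h), ‖deriv (deriv u) t‖| := by
      rw [intervalIntegral.abs_integral_eq_abs_integral_uIoc,
        abs_of_nonneg (integral_nonneg fun t => norm_nonneg _),
        ofReal_integral_norm_eq_lintegral_enorm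
          (hu.continuous_deriv2.integrableOn_uIoc)]
      refine setLIntegral_congr_fun measurableSet_uIoc fun t ht => ?_
      simp only [hf]
      rw [indicator_of_mem]
      rw [mem_uIoc] at ht
      simp only [mem_Ioc] at *
      rcases ht with ht | ht <;> constructor <;> linarith [ht.1, ht.2]
    rw [e1, curvAvg, mul_pow, ENNReal.ofReal_mul (by positivity), ← ENNReal.ofReal_pow (abs_nonneg _)]
    congr 2
    rw [Real.rpow_neg (abs_nonneg _), inv_pow]
    norm_cast
  calc _ = ∫⁻ y in Ioc (0 : ℝ) (0 + 1), ∫⁻ h in Ioc (-(1 / 2) : ℝ) (-(1 / 2) + 1),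
        ENNReal.ofReal (|y + h - y| ^ (-4 : ℝ)) * (∫⁻ t in uIoc y (y + h), f t) ^ 4 :=
        setLIntegral_congr_fun measurableSet_Ioc fun y hy =>
          setLIntegral_congr_fun measurableSet_Ioc fun h hh => key y hy h hh
    _ ≤ ∫⁻ y, ∫⁻ h, ENNReal.ofReal (|y + h - y| ^ (-4 : ℝ)) *
          (∫⁻ t in uIoc y (y + h), f t) ^ 4 :=
        (setLIntegral_le_lintegral _ _).trans
          (lintegral_mono fun y => setLIntegral_le_lintegral _ _)
    _ = ∫⁻ y, ∫⁻ x, ENNReal.ofReal (|x - y| ^ (-4 : ℝ)) * (∫⁻ t in uIoc y x, f t) ^ 4 :=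
        lintegral_congr fun y => lintegral_add_left_eq_self
          (fun x => ENNReal.ofReal (|x - y| ^ (-4 : ℝ)) * (∫⁻ t in uIoc y x, f t) ^ 4) y
    _ ≤ 16 * (∫⁻ t, f t ^ 2) ^ 2 := four_avg hfm
    _ = 16 * ENNReal.ofReal (3 * bend u) ^ 2 := by
        rw [← hu.lintegral_enorm_deriv2_sq, ← lintegral_indicator measurableSet_Ioc]
        congr 3; ext t
        simp only [hf, indicator]; split_ifs <;> simp
    _ = _ := by
        have := bend_nonneg u
        rw [← ENNReal.ofReal_pow (by positivity), ← ENNReal.ofReal_ofNat 16,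
          ← ENNReal.ofReal_mul (by norm_num)]
        congr 1; ring

end CurvAvg

section Pointwise

lemma rpow_sub_le_gradient {p x y : ℝ} (hp : 1 ≤ p) (hx : 0 ≤ x) (hy : 0 ≤ y) :
    x ^ p - y ^ p ≤ p * x ^ (p - 1) * (x - y) := by
  rcases hx.eq_or_lt with rfl | hx
  · rcases hp.eq_or_lt with rfl | hp
    · simp
    · rw [Real.zero_rpow (by linarith), Real.zero_rpow (by linarith)]
      have := Real.rpow_nonneg hy p
      linarith
  · have h := one_add_mul_self_le_rpow_one_add (s := y / x - 1) (by
      have : 0 ≤ y / x := by positivity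
      linarith) hp
    rw [add_sub_cancel, Real.div_rpow hy hx.le, le_div_iff₀ (Real.rpow_pos_of_pos hx p)] at h
    have e : x ^ p = x ^ (p - 1) * x := by rw [← Real.rpow_add_one hx.ne']; ring_nf
    have e2 : (1 + p * (y / x - 1)) * x ^ p = x ^ p - p * x ^ (p - 1) * (x - y) := by
      rw [e]; field_simp; ring
    linarith

lemma rpow_taylor_le {q x y M : ℝ} (hq : 2 ≤ q) (hx : 0 ≤ x) (hy : 0 ≤ y) (hxM : x ≤ M)
    (hyM : y ≤ M) :
    y ^ q ≤ x ^ q + q * x ^ (q - 1) * (y - x) + q * (q - 1) * M ^ (q - 2) * (y - x) ^ 2 := by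
  have h1 := rpow_sub_le_gradient (p := q) (by linarith) hy hx
  have h2 : (y ^ (q - 1) - x ^ (q - 1)) * (y - x) ≤ (q - 1) * M ^ (q - 2) * (y - x) ^ 2 := by
    have gen : ∀ a b : ℝ, 0 ≤ a → a ≤ b → b ≤ M →
        (b ^ (q - 1) - a ^ (q - 1)) * (b - a) ≤ (q - 1) * M ^ (q - 2) * (b - a) ^ 2 := by
      intro a b ha hab hb
      have h3 := rpow_sub_le_gradient (p := q - 1) (by linarith) (ha.trans hab) ha
      have h4 : b ^ (q - 1 - 1) ≤ M ^ (q - 2) := by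
        rw [show q - 1 - 1 = q - 2 by ring]
        exact Real.rpow_le_rpow (ha.trans hab) hb (by linarith)
      calc _ ≤ ((q - 1) * M ^ (q - 2) * (b - a)) * (b - a) := by
            refine mul_le_mul_of_nonneg_right (h3.trans ?_) (by linarith)
            refine mul_le_mul_of_nonneg_right ?_ (by linarith)
            exact mul_le_mul_of_nonneg_left h4 (by linarith)
        _ = _ := by ring
    rcases le_total x y with h | h
    · exact gen x y hx h hyM
    · have := gen y x hy h hxM
      nlinarith
  have h5 : q * ((y ^ (q - 1) - x ^ (q - 1)) * (y - x)) ≤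
      q * ((q - 1) * M ^ (q - 2) * (y - x) ^ 2) := mul_le_mul_of_nonneg_left h2 (by linarith)
  nlinarith

lemma norm_rpow_taylor_le {z w : E3} {q M : ℝ} (hq : 2 < q) (hz : ‖z‖ ≤ M) (hw : ‖w‖ ≤ M) :
    ‖w‖ ^ q ≤ ‖z‖ ^ q + q * ‖z‖ ^ (q - 2) * ⟪z, w - z⟫ + q * q * M ^ (q - 2) * ‖w - z‖ ^ 2 := by
  have h1 := rpow_taylor_le hq.le (norm_nonneg z) (norm_nonneg w) hz hw
  have h2 : ‖z‖ ^ (q - 1) = ‖z‖ ^ (q - 2) * ‖z‖ := by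
    rw [← Real.rpow_add_one' (norm_nonneg _) (by linarith)]; ring_nf
  have h3 : ‖z‖ * (‖w‖ - ‖z‖) ≤ ⟪z, w - z⟫ + 1 / 2 * ‖w - z‖ ^ 2 := by
    have e1 : ⟪z, w - z⟫ = ⟪w, z⟫ - ‖z‖ ^ 2 := by
      rw [inner_sub_right, real_inner_self_eq_norm_sq, real_inner_comm]
    rw [e1, norm_sub_sq_real]
    nlinarith [sq_nonneg (‖w‖ - ‖z‖)]
  have h4 : (‖w‖ - ‖z‖) ^ 2 ≤ ‖w - z‖ ^ 2 := by
    rw [← sq_abs]; exact pow_le_pow_left₀ (abs_nonneg _) (abs_norm_sub_norm_le w z) 2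
  have h5 : ‖z‖ ^ (q - 2) ≤ M ^ (q - 2) := Real.rpow_le_rpow (norm_nonneg _) hz (by linarith)
  have h6 : 0 ≤ ‖z‖ ^ (q - 2) := Real.rpow_nonneg (norm_nonneg _) _
  have h7 : 0 ≤ M ^ (q - 2) := h6.trans h5
  rw [h2] at h1
  have e1 : q * (‖z‖ ^ (q - 2) * ‖z‖) * (‖w‖ - ‖z‖) ≤
      q * ‖z‖ ^ (q - 2) * (⟪z, w - z⟫ + 1 / 2 * ‖w - z‖ ^ 2) := by
    rw [mul_assoc, mul_assoc, mul_assoc]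
    exact mul_le_mul_of_nonneg_left (mul_le_mul_of_nonneg_left h3 h6) (by linarith)
  have e2 : q * ‖z‖ ^ (q - 2) * (1 / 2 * ‖w - z‖ ^ 2) ≤ q * M ^ (q - 2) * (1 / 2 * ‖w - z‖ ^ 2) :=
    mul_le_mul_of_nonneg_right (mul_le_mul_of_nonneg_left h5 (by linarith)) (by positivity)
  have e3 : q * (q - 1) * M ^ (q - 2) * (‖w‖ - ‖z‖) ^ 2 ≤
      q * (q - 1) * M ^ (q - 2) * ‖w - z‖ ^ 2 := by
    refine mul_le_mul_of_nonneg_left h4 ?_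
    exact mul_nonneg (mul_nonneg (by linarith) (by linarith)) h7
  have e4 : 0 ≤ q * M ^ (q - 2) * ‖w - z‖ ^ 2 :=
    mul_nonneg (mul_nonneg (by linarith) h7) (sq_nonneg _)
  nlinarith

set_option maxHeartbeats 1000000 in
/-- First-order expansion of the scale invariant quotient `W / ‖b‖²`. -/
lemma quotient_taylor {b β w₀ d₁ d₂ : E3} {ℓ N s : ℝ} (hℓ : 0 < ℓ) (hℓ1 : ℓ ≤ 1) (hN : 0 ≤ N)
    (hN1 : N ≤ 1) (hs : 1 ≤ s) (hw₀ : ‖w₀‖ ≤ 2 * s) (hd₁ : ‖d₁‖ ≤ 2 * N * s)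
    (hd₂ : ‖d₂‖ ≤ N ^ 2 * s) (hb : ℓ ≤ ‖b‖) (hb' : ‖b‖ ≤ 2) (hβ : ‖β‖ ≤ N)
    (hbβ : ℓ / 2 ≤ ‖b + β‖) :
    ‖(‖b‖ ^ 2)⁻¹ • w₀‖ ≤ 2 * s / ℓ ^ 2 ∧
    ‖(‖b + β‖ ^ 2)⁻¹ • (w₀ + d₁ + d₂)‖ ≤ 20 * s / ℓ ^ 2 ∧
    ‖(‖b + β‖ ^ 2)⁻¹ • (w₀ + d₁ + d₂) - (‖b‖ ^ 2)⁻¹ • w₀‖ ≤ 60 * N * s / ℓ ^ 4 ∧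
    ‖(‖b + β‖ ^ 2)⁻¹ • (w₀ + d₁ + d₂) - (‖b‖ ^ 2)⁻¹ • w₀ -
      ((‖b‖ ^ 2)⁻¹ • d₁ - (2 * ⟪b, β⟫ / ‖b‖ ^ 4) • w₀)‖ ≤ 300 * N ^ 2 * s / ℓ ^ 6 := by
  have hb0 : 0 < ‖b‖ := hℓ.trans_le hb
  have hb1 : 0 < ‖b + β‖ := (half_pos hℓ).trans_le hbβ
  set i := ⟪b, β⟫ with hi
  have hexp : ‖b + β‖ ^ 2 = ‖b‖ ^ 2 + 2 * i + ‖β‖ ^ 2 := norm_add_sq_real b β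
  have hi2 : |i| ≤ 2 * N := (abs_real_inner_le_norm b β).trans
    (mul_le_mul hb' hβ (norm_nonneg _) (by norm_num))
  have hβ2 : ‖β‖ ^ 2 ≤ N ^ 2 := pow_le_pow_left₀ (norm_nonneg _) hβ 2
  set x := (‖b‖ ^ 2)⁻¹ with hx
  set y := (‖b + β‖ ^ 2)⁻¹ with hy
  set L := (ℓ ^ 2)⁻¹ with hL
  have hL1 : 1 ≤ L := (one_le_inv₀ (by positivity)).2 (pow_le_one₀ hℓ.le hℓ1)
  have hx0 : 0 ≤ x := by positivity
  have hy0 : 0 ≤ y := by positivity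
  have hxL : x ≤ L := inv_anti₀ (by positivity) (pow_le_pow_left₀ hℓ.le hb 2)
  have hyL : y ≤ 4 * L := by
    have : y ≤ ((ℓ / 2) ^ 2)⁻¹ := inv_anti₀ (by positivity) (pow_le_pow_left₀ (by positivity) hbβ 2)
    refine this.trans (le_of_eq ?_)
    rw [hL]; field_simp; norm_num
  set r := 2 * i + ‖β‖ ^ 2 with hr
  have hr5 : |r| ≤ 5 * N := by
    rw [abs_le] at hi2 ⊢
    constructor <;> nlinarith [sq_nonneg ‖β‖]
  have hxy : y - x = -(r * (x * y)) := by
    have e : r = ‖b + β‖ ^ 2 - ‖b‖ ^ 2 := by rw [hexp, hr]; ring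
    rw [hx, hy, e]
    field_simp
    ring
  have hxy' : |y - x| ≤ 20 * N * L ^ 2 := by
    rw [hxy, abs_neg, abs_mul, abs_of_nonneg (mul_nonneg hx0 hy0)]
    calc |r| * (x * y) ≤ (5 * N) * (L * (4 * L)) :=
          mul_le_mul hr5 (mul_le_mul hxL hyL hy0 (by positivity)) (by positivity) (by positivity)
      _ = _ := by ring
  have h4 : 2 * i / ‖b‖ ^ 4 = 2 * i * x ^ 2 := by rw [hx]; field_simp
  clear_value r x y L i
  have hxy2 : |y - x + 2 * i * x ^ 2| ≤ 101 * N ^ 2 * L ^ 3 := by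
    have e : y - x + 2 * i * x ^ 2 = r ^ 2 * (x ^ 2 * y) - ‖β‖ ^ 2 * x ^ 2 := by
      have : y = x - r * (x * y) := by linarith
      have h2 : 2 * i = r - ‖β‖ ^ 2 := by rw [hr]; ring
      rw [hxy, h2]
      linear_combination (-(r * x)) * hxy
    have b1 : r ^ 2 * (x ^ 2 * y) ≤ 100 * N ^ 2 * L ^ 3 := by
      have : r ^ 2 ≤ (5 * N) ^ 2 := by rw [← sq_abs]; exact pow_le_pow_left₀ (abs_nonneg _) hr5 2
      calc r ^ 2 * (x ^ 2 * y) ≤ (5 * N) ^ 2 * (L ^ 2 * (4 * L)) := by gcongr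
        _ = _ := by ring
    have b2 : ‖β‖ ^ 2 * x ^ 2 ≤ N ^ 2 * L ^ 3 := by
      calc ‖β‖ ^ 2 * x ^ 2 ≤ N ^ 2 * L ^ 2 := by gcongr
        _ ≤ N ^ 2 * L ^ 3 := by gcongr; norm_num
    have b3 : 0 ≤ r ^ 2 * (x ^ 2 * y) := by positivity
    have b4 : 0 ≤ ‖β‖ ^ 2 * x ^ 2 := by positivity
    have b5 : 0 ≤ N ^ 2 * L ^ 3 := by positivity
    rw [e, abs_le]; constructor <;> linarith
  have hs0 : 0 ≤ s := by linarith
  have hNN : N ^ 2 ≤ N := by nlinarith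
  have hLs : ∀ c : ℝ, ∀ n : ℕ, c / ℓ ^ (2 * n) = c * L ^ n := fun c n => by
    rw [hL, div_eq_mul_inv, pow_mul, inv_pow]
  have hd : ‖d₁ + d₂‖ ≤ 3 * N * s := (norm_add_le _ _).trans (by nlinarith)
  have hsum : ‖w₀ + d₁ + d₂‖ ≤ 5 * s := by
    rw [add_assoc]; refine (norm_add_le _ _).trans ?_; nlinarith
  refine ⟨?_, ?_, ?_, ?_⟩
  · rw [norm_smul, Real.norm_of_nonneg hx0, show 2 * s / ℓ ^ 2 = 2 * s * L ^ 1 from hLs _ 1, pow_one]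
    rw [mul_comm]; gcongr
  · rw [norm_smul, Real.norm_of_nonneg hy0, show 20 * s / ℓ ^ 2 = 20 * s * L ^ 1 from hLs _ 1,
      pow_one]
    calc y * ‖w₀ + d₁ + d₂‖ ≤ 4 * L * (5 * s) := by gcongr
      _ = _ := by ring
  · rw [show 60 * N * s / ℓ ^ 4 = 60 * N * s * L ^ 2 from hLs _ 2]
    have e : y • (w₀ + d₁ + d₂) - x • w₀ = y • (d₁ + d₂) + (y - x) • w₀ := by module
    rw [e]
    refine (norm_add_le _ _).trans ?_
    rw [norm_smul, norm_smul, Real.norm_of_nonneg hy0, Real.norm_eq_abs]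
    calc _ ≤ 4 * L * (3 * N * s) + 20 * N * L ^ 2 * (2 * s) := by gcongr
      _ = 12 * (N * s) * L + 40 * (N * s) * L ^ 2 := by ring
      _ ≤ 12 * (N * s) * L ^ 2 + 40 * (N * s) * L ^ 2 := by
          have : L ≤ L ^ 2 := by nlinarith
          gcongr
      _ ≤ _ := by nlinarith [show 0 ≤ N * s * L ^ 2 by positivity]
  · rw [show 300 * N ^ 2 * s / ℓ ^ 6 = 300 * N ^ 2 * s * L ^ 3 from hLs _ 3, h4]
    have e : y • (w₀ + d₁ + d₂) - x • w₀ - (x • d₁ - (2 * i * x ^ 2) • w₀) =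
        y • d₂ + (y - x) • d₁ + (y - x + 2 * i * x ^ 2) • w₀ := by module
    rw [e]
    refine (norm_add₃_le).trans ?_
    rw [norm_smul, norm_smul, norm_smul, Real.norm_of_nonneg hy0, Real.norm_eq_abs,
      Real.norm_eq_abs]
    calc _ ≤ 4 * L * (N ^ 2 * s) + 20 * N * L ^ 2 * (2 * N * s) + 101 * N ^ 2 * L ^ 3 * (2 * s) := by
          gcongr
      _ = 4 * (N ^ 2 * s) * L + 40 * (N ^ 2 * s) * L ^ 2 + 202 * (N ^ 2 * s) * L ^ 3 := by ring
      _ ≤ 4 * (N ^ 2 * s) * L ^ 3 + 40 * (N ^ 2 * s) * L ^ 3 + 202 * (N ^ 2 * s) * L ^ 3 := by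
          have h1 : L ≤ L ^ 3 := le_self_pow₀ hL1 (by norm_num)
          have h2 : L ^ 2 ≤ L ^ 3 := pow_le_pow_right₀ hL1 (by norm_num)
          gcongr
      _ ≤ _ := by nlinarith [show 0 ≤ N ^ 2 * s * L ^ 3 by positivity]

lemma norm_quotient_rpow_le {b β w₀ d₁ d₂ : E3} {ℓ N s q : ℝ} (hq : 2 < q) (hq4 : q ≤ 4)
    (hℓ : 0 < ℓ) (hℓ1 : ℓ ≤ 1) (hN : 0 ≤ N)
    (hN1 : N ≤ 1) (hs : 1 ≤ s) (hw₀ : ‖w₀‖ ≤ 2 * s) (hd₁ : ‖d₁‖ ≤ 2 * N * s)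
    (hd₂ : ‖d₂‖ ≤ N ^ 2 * s) (hb : ℓ ≤ ‖b‖) (hb' : ‖b‖ ≤ 2) (hβ : ‖β‖ ≤ N)
    (hbβ : ℓ / 2 ≤ ‖b + β‖) :
    ‖(‖b + β‖ ^ 2)⁻¹ • (w₀ + d₁ + d₂)‖ ^ q ≤ ‖(‖b‖ ^ 2)⁻¹ • w₀‖ ^ q +
      q * ‖(‖b‖ ^ 2)⁻¹ • w₀‖ ^ (q - 2) *
        ⟪(‖b‖ ^ 2)⁻¹ • w₀, (‖b‖ ^ 2)⁻¹ • d₁ - (2 * ⟪b, β⟫ / ‖b‖ ^ 4) • w₀⟫ +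
      10 ^ 8 / ℓ ^ 12 * N ^ 2 * s ^ 4 := by
  obtain ⟨h0, h1, h2, h3⟩ := quotient_taylor hℓ hℓ1 hN hN1 hs hw₀ hd₁ hd₂ hb hb' hβ hbβ
  set z := (‖b‖ ^ 2)⁻¹ • w₀
  set w := (‖b + β‖ ^ 2)⁻¹ • (w₀ + d₁ + d₂)
  set lin := (‖b‖ ^ 2)⁻¹ • d₁ - (2 * ⟪b, β⟫ / ‖b‖ ^ 4) • w₀
  have hs0 : 0 ≤ s := by linarith
  set M := 20 * s / ℓ ^ 2 with hM
  have hℓ2 : ℓ ^ 2 ≤ 1 := pow_le_one₀ hℓ.le hℓ1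
  have hM1 : 1 ≤ M := by rw [hM, le_div_iff₀ (by positivity)]; linarith
  have hz : ‖z‖ ≤ M := h0.trans (by rw [hM]; gcongr; norm_num)
  have key := norm_rpow_taylor_le hq hz h1
  have hin : ⟪z, w - z⟫ ≤ ⟪z, lin⟫ + ‖z‖ * (300 * N ^ 2 * s / ℓ ^ 6) := by
    have e : ⟪z, w - z⟫ = ⟪z, lin⟫ + ⟪z, w - z - lin⟫ := by rw [← inner_add_right]; congr 1; abel
    rw [e]
    gcongr
    exact (real_inner_le_norm _ _).trans (by gcongr)
  have hzM : ‖z‖ ^ (q - 2) ≤ M ^ 2 := by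
    calc ‖z‖ ^ (q - 2) ≤ M ^ (q - 2) := Real.rpow_le_rpow (norm_nonneg _) hz (by linarith)
      _ ≤ M ^ (2 : ℝ) := Real.rpow_le_rpow_of_exponent_le hM1 (by linarith)
      _ = M ^ 2 := by norm_cast
  have hMM : M ^ (q - 2) ≤ M ^ 2 := by
    calc M ^ (q - 2) ≤ M ^ (2 : ℝ) := Real.rpow_le_rpow_of_exponent_le hM1 (by linarith)
      _ = M ^ 2 := by norm_cast
  have hz0 : 0 ≤ ‖z‖ ^ (q - 2) := Real.rpow_nonneg (norm_nonneg _) _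
  have hM0 : 0 ≤ M ^ (q - 2) := Real.rpow_nonneg (by linarith) _
  have a1 : q * ‖z‖ ^ (q - 2) * ⟪z, w - z⟫ ≤ q * ‖z‖ ^ (q - 2) * ⟪z, lin⟫ +
      4 * M ^ 2 * (M * (300 * N ^ 2 * s / ℓ ^ 6)) := by
    calc _ ≤ q * ‖z‖ ^ (q - 2) * (⟪z, lin⟫ + ‖z‖ * (300 * N ^ 2 * s / ℓ ^ 6)) :=
          mul_le_mul_of_nonneg_left hin (mul_nonneg (by linarith) hz0)
      _ = q * ‖z‖ ^ (q - 2) * ⟪z, lin⟫ + q * ‖z‖ ^ (q - 2) * (‖z‖ * (300 * N ^ 2 * s / ℓ ^ 6)) := by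
          ring
      _ ≤ _ := by gcongr
  have a2 : q * q * M ^ (q - 2) * ‖w - z‖ ^ 2 ≤ 4 * 4 * M ^ 2 * (60 * N * s / ℓ ^ 4) ^ 2 := by
    gcongr
  have a3 : 4 * M ^ 2 * (M * (300 * N ^ 2 * s / ℓ ^ 6)) + 4 * 4 * M ^ 2 * (60 * N * s / ℓ ^ 4) ^ 2 ≤
      10 ^ 8 / ℓ ^ 12 * N ^ 2 * s ^ 4 := by
    have e1 : 4 * M ^ 2 * (M * (300 * N ^ 2 * s / ℓ ^ 6)) + 4 * 4 * M ^ 2 * (60 * N * s / ℓ ^ 4) ^ 2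
      = 32640000 * (N ^ 2 * s ^ 4 / ℓ ^ 12) := by
      rw [hM]; field_simp; ring
    have e2 : 10 ^ 8 / ℓ ^ 12 * N ^ 2 * s ^ 4 = 10 ^ 8 * (N ^ 2 * s ^ 4 / ℓ ^ 12) := by ring
    rw [e1, e2]
    gcongr; norm_num
  linarith

end Pointwise

section Wedge

/-- The cross product, representing the wedge product in `ℝ³`. -/
def cr (a b : E3) : E3 :=
  !₂[a 1 * b 2 - a 2 * b 1, a 2 * b 0 - a 0 * b 2, a 0 * b 1 - a 1 * b 0]

lemma inner_cr (a b c d : E3) : ⟪cr a b, cr c d⟫ = wedgeInner a b c d := by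
  simp [cr, wedgeInner, PiLp.inner_apply, Fin.sum_univ_three]; ring

lemma norm_cr_sq (a b : E3) : ‖cr a b‖ ^ 2 = wedgeSq a b := by
  rw [← real_inner_self_eq_norm_sq, inner_cr, wedgeInner, wedgeSq, real_inner_self_eq_norm_sq,
    real_inner_self_eq_norm_sq, real_inner_comm b a]; ring

lemma norm_cr_le (a b : E3) : ‖cr a b‖ ≤ ‖a‖ * ‖b‖ := by
  refine le_of_sq_le_sq ?_ (by positivity)
  rw [norm_cr_sq, wedgeSq, mul_pow]
  nlinarith [sq_nonneg ⟪a, b⟫]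

lemma cr_add_left (a b c : E3) : cr (a + b) c = cr a c + cr b c := by
  ext i; fin_cases i <;> simp [cr] <;> ring

lemma cr_add_right (a b c : E3) : cr a (b + c) = cr a b + cr a c := by
  ext i; fin_cases i <;> simp [cr] <;> ring

lemma cr_smul_left (r : ℝ) (a b : E3) : cr (r • a) b = r • cr a b := by
  ext i; fin_cases i <;> simp [cr] <;> ring

lemma cr_smul_right (r : ℝ) (a b : E3) : cr a (r • b) = r • cr a b := by
  ext i; fin_cases i <;> simp [cr] <;> ring

lemma cr_self (a : E3) : cr a a = 0 := by
  ext i; fin_cases i <;> simp [cr] <;> ring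

lemma cr_sub_right (a b c : E3) : cr a (b - c) = cr a b - cr a c := by
  ext i; fin_cases i <;> simp [cr] <;> ring

lemma cr_sub_left (a b c : E3) : cr (a - b) c = cr a c - cr b c := by
  ext i; fin_cases i <;> simp [cr] <;> ring

end Wedge

section Integrands

/-- The tangent-point integrand. -/
def tpI (q : ℝ) (u : ℝ → E3) (p : ℝ × ℝ) : ℝ :=
  wedgeSq (deriv u p.2) (u p.1 - u p.2) ^ (q / 2) / ‖u p.1 - u p.2‖ ^ (2 * q)

/-- The tangent-point quotient. -/
def tpZ (u : ℝ → E3) (p : ℝ × ℝ) : E3 :=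
  (‖u p.1 - u p.2‖ ^ 2)⁻¹ • cr (deriv u p.2) (u p.1 - u p.2)

variable {q : ℝ} (u v w φ : ℝ → E3) (p : ℝ × ℝ)

lemma sq_rpow_half {x : ℝ} (hx : 0 ≤ x) (a : ℝ) : (x ^ 2) ^ (a / 2) = x ^ a := by
  rw [← Real.rpow_natCast, ← Real.rpow_mul hx]; congr 1; push_cast; ring

lemma wedgeSq_rpow_half (a b : E3) (r : ℝ) : wedgeSq a b ^ (r / 2) = ‖cr a b‖ ^ r := by
  rw [← norm_cr_sq, sq_rpow_half (norm_nonneg _)]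

lemma rpow_two_mul {x : ℝ} (hx : 0 ≤ x) (r : ℝ) : x ^ (2 * r) = (x ^ 2) ^ r := by
  rw [Real.rpow_mul hx]; norm_cast

lemma tpI_eq : tpI q u p = ‖tpZ u p‖ ^ q := by
  unfold tpI tpZ
  rw [wedgeSq_rpow_half, norm_smul, Real.norm_of_nonneg (by positivity),
    Real.mul_rpow (by positivity) (norm_nonneg _), Real.inv_rpow (by positivity),
    rpow_two_mul (norm_nonneg _), div_eq_inv_mul]

lemma tpI_nonneg : 0 ≤ tpI q u p := by
  unfold tpI
  rw [wedgeSq_rpow_half]; positivity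

lemma norm_tpZ_rpow_mul_inner (hq : 2 < q) (D : E3) :
    ‖tpZ u p‖ ^ (q - 2) * ⟪tpZ u p, (‖u p.1 - u p.2‖ ^ 2)⁻¹ • D⟫ =
      wedgeSq (deriv u p.2) (u p.1 - u p.2) ^ ((q - 2) / 2) / ‖u p.1 - u p.2‖ ^ (2 * q) *
        ⟪cr (deriv u p.2) (u p.1 - u p.2), D⟫ := by
  unfold tpZ
  rw [wedgeSq_rpow_half, norm_smul, Real.norm_of_nonneg (by positivity),
    Real.mul_rpow (by positivity) (norm_nonneg _), real_inner_smul_left, real_inner_smul_right,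
    rpow_two_mul (norm_nonneg _)]
  rcases (norm_nonneg (u p.1 - u p.2)).eq_or_lt with h | h
  · rw [← h]
    simp [Real.zero_rpow (show q ≠ 0 by linarith)]
  · have e : (‖u p.1 - u p.2‖ ^ 2) ^ q = (‖u p.1 - u p.2‖ ^ 2) ^ (q - 2) * (‖u p.1 - u p.2‖ ^ 2) ^ 2 := by
      rw [← Real.rpow_natCast (‖u p.1 - u p.2‖ ^ 2) 2, ← Real.rpow_add (by positivity)]
      congr 1; push_cast; ring
    rw [e, Real.inv_rpow (by positivity)]
    have : 0 < (‖u p.1 - u p.2‖ ^ 2) ^ (q - 2) := by positivity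
    field_simp

lemma Mintegrand_eq (hq : 2 < q) : Mintegrand q u v w p =
    ‖tpZ u p‖ ^ (q - 2) * ⟪tpZ u p, (‖u p.1 - u p.2‖ ^ 2)⁻¹ •
      cr (deriv v p.2) (w p.1 - w p.2 - wrap (p.1 - p.2) • deriv w p.2)⟫ := by
  rw [norm_tpZ_rpow_mul_inner u p hq, inner_cr]; rfl

lemma Aintegrand_eq (hq : 2 < q) : Aintegrand q u v w p =
    ‖tpZ u p‖ ^ (q - 2) * ⟪tpZ u p,
      (⟪v p.1 - v p.2, w p.1 - w p.2⟫ / ‖u p.1 - u p.2‖ ^ 4) •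
        cr (deriv u p.2) (u p.1 - u p.2)⟫ := by
  set c := ⟪v p.1 - v p.2, w p.1 - w p.2⟫
  have e : (c / ‖u p.1 - u p.2‖ ^ 4) • cr (deriv u p.2) (u p.1 - u p.2) =
    (‖u p.1 - u p.2‖ ^ 2)⁻¹ • ((c / ‖u p.1 - u p.2‖ ^ 2) • cr (deriv u p.2) (u p.1 - u p.2)) := by
    rw [smul_smul]; congr 1; rw [div_eq_mul_inv, div_eq_mul_inv, mul_left_comm, ← mul_inv]
    congr 2; ring
  rw [e, norm_tpZ_rpow_mul_inner u p hq, real_inner_smul_right, real_inner_self_eq_norm_sq]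
  unfold Aintegrand
  rw [wedgeSq_rpow_half, wedgeSq_rpow_half]
  have e1 : ‖cr (deriv u p.2) (u p.1 - u p.2)‖ ^ q =
      ‖cr (deriv u p.2) (u p.1 - u p.2)‖ ^ (q - 2) * ‖cr (deriv u p.2) (u p.1 - u p.2)‖ ^ 2 := by
    rw [← Real.rpow_natCast _ 2, ← Real.rpow_add' (norm_nonneg _) (by push_cast; linarith)]
    congr 1; push_cast; ring
  have e2 : ‖u p.1 - u p.2‖ ^ (2 * q + 2) = ‖u p.1 - u p.2‖ ^ (2 * q) * ‖u p.1 - u p.2‖ ^ 2 := by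
    rw [← Real.rpow_natCast _ 2, ← Real.rpow_add' (norm_nonneg _) (by push_cast; linarith)]
    congr 1
  rw [e1, e2, div_mul_eq_div_div]
  ring

/-- The integrand of the first variation. -/
def dI (q : ℝ) (u φ : ℝ → E3) (p : ℝ × ℝ) : ℝ :=
  Mintegrand q u u φ p + Mintegrand q u φ u p - 2 * Aintegrand q u u φ p

lemma dI_eq (hq : 2 < q) : dI q u φ p = ‖tpZ u p‖ ^ (q - 2) *
    ⟪tpZ u p, (‖u p.1 - u p.2‖ ^ 2)⁻¹ •
        (cr (deriv φ p.2) (u p.1 - u p.2 - wrap (p.1 - p.2) • deriv u p.2) +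
          cr (deriv u p.2) (φ p.1 - φ p.2 - wrap (p.1 - p.2) • deriv φ p.2)) -
      (2 * ⟪u p.1 - u p.2, φ p.1 - φ p.2⟫ / ‖u p.1 - u p.2‖ ^ 4) •
        cr (deriv u p.2) (u p.1 - u p.2)⟫ := by
  rw [dI, Mintegrand_eq _ _ _ _ hq, Mintegrand_eq _ _ _ _ hq, Aintegrand_eq _ _ _ _ hq]
  generalize ⟪u p.1 - u p.2, φ p.1 - φ p.2⟫ = c
  rw [smul_add, mul_div_assoc, mul_smul, inner_sub_right, inner_add_right,
    real_inner_smul_right _ _ 2]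
  ring

lemma measurable_wedgeSq {f g : ℝ × ℝ → E3} (hf : Measurable f) (hg : Measurable g) :
    Measurable fun p => wedgeSq (f p) (g p) := by
  unfold wedgeSq; fun_prop

lemma measurable_wedgeInner {f g f' g' : ℝ × ℝ → E3} (hf : Measurable f) (hg : Measurable g)
    (hf' : Measurable f') (hg' : Measurable g') :
    Measurable fun p => wedgeInner (f p) (g p) (f' p) (g' p) := by
  unfold wedgeInner; fun_prop

variable {u v w φ p}

lemma C2Per.measurable_diff (hu : C2Per u) : Measurable fun p : ℝ × ℝ => u p.1 - u p.2 :=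
  ((hu.continuous.comp continuous_fst).sub (hu.continuous.comp continuous_snd)).measurable

lemma C2Per.measurable_deriv_snd (hu : C2Per u) : Measurable fun p : ℝ × ℝ => deriv u p.2 :=
  (hu.continuous_deriv.comp continuous_snd).measurable

lemma C2Per.measurable_tpI (hu : C2Per u) : Measurable (tpI q u) := by
  unfold tpI
  exact ((measurable_wedgeSq hu.measurable_deriv_snd hu.measurable_diff).pow_const _).div
    (hu.measurable_diff.norm.pow_const _)

lemma measurable_Mintegrand (hu : C2Per u) (hv : C2Per v) (hw : C2Per w) :
    Measurable (Mintegrand q u v w) := by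
  unfold Mintegrand
  refine (((measurable_wedgeSq hu.measurable_deriv_snd hu.measurable_diff).pow_const _).div
    (hu.measurable_diff.norm.pow_const _)).mul (measurable_wedgeInner hu.measurable_deriv_snd
      hu.measurable_diff hv.measurable_deriv_snd ?_)
  exact hw.measurable_diff.sub
    ((measurable_wrap.comp (measurable_fst.sub measurable_snd)).smul hw.measurable_deriv_snd)

lemma measurable_Aintegrand (hu : C2Per u) (hv : C2Per v) (hw : C2Per w) :
    Measurable (Aintegrand q u v w) := by
  unfold Aintegrand
  exact (((measurable_wedgeSq hu.measurable_deriv_snd hu.measurable_diff).pow_const _).div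
    (hu.measurable_diff.norm.pow_const _)).mul (hv.measurable_diff.inner hw.measurable_diff)

end Integrands

section PointwiseTP

lemma norm_quotient_rpow_le_of_scale {b β w₀ d₁ d₂ : E3} {ℓ N s q h : ℝ} (hq : 2 < q) (hq4 : q ≤ 4)
    (hh : h ≠ 0) (hℓ : 0 < ℓ) (hℓ1 : ℓ ≤ 1) (hN : 0 ≤ N)
    (hN1 : N ≤ 1) (hs : 1 ≤ s) (hw₀ : ‖w₀‖ ≤ h ^ 2 * (2 * s)) (hd₁ : ‖d₁‖ ≤ h ^ 2 * (2 * N * s))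
    (hd₂ : ‖d₂‖ ≤ h ^ 2 * (N ^ 2 * s)) (hb : |h| * ℓ ≤ ‖b‖) (hb' : ‖b‖ ≤ |h| * 2)
    (hβ : ‖β‖ ≤ |h| * N) (hbβ : |h| * (ℓ / 2) ≤ ‖b + β‖) :
    ‖(‖b + β‖ ^ 2)⁻¹ • (w₀ + d₁ + d₂)‖ ^ q ≤ ‖(‖b‖ ^ 2)⁻¹ • w₀‖ ^ q +
      q * ‖(‖b‖ ^ 2)⁻¹ • w₀‖ ^ (q - 2) *
        ⟪(‖b‖ ^ 2)⁻¹ • w₀, (‖b‖ ^ 2)⁻¹ • d₁ - (2 * ⟪b, β⟫ / ‖b‖ ^ 4) • w₀⟫ +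
      10 ^ 8 / ℓ ^ 12 * N ^ 2 * s ^ 4 := by
  have h0 : 0 < |h| := abs_pos.2 hh
  have h2 : 0 < h ^ 2 := by positivity
  have nsm : ∀ x : E3, ‖h⁻¹ • x‖ = |h|⁻¹ * ‖x‖ := fun x => by
    rw [norm_smul, norm_inv, Real.norm_eq_abs]
  have nsm2 : ∀ x : E3, ‖(h ^ 2)⁻¹ • x‖ = (h ^ 2)⁻¹ * ‖x‖ := fun x => by
    rw [norm_smul, Real.norm_of_nonneg (by positivity)]
  have key := norm_quotient_rpow_le (b := h⁻¹ • b) (β := h⁻¹ • β) (w₀ := (h ^ 2)⁻¹ • w₀)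
    (d₁ := (h ^ 2)⁻¹ • d₁) (d₂ := (h ^ 2)⁻¹ • d₂) (N := N) (s := s) hq hq4 hℓ hℓ1 hN hN1 hs
    (by rw [nsm2, inv_mul_le_iff₀ h2]; exact hw₀)
    (by rw [nsm2, inv_mul_le_iff₀ h2]; exact hd₁)
    (by rw [nsm2, inv_mul_le_iff₀ h2]; exact hd₂)
    (by rw [nsm, le_inv_mul_iff₀ h0]; exact hb) (by rw [nsm, inv_mul_le_iff₀ h0]; exact hb')
    (by rw [nsm, inv_mul_le_iff₀ h0]; exact hβ)
    (by rw [← smul_add, nsm, le_inv_mul_iff₀ h0]; exact hbβ)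
  have scale : ∀ x y : E3, (‖h⁻¹ • x‖ ^ 2)⁻¹ • (h ^ 2)⁻¹ • y = (‖x‖ ^ 2)⁻¹ • y := fun x y => by
    rw [nsm, smul_smul, mul_pow, inv_pow, sq_abs, ← mul_inv, mul_right_comm,
      inv_mul_cancel₀ h2.ne', one_mul]
  have scale4 : (2 * ⟪h⁻¹ • b, h⁻¹ • β⟫ / ‖h⁻¹ • b‖ ^ 4) • (h ^ 2)⁻¹ • w₀ =
      (2 * ⟪b, β⟫ / ‖b‖ ^ 4) • w₀ := by
    rw [nsm, smul_smul, real_inner_smul_left, real_inner_smul_right, mul_pow, inv_pow,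
      show |h| ^ 4 = h ^ 2 * h ^ 2 by rw [← sq_abs]; ring]
    congr 1
    field_simp
  rw [scale4, ← smul_add, ← smul_add, ← smul_add, scale, scale, scale] at key
  exact key

end PointwiseTP

section TaylorTP

/-- Curves with bounded speed and bending energy and with quantitative separation. -/
structure Tame (u : ℝ → E3) (Λ ℓ : ℝ) : Prop where
  per : C2Per u
  speed : ∀ x, ‖deriv u x‖ ≤ 2
  bend_le : bend u ≤ Λ
  sep : ∀ x y, ℓ * |wrap (x - y)| ≤ ‖u x - u y‖

/-- The dominating function for all the integrands. -/
def dom (u ψ : ℝ → E3) (p : ℝ × ℝ) : ℝ :=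
  1 + curvAvg u p.2 (wrap (p.1 - p.2)) + curvAvg ψ p.2 (wrap (p.1 - p.2))

lemma one_le_dom (u ψ : ℝ → E3) (p : ℝ × ℝ) : 1 ≤ dom u ψ p := by
  have := curvAvg_nonneg u p.2 (wrap (p.1 - p.2))
  have := curvAvg_nonneg ψ p.2 (wrap (p.1 - p.2))
  unfold dom; linarith

variable {u ψ : ℝ → E3} {Λ ℓ q N : ℝ}

lemma volume_unitSq : volume unitSq = 1 := by
  rw [unitSq, Measure.volume_eq_prod, Measure.prod_prod]; simp

lemma lintegral_dom_le (hu : C2Per u) (hΛ : bend u ≤ Λ) (hψ : C2Per ψ) (hψ1 : bend ψ ≤ 1) :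
    ∫⁻ p in unitSq, ENNReal.ofReal (dom u ψ p ^ 4) ≤
      ENNReal.ofReal (27 * (1 + 144 * Λ ^ 2 + 144)) := by
  have pw : ∀ p, ENNReal.ofReal (dom u ψ p ^ 4) ≤ 27 * (1 +
      ENNReal.ofReal (curvAvg u p.2 (wrap (p.1 - p.2)) ^ 4) +
      ENNReal.ofReal (curvAvg ψ p.2 (wrap (p.1 - p.2)) ^ 4)) := by
    intro p
    have ha := curvAvg_nonneg u p.2 (wrap (p.1 - p.2))
    have hb := curvAvg_nonneg ψ p.2 (wrap (p.1 - p.2))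
    unfold dom
    set a := curvAvg u p.2 (wrap (p.1 - p.2))
    set b := curvAvg ψ p.2 (wrap (p.1 - p.2))
    rw [← ENNReal.ofReal_one, ← ENNReal.ofReal_add (by norm_num) (by positivity),
      ← ENNReal.ofReal_add (by positivity) (by positivity), ← ENNReal.ofReal_ofNat 27,
      ← ENNReal.ofReal_mul (by norm_num)]
    apply ENNReal.ofReal_le_ofReal
    have h1 : (1 + a + b) ^ 2 ≤ 3 * (1 + a ^ 2 + b ^ 2) := by
      nlinarith [sq_nonneg (1 - a), sq_nonneg (1 - b), sq_nonneg (a - b)]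
    have h2 : (1 + a ^ 2 + b ^ 2) ^ 2 ≤ 3 * (1 + a ^ 4 + b ^ 4) := by
      nlinarith [sq_nonneg (1 - a ^ 2), sq_nonneg (1 - b ^ 2), sq_nonneg (a ^ 2 - b ^ 2)]
    calc (1 + a + b) ^ 4 = ((1 + a + b) ^ 2) ^ 2 := by ring
      _ ≤ (3 * (1 + a ^ 2 + b ^ 2)) ^ 2 := pow_le_pow_left₀ (by positivity) h1 2
      _ ≤ _ := by nlinarith
  have m1 := (hu.measurable_curvAvg_wrap.pow_const 4).ennreal_ofReal
  have m2 := (hψ.measurable_curvAvg_wrap.pow_const 4).ennreal_ofReal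
  have hu2 := hu.lintegral_curvAvg_pow_four
  have hψ2 := hψ.lintegral_curvAvg_pow_four
  have hb1 : bend u ^ 2 ≤ Λ ^ 2 := pow_le_pow_left₀ (bend_nonneg u) hΛ 2
  have hb2 : bend ψ ^ 2 ≤ 1 := pow_le_one₀ (bend_nonneg ψ) hψ1
  refine (lintegral_mono pw).trans ?_
  rw [lintegral_const_mul _ (by fun_prop), lintegral_add_left (by fun_prop),
    lintegral_add_left (by fun_prop), setLIntegral_const, volume_unitSq, one_mul]
  calc _ ≤ 27 * (1 + ENNReal.ofReal (144 * Λ ^ 2) + ENNReal.ofReal 144) := by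
        gcongr
        · exact hu2.trans (ENNReal.ofReal_le_ofReal (by linarith))
        · exact hψ2.trans (ENNReal.ofReal_le_ofReal (by linarith))
    _ = _ := by
        rw [← ENNReal.ofReal_one, ← ENNReal.ofReal_add (by norm_num) (by positivity),
          ← ENNReal.ofReal_add (by positivity) (by positivity), ← ENNReal.ofReal_ofNat 27,
          ← ENNReal.ofReal_mul (by norm_num)]

lemma measurable_dom (hu : C2Per u) (hψ : C2Per ψ) : Measurable (dom u ψ) :=
  (measurable_const.add hu.measurable_curvAvg_wrap).add hψ.measurable_curvAvg_wrap

lemma integrableOn_dom (hu : C2Per u) (hΛ : bend u ≤ Λ) (hψ : C2Per ψ) (hψ1 : bend ψ ≤ 1) :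
    IntegrableOn (fun p => dom u ψ p ^ 4) unitSq := by
  refine ⟨((measurable_dom hu hψ).pow_const 4).aestronglyMeasurable, ?_⟩
  rw [hasFiniteIntegral_iff_ofReal (Filter.Eventually.of_forall fun p => by
    have := one_le_dom u ψ p; positivity)]
  exact (lintegral_dom_le hu hΛ hψ hψ1).trans_lt ENNReal.ofReal_lt_top

lemma integral_dom_le (hu : C2Per u) (hΛ : bend u ≤ Λ) (hψ : C2Per ψ) (hψ1 : bend ψ ≤ 1) :
    ∫ p in unitSq, dom u ψ p ^ 4 ≤ 27 * (1 + 144 * Λ ^ 2 + 144) := by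
  rw [integral_eq_lintegral_of_nonneg_ae (Filter.Eventually.of_forall fun p => by
    have := one_le_dom u ψ p; positivity)
    ((measurable_dom hu hψ).pow_const 4).aestronglyMeasurable]
  exact ENNReal.toReal_le_of_le_ofReal (by positivity) (lintegral_dom_le hu hΛ hψ hψ1)

/-- The first-order remainders are controlled by the dominating function. -/
lemma remainder_le_dom (hu : C2Per u) (hψ : C2Per ψ) (p : ℝ × ℝ) :
    ‖u p.1 - u p.2 - wrap (p.1 - p.2) • deriv u p.2‖ ≤
      wrap (p.1 - p.2) ^ 2 * curvAvg u p.2 (wrap (p.1 - p.2)) ∧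
    ‖ψ p.1 - ψ p.2 - wrap (p.1 - p.2) • deriv ψ p.2‖ ≤
      wrap (p.1 - p.2) ^ 2 * curvAvg ψ p.2 (wrap (p.1 - p.2)) := by
  rw [hu.sub_eq_wrap p.1 p.2, hψ.sub_eq_wrap p.1 p.2]
  exact ⟨hu.norm_remainder_le_curvAvg _ _, hψ.norm_remainder_le_curvAvg _ _⟩

lemma cr_diff_eq (u : ℝ → E3) (p : ℝ × ℝ) (c : ℝ) : cr (deriv u p.2) (u p.1 - u p.2) =
    cr (deriv u p.2) (u p.1 - u p.2 - c • deriv u p.2) := by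
  rw [cr_sub_right _ _ (c • _), cr_smul_right, cr_self, smul_zero, sub_zero]

lemma C2Per.norm_diff_le_wrap (hu : C2Per u) {M : ℝ} (hM : ∀ x, ‖deriv u x‖ ≤ M) (p : ℝ × ℝ) :
    ‖u p.1 - u p.2‖ ≤ M * |wrap (p.1 - p.2)| := by
  rw [hu.sub_eq_wrap]
  exact (hu.norm_sub_le hM _ _).trans (by rw [add_sub_cancel_left])

lemma C2Per.norm_deriv_le_one (hψ : C2Per ψ) (hψ1 : bend ψ ≤ 1) (x : ℝ) : ‖deriv ψ x‖ ≤ 1 := by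
  have := hψ.norm_deriv_sq_le x
  have h0 := norm_nonneg (deriv ψ x)
  nlinarith

namespace Tame

lemma diff_eq_zero (hu : C2Per u) {p : ℝ × ℝ} (h : wrap (p.1 - p.2) = 0) : u p.1 - u p.2 = 0 := by
  rw [hu.sub_eq_wrap, h, add_zero, sub_self]

lemma norm_tpZ_le (hu : Tame u Λ ℓ) (hℓ : 0 < ℓ) (ψ : ℝ → E3) (p : ℝ × ℝ) :
    ‖tpZ u p‖ ≤ 2 * dom u ψ p / ℓ ^ 2 := by
  have hdom := one_le_dom u ψ p
  unfold tpZ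
  set h := wrap (p.1 - p.2) with hh
  rcases eq_or_ne h 0 with h0 | h0
  · rw [diff_eq_zero hu.per h0]
    simp; positivity
  · have hsep := hu.sep p.1 p.2
    rw [← hh] at hsep
    have habs : 0 < |h| := abs_pos.2 h0
    have hpos : 0 < ‖u p.1 - u p.2‖ := lt_of_lt_of_le (by positivity) hsep
    rw [norm_smul, Real.norm_of_nonneg (by positivity), inv_mul_le_iff₀ (by positivity),
      cr_diff_eq u p h]
    have hR := (remainder_le_dom hu.per hu.per p).1
    rw [← hh] at hR
    have hψ0 := curvAvg_nonneg ψ p.2 (wrap (p.1 - p.2))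
    have hle : curvAvg u p.2 h ≤ dom u ψ p := by unfold dom; rw [← hh] at *; linarith
    have hsq : ℓ ^ 2 * h ^ 2 ≤ ‖u p.1 - u p.2‖ ^ 2 := by
      rw [← sq_abs h, ← mul_pow]; exact pow_le_pow_left₀ (by positivity) hsep 2
    calc _ ≤ 2 * (h ^ 2 * dom u ψ p) := by
          refine (norm_cr_le _ _).trans (mul_le_mul (hu.speed _) (hR.trans ?_) (norm_nonneg _)
            (by norm_num))
          gcongr
      _ = ℓ ^ 2 * h ^ 2 * (2 * dom u ψ p / ℓ ^ 2) := by field_simp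
      _ ≤ _ := mul_le_mul_of_nonneg_right hsq (by positivity)

end Tame
end TaylorTP

section TaylorRemainder

lemma abs_rpow_mul_inner_le {z D : E3} {q M B : ℝ} (hq : 2 < q) (hq4 : q ≤ 4) (hM : 1 ≤ M)
    (hz : ‖z‖ ≤ M) (hD : ‖D‖ ≤ B) : |‖z‖ ^ (q - 2) * ⟪z, D⟫| ≤ M ^ 3 * B := by
  have h0 : 0 ≤ ‖z‖ ^ (q - 2) := Real.rpow_nonneg (norm_nonneg _) _
  have h1 : ‖z‖ ^ (q - 2) ≤ M ^ 2 := by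
    calc ‖z‖ ^ (q - 2) ≤ M ^ (q - 2) := Real.rpow_le_rpow (norm_nonneg _) hz (by linarith)
      _ ≤ M ^ (2 : ℝ) := Real.rpow_le_rpow_of_exponent_le hM (by linarith)
      _ = M ^ 2 := by norm_cast
  have hB : 0 ≤ B := (norm_nonneg _).trans hD
  rw [abs_mul, abs_of_nonneg h0]
  calc _ ≤ M ^ 2 * (M * B) := by
        gcongr
        exact (abs_real_inner_le_norm _ _).trans (by gcongr)
    _ = _ := by ring

namespace Tame

variable {u ψ : ℝ → E3} {Λ ℓ q N : ℝ}

lemma integrand_bounds (hu : Tame u Λ ℓ) (hℓ : 0 < ℓ) (hℓ1 : ℓ ≤ 1) (hq : 2 < q) (hq4 : q ≤ 4)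
    (hψ : C2Per ψ) (hψ1 : bend ψ ≤ 1) (p : ℝ × ℝ) :
    |Mintegrand q u u ψ p| ≤ 16 / ℓ ^ 9 * dom u ψ p ^ 4 ∧
    |Mintegrand q u ψ u p| ≤ 16 / ℓ ^ 9 * dom u ψ p ^ 4 ∧
    |Aintegrand q u u ψ p| ≤ 16 / ℓ ^ 9 * dom u ψ p ^ 4 := by
  have hz := hu.norm_tpZ_le hℓ ψ p
  have hdom := one_le_dom u ψ p
  obtain ⟨hR, hQ⟩ := remainder_le_dom hu.per hψ p
  set M := 2 * dom u ψ p / ℓ ^ 2 with hM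
  have hℓ2 : ℓ ^ 2 ≤ 1 := pow_le_one₀ hℓ.le hℓ1
  have hM1 : 1 ≤ M := by rw [hM, le_div_iff₀ (by positivity)]; linarith
  have hfin : M ^ 3 * (2 * dom u ψ p / ℓ ^ 3) = 16 / ℓ ^ 9 * dom u ψ p ^ 4 := by
    rw [hM]; field_simp; norm_num
  have hMle : M ≤ 2 * dom u ψ p / ℓ ^ 3 := by
    rw [hM]
    apply div_le_div_of_nonneg_left (by positivity) (by positivity)
    exact pow_le_pow_of_le_one hℓ.le hℓ1 (by norm_num)
  rw [Mintegrand_eq _ _ _ _ hq, Mintegrand_eq _ _ _ _ hq, Aintegrand_eq _ _ _ _ hq, ← hfin]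
  have hψd := hψ.norm_deriv_le_one hψ1
  set h := wrap (p.1 - p.2) with hh
  rcases eq_or_ne h 0 with h0 | h0
  · have e : u p.1 - u p.2 = 0 := diff_eq_zero hu.per h0
    rw [e]; simp; positivity
  have hsep := hu.sep p.1 p.2
  rw [← hh] at hsep
  have habs : 0 < |h| := abs_pos.2 h0
  have hpos : 0 < ‖u p.1 - u p.2‖ := lt_of_lt_of_le (by positivity) hsep
  have hsq : ℓ ^ 2 * h ^ 2 ≤ ‖u p.1 - u p.2‖ ^ 2 := by
    rw [← sq_abs h, ← mul_pow]; exact pow_le_pow_left₀ (by positivity) hsep 2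
  have hμ : curvAvg u p.2 h ≤ dom u ψ p := by
    have := curvAvg_nonneg ψ p.2 h
    unfold dom; rw [← hh]; linarith
  have hm : curvAvg ψ p.2 h ≤ dom u ψ p := by
    have := curvAvg_nonneg u p.2 h
    unfold dom; rw [← hh]; linarith
  have hcr : ∀ X Y : E3, ‖X‖ ≤ 2 → ‖Y‖ ≤ h ^ 2 * dom u ψ p →
      ‖(‖u p.1 - u p.2‖ ^ 2)⁻¹ • cr X Y‖ ≤ 2 * dom u ψ p / ℓ ^ 3 := by
    intro X Y hX hY
    refine le_trans ?_ hMle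
    rw [norm_smul, Real.norm_of_nonneg (by positivity), inv_mul_le_iff₀ (by positivity), hM]
    calc _ ≤ 2 * (h ^ 2 * dom u ψ p) :=
          (norm_cr_le _ _).trans (mul_le_mul hX hY (norm_nonneg _) (by norm_num))
      _ = ℓ ^ 2 * h ^ 2 * (2 * dom u ψ p / ℓ ^ 2) := by field_simp
      _ ≤ _ := mul_le_mul_of_nonneg_right hsq (by positivity)
  refine ⟨abs_rpow_mul_inner_le hq hq4 hM1 hz (hcr _ _ (hu.speed _) (hQ.trans (by gcongr))),
    abs_rpow_mul_inner_le hq hq4 hM1 hz (hcr _ _ ((hψd _).trans (by norm_num))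
      (hR.trans (by gcongr))), abs_rpow_mul_inner_le hq hq4 hM1 hz ?_⟩
  have e : (⟪u p.1 - u p.2, ψ p.1 - ψ p.2⟫ / ‖u p.1 - u p.2‖ ^ 4) •
      cr (deriv u p.2) (u p.1 - u p.2) =
      (⟪u p.1 - u p.2, ψ p.1 - ψ p.2⟫ / ‖u p.1 - u p.2‖ ^ 2) • tpZ u p := by
    unfold tpZ
    rw [smul_smul]; congr 1; field_simp
  rw [e, norm_smul, norm_div, norm_pow, norm_norm, Real.norm_eq_abs]
  have h1 : |⟪u p.1 - u p.2, ψ p.1 - ψ p.2⟫| / ‖u p.1 - u p.2‖ ^ 2 ≤ 1 / ℓ := by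
    rw [div_le_div_iff₀ (by positivity) hℓ, one_mul]
    have hψn : ‖ψ p.1 - ψ p.2‖ ≤ 1 * |h| := hψ.norm_diff_le_wrap hψd p
    calc _ ≤ ‖u p.1 - u p.2‖ * (1 * |h|) * ℓ := by
          gcongr
          exact (abs_real_inner_le_norm _ _).trans (by gcongr)
      _ = ‖u p.1 - u p.2‖ * (ℓ * |h|) := by ring
      _ ≤ ‖u p.1 - u p.2‖ * ‖u p.1 - u p.2‖ := by gcongr
      _ = _ := by ring
  calc _ ≤ 1 / ℓ * M := by gcongr
    _ = _ := by rw [hM]; field_simp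

lemma tpI_add_le (hu : Tame u Λ ℓ) (hℓ : 0 < ℓ) (hℓ1 : ℓ ≤ 1) (hq : 2 < q) (hq4 : q ≤ 4)
    (hψ : C2Per ψ) (hψ1 : bend ψ ≤ 1) (hN : 0 ≤ N) (hNℓ : N ≤ ℓ / 2) (p : ℝ × ℝ) :
    tpI q (fun t => u t + N • ψ t) p ≤ tpI q u p + N * (q * dI q u ψ p) +
      10 ^ 8 / ℓ ^ 12 * N ^ 2 * dom u ψ p ^ 4 := by
  have hdom := one_le_dom u ψ p
  obtain ⟨hR, hQ⟩ := remainder_le_dom hu.per hψ p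
  have hψd := hψ.norm_deriv_le_one hψ1
  have hT := hu.speed p.2
  have hS := hψd p.2
  have hN1 : N ≤ 1 := by linarith
  rw [tpI_eq, tpI_eq, dI_eq _ _ _ hq]
  have eder : deriv (fun t => u t + N • ψ t) p.2 = deriv u p.2 + N • deriv ψ p.2 := by
    rw [hu.per.deriv_add (hψ.smul N), hψ.deriv_smul]
  set h := wrap (p.1 - p.2) with hh
  set T := deriv u p.2 with hTdef
  set S := deriv ψ p.2 with hSdef
  rcases eq_or_ne h 0 with h0 | h0
  · have e1 : u p.1 - u p.2 = 0 := diff_eq_zero hu.per h0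
    have e2 : ψ p.1 - ψ p.2 = 0 := diff_eq_zero hψ h0
    have e3 : tpZ (fun t => u t + N • ψ t) p = 0 := by
      unfold tpZ
      have : u p.1 + N • ψ p.1 - (u p.2 + N • ψ p.2) = 0 := by
        rw [show u p.1 + N • ψ p.1 - (u p.2 + N • ψ p.2) =
          (u p.1 - u p.2) + N • (ψ p.1 - ψ p.2) by module, e1, e2]; simp
      simp [this]
    have e4 : tpZ u p = 0 := by unfold tpZ; simp [e1]
    rw [e3, e4]
    simp only [norm_zero, inner_zero_left, mul_zero, add_zero]
    have : 0 ≤ 10 ^ 8 / ℓ ^ 12 * N ^ 2 * dom u ψ p ^ 4 := by positivity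
    linarith
  have habs : 0 < |h| := abs_pos.2 h0
  have hsep := hu.sep p.1 p.2
  rw [← hh] at hsep
  have hμ : curvAvg u p.2 h ≤ dom u ψ p := by
    have := curvAvg_nonneg ψ p.2 h
    unfold dom; rw [← hh]; linarith
  have hm : curvAvg ψ p.2 h ≤ dom u ψ p := by
    have := curvAvg_nonneg u p.2 h
    unfold dom; rw [← hh]; linarith
  have hμm : curvAvg u p.2 h + 2 * curvAvg ψ p.2 h ≤ 2 * dom u ψ p := by
    have := curvAvg_nonneg u p.2 h
    unfold dom; rw [← hh]; linarith
  have hΔψ : ‖ψ p.1 - ψ p.2‖ ≤ 1 * |h| := hψ.norm_diff_le_wrap hψd p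
  have hΔu : ‖u p.1 - u p.2‖ ≤ 2 * |h| := hu.per.norm_diff_le_wrap hu.speed p
  set R := u p.1 - u p.2 - h • T with hRdef
  set Q := ψ p.1 - ψ p.2 - h • S with hQdef
  have hβ : ‖N • (ψ p.1 - ψ p.2)‖ ≤ |h| * N := by
    rw [norm_smul, Real.norm_of_nonneg hN, mul_comm]; nlinarith
  have key := norm_quotient_rpow_le_of_scale (b := u p.1 - u p.2) (β := N • (ψ p.1 - ψ p.2))
    (w₀ := cr T (u p.1 - u p.2)) (d₁ := N • (cr S R + cr T Q)) (d₂ := N ^ 2 • cr S Q)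
    (N := N) (s := dom u ψ p) (h := h) hq hq4 h0 hℓ hℓ1 hN hN1 hdom
    (by
      rw [cr_diff_eq u p h]
      refine (norm_cr_le _ _).trans ?_
      calc ‖T‖ * ‖R‖ ≤ 2 * (h ^ 2 * dom u ψ p) :=
            mul_le_mul hT (hR.trans (by gcongr)) (norm_nonneg _) (by norm_num)
        _ = _ := by ring)
    (by
      rw [norm_smul, Real.norm_of_nonneg hN]
      calc N * ‖cr S R + cr T Q‖ ≤ N * (1 * (h ^ 2 * curvAvg u p.2 h) +
            2 * (h ^ 2 * curvAvg ψ p.2 h)) := by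
            gcongr
            refine (norm_add_le _ _).trans (add_le_add ?_ ?_)
            · exact (norm_cr_le _ _).trans (mul_le_mul hS hR (norm_nonneg _) (by norm_num))
            · exact (norm_cr_le _ _).trans (mul_le_mul hT hQ (norm_nonneg _) (by norm_num))
        _ = h ^ 2 * N * (curvAvg u p.2 h + 2 * curvAvg ψ p.2 h) := by ring
        _ ≤ h ^ 2 * N * (2 * dom u ψ p) := by gcongr
        _ = _ := by ring)
    (by
      rw [norm_smul, Real.norm_of_nonneg (by positivity)]
      calc N ^ 2 * ‖cr S Q‖ ≤ N ^ 2 * (1 * (h ^ 2 * dom u ψ p)) := by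
            gcongr
            exact (norm_cr_le _ _).trans
              (mul_le_mul hS (hQ.trans (by gcongr)) (norm_nonneg _) (by norm_num))
        _ = _ := by ring)
    (by linarith) (by linarith) hβ
    (by
      have h1 : ‖u p.1 - u p.2‖ ≤ ‖u p.1 - u p.2 + N • (ψ p.1 - ψ p.2)‖ +
          ‖N • (ψ p.1 - ψ p.2)‖ := by
        refine (le_of_eq ?_).trans (norm_sub_le _ _)
        congr 1; abel
      nlinarith)
  have eZ : tpZ (fun t => u t + N • ψ t) p =
      (‖u p.1 - u p.2 + N • (ψ p.1 - ψ p.2)‖ ^ 2)⁻¹ •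
        (cr T (u p.1 - u p.2) + N • (cr S R + cr T Q) + N ^ 2 • cr S Q) := by
    unfold tpZ
    rw [eder]
    have e1 : u p.1 + N • ψ p.1 - (u p.2 + N • ψ p.2) =
        u p.1 - u p.2 + N • (ψ p.1 - ψ p.2) := by module
    simp only [e1]
    congr 1
    have e2 : u p.1 - u p.2 = R + h • T := by rw [hRdef]; abel
    have e3 : ψ p.1 - ψ p.2 = Q + h • S := by rw [hQdef]; abel
    have e4 : ∀ a b : E3, cr a b = -cr b a := by
      intro a b; ext i; fin_cases i <;> simp [cr] <;> ring
    rw [e2, e3]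
    simp only [cr_add_left, cr_add_right, cr_smul_left, cr_smul_right, cr_self, e4 T S]
    module
  rw [eZ]
  refine key.trans (le_of_eq ?_)
  have e5 : (‖u p.1 - u p.2‖ ^ 2)⁻¹ • N • (cr S R + cr T Q) -
      (2 * ⟪u p.1 - u p.2, N • (ψ p.1 - ψ p.2)⟫ / ‖u p.1 - u p.2‖ ^ 4) • cr T (u p.1 - u p.2) =
      N • ((‖u p.1 - u p.2‖ ^ 2)⁻¹ • (cr S R + cr T Q) -
        (2 * ⟪u p.1 - u p.2, ψ p.1 - ψ p.2⟫ / ‖u p.1 - u p.2‖ ^ 4) • cr T (u p.1 - u p.2)) := by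
    rw [real_inner_smul_right]; module
  rw [e5, real_inner_smul_right]
  unfold tpZ
  ring

lemma integrableOn_integrands (hu : Tame u Λ ℓ) (hℓ : 0 < ℓ) (hℓ1 : ℓ ≤ 1) (hq : 2 < q)
    (hq4 : q ≤ 4) (hψ : C2Per ψ) (hψ1 : bend ψ ≤ 1) :
    IntegrableOn (Mintegrand q u u ψ) unitSq ∧ IntegrableOn (Mintegrand q u ψ u) unitSq ∧
      IntegrableOn (Aintegrand q u u ψ) unitSq := by
  have hd := (integrableOn_dom hu.per hu.bend_le hψ hψ1).const_mul (16 / ℓ ^ 9)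
  have hb := hu.integrand_bounds hℓ hℓ1 hq hq4 hψ hψ1
  exact ⟨hd.mono' (measurable_Mintegrand hu.per hu.per hψ).aestronglyMeasurable
      (Filter.Eventually.of_forall fun p => (hb p).1),
    hd.mono' (measurable_Mintegrand hu.per hψ hu.per).aestronglyMeasurable
      (Filter.Eventually.of_forall fun p => (hb p).2.1),
    hd.mono' (measurable_Aintegrand hu.per hu.per hψ).aestronglyMeasurable
      (Filter.Eventually.of_forall fun p => (hb p).2.2)⟩

lemma integral_dI (hu : Tame u Λ ℓ) (hℓ : 0 < ℓ) (hℓ1 : ℓ ≤ 1) (hq : 2 < q)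
    (hq4 : q ≤ 4) (hψ : C2Per ψ) (hψ1 : bend ψ ≤ 1) :
    IntegrableOn (dI q u ψ) unitSq ∧ ∫ p in unitSq, dI q u ψ p = deltaTP q u ψ := by
  obtain ⟨h1, h2, h3⟩ := hu.integrableOn_integrands hℓ hℓ1 hq hq4 hψ hψ1
  have h12 := h1.add h2
  have h3' := h3.const_mul 2
  refine ⟨h12.sub h3', ?_⟩
  unfold dI deltaTP Mfun Afun
  rw [← integral_const_mul, ← integral_add h1 h2]
  exact integral_sub h12 h3'

lemma abs_deltaTP_le (hu : Tame u Λ ℓ) (hℓ : 0 < ℓ) (hℓ1 : ℓ ≤ 1) (hq : 2 < q)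
    (hq4 : q ≤ 4) (hψ : C2Per ψ) (hψ1 : bend ψ ≤ 1) :
    |deltaTP q u ψ| ≤ 64 / ℓ ^ 9 * (27 * (1 + 144 * Λ ^ 2 + 144)) := by
  rw [← (hu.integral_dI hℓ hℓ1 hq hq4 hψ hψ1).2]
  have hd := (integrableOn_dom hu.per hu.bend_le hψ hψ1).const_mul (64 / ℓ ^ 9)
  rw [← Real.norm_eq_abs]
  refine (norm_integral_le_of_norm_le (g := fun p => 64 / ℓ ^ 9 * dom u ψ p ^ 4) hd
    (Filter.Eventually.of_forall fun p => ?_)).trans ?_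
  · obtain ⟨h1, h2, h3⟩ := hu.integrand_bounds hℓ hℓ1 hq hq4 hψ hψ1 p
    rw [Real.norm_eq_abs, dI]
    rw [abs_le] at *
    have : 64 / ℓ ^ 9 * dom u ψ p ^ 4 = 4 * (16 / ℓ ^ 9 * dom u ψ p ^ 4) := by ring
    rw [this]
    constructor <;> linarith [h1.1, h1.2, h2.1, h2.2, h3.1, h3.2]
  · rw [integral_const_mul]
    exact mul_le_mul_of_nonneg_left (integral_dom_le hu.per hu.bend_le hψ hψ1) (by positivity)

lemma _root_.TPr_eq_of_integrable {u : ℝ → E3} {q : ℝ} (hq : 2 < q)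
    (h : IntegrableOn (tpI q u) unitSq) :
    TPe q u ≠ ⊤ ∧ TPr q u = 1 / q * ∫ p in unitSq, tpI q u p := by
  have e : TPe q u = ENNReal.ofReal (1 / q * ∫ p in unitSq, tpI q u p) := by
    rw [ENNReal.ofReal_mul (by positivity), ofReal_integral_eq_lintegral_ofReal h
      (Filter.Eventually.of_forall fun p => tpI_nonneg u p)]
    rfl
  rw [TPr, e]
  refine ⟨ENNReal.ofReal_ne_top, ENNReal.toReal_ofReal ?_⟩
  have : 0 ≤ ∫ p in unitSq, tpI q u p := integral_nonneg fun p => tpI_nonneg u p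
  positivity

lemma integrableOn_tpI (hu : Tame u Λ ℓ) (hℓ : 0 < ℓ) (hℓ1 : ℓ ≤ 1) (hq : 2 < q)
    (hq4 : q ≤ 4) : IntegrableOn (tpI q u) unitSq := by
  have h0 : C2Per (fun _ : ℝ => (0 : E3)) := ⟨contDiff_const, fun x => rfl⟩
  have hb0 : bend (fun _ : ℝ => (0 : E3)) ≤ 1 := by simp [bend]
  have hd := (integrableOn_dom hu.per hu.bend_le h0 hb0).const_mul ((2 / ℓ ^ 2) ^ 4)
  refine hd.mono' hu.per.measurable_tpI.aestronglyMeasurable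
    (Filter.Eventually.of_forall fun p => ?_)
  rw [Real.norm_of_nonneg (tpI_nonneg _ _), tpI_eq]
  have hz := hu.norm_tpZ_le hℓ (fun _ => 0) p
  have hdom := one_le_dom u (fun _ => 0) p
  have hM1 : 1 ≤ 2 * dom u (fun _ => 0) p / ℓ ^ 2 := by
    have hℓ2 : ℓ ^ 2 ≤ 1 := pow_le_one₀ hℓ.le hℓ1
    rw [le_div_iff₀ (by positivity)]; linarith
  calc ‖tpZ u p‖ ^ q ≤ (2 * dom u (fun _ => 0) p / ℓ ^ 2) ^ q :=
        Real.rpow_le_rpow (norm_nonneg _) hz (by linarith)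
    _ ≤ (2 * dom u (fun _ => 0) p / ℓ ^ 2) ^ (4 : ℝ) := Real.rpow_le_rpow_of_exponent_le hM1 hq4
    _ = (2 * dom u (fun _ => 0) p / ℓ ^ 2) ^ 4 := by norm_cast
    _ = _ := by ring

/-- Second-order upper Taylor expansion of the tangent-point functional. -/
lemma TPr_add_le (hu : Tame u Λ ℓ) (hℓ : 0 < ℓ) (hℓ1 : ℓ ≤ 1) (hq : 2 < q) (hq4 : q ≤ 4)
    (hψ : C2Per ψ) (hψ1 : bend ψ ≤ 1) (hN : 0 ≤ N) (hNℓ : N ≤ ℓ / 2) :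
    TPe q (fun t => u t + N • ψ t) ≠ ⊤ ∧ TPr q (fun t => u t + N • ψ t) ≤ TPr q u + N * deltaTP q u ψ +
      10 ^ 8 / ℓ ^ 12 * (27 * (1 + 144 * Λ ^ 2 + 144)) * N ^ 2 := by
  have hpw := hu.tpI_add_le hℓ hℓ1 hq hq4 hψ hψ1 hN hNℓ
  have i1 := hu.integrableOn_tpI hℓ hℓ1 hq hq4
  obtain ⟨i2, e2⟩ := hu.integral_dI hℓ hℓ1 hq hq4 hψ hψ1
  have i3 := integrableOn_dom hu.per hu.bend_le hψ hψ1
  have i2' := (i2.const_mul q).const_mul N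
  have i3' := i3.const_mul (10 ^ 8 / ℓ ^ 12 * N ^ 2)
  have i12 := i1.add i2'
  have i123 := i12.add i3'
  have i4 : IntegrableOn (tpI q fun t => u t + N • ψ t) unitSq := by
    refine i123.mono' (hu.per.add (hψ.smul N)).measurable_tpI.aestronglyMeasurable
      (Filter.Eventually.of_forall fun p => ?_)
    rw [Real.norm_of_nonneg (tpI_nonneg _ _)]
    exact hpw p
  refine ⟨(TPr_eq_of_integrable hq i4).1, ?_⟩
  rw [(TPr_eq_of_integrable hq i4).2, (TPr_eq_of_integrable hq i1).2, ← e2]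
  have h_int := integral_mono i4 i123 hpw
  have esum : ∫ p in unitSq, (tpI q u p + N * (q * dI q u ψ p) +
      10 ^ 8 / ℓ ^ 12 * N ^ 2 * dom u ψ p ^ 4) =
      (∫ p in unitSq, tpI q u p) + N * (q * ∫ p in unitSq, dI q u ψ p) +
        10 ^ 8 / ℓ ^ 12 * N ^ 2 * ∫ p in unitSq, dom u ψ p ^ 4 := by
    rw [integral_add (f := fun p => tpI q u p + N * (q * dI q u ψ p)) i12 i3',
      integral_add i1 i2', integral_const_mul, integral_const_mul, integral_const_mul]
  have hdomle := integral_dom_le hu.per hu.bend_le hψ hψ1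
  have h6 : 10 ^ 8 / ℓ ^ 12 * N ^ 2 * ∫ p in unitSq, dom u ψ p ^ 4 ≤
      10 ^ 8 / ℓ ^ 12 * N ^ 2 * (27 * (1 + 144 * Λ ^ 2 + 144)) :=
    mul_le_mul_of_nonneg_left hdomle (by positivity)
  have h7 := h_int.trans (esum.le.trans (add_le_add_right h6 _))
  have hq0 : 0 < 1 / q := by positivity
  have h8 := mul_le_mul_of_nonneg_left h7 hq0.le
  refine h8.trans ?_
  have h9 : 0 ≤ 10 ^ 8 / ℓ ^ 12 * N ^ 2 * (27 * (1 + 144 * Λ ^ 2 + 144)) := by positivity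
  have h10 : 1 / q * (10 ^ 8 / ℓ ^ 12 * N ^ 2 * (27 * (1 + 144 * Λ ^ 2 + 144))) ≤
      1 * (10 ^ 8 / ℓ ^ 12 * N ^ 2 * (27 * (1 + 144 * Λ ^ 2 + 144))) := by
    refine mul_le_mul_of_nonneg_right ?_ h9
    rw [div_le_one (by linarith)]; linarith
  have h11 : 1 / q * (N * (q * ∫ p in unitSq, dI q u ψ p)) = N * ∫ p in unitSq, dI q u ψ p := by
    field_simp
  rw [mul_add, mul_add, h11]
  linarith

end Tame
end TaylorRemainder

section Geometry

/-- The integral of `‖u''‖` over a short interval is controlled by the bending energy. -/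
lemma C2Per.abs_integral_deriv2_le {u : ℝ → E3} (hu : C2Per u) (y : ℝ) {h : ℝ} (hh : |h| ≤ 1) :
    |∫ t in y..(y + h), ‖deriv (deriv u) t‖| ≤ √(|h| * bend u) := by
  refine Real.abs_le_sqrt ?_
  rcases le_total 0 h with h0 | h0
  · rw [abs_of_nonneg h0] at hh ⊢
    have := hu.sq_integral_norm_deriv2_le (a := y) (b := y + h) (by linarith) (by linarith)
    rwa [add_sub_cancel_left] at this
  · rw [abs_of_nonpos h0] at hh ⊢
    rw [intervalIntegral.integral_symm, neg_sq]
    have := hu.sq_integral_norm_deriv2_le (a := y + h) (b := y) (by linarith) (by linarith)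
    rwa [sub_add_cancel_left] at this

/-- Regular periodic curves with speed in `[1, 2]` and bending energy at most `Λ`. -/
structure Bent (u : ℝ → E3) (Λ : ℝ) : Prop where
  per : C2Per u
  one_le : ∀ x, 1 ≤ ‖deriv u x‖
  speed : ∀ x, ‖deriv u x‖ ≤ 2
  bend_le : bend u ≤ Λ

/-- Scale below which a curve of bending energy at most `Λ` is bi-Lipschitz. -/
def locScale (Λ : ℝ) : ℝ := 1 / (4 * (Λ + 1))

namespace Bent

variable {u : ℝ → E3} {Λ : ℝ}

lemma nonneg (hu : Bent u Λ) : 0 ≤ Λ := (bend_nonneg u).trans hu.bend_le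

lemma _root_.locScale_spec (hΛ : 0 ≤ Λ) :
    0 < locScale Λ ∧ locScale Λ ≤ 1 / 4 ∧ locScale Λ * Λ ≤ 1 / 4 := by
  unfold locScale
  refine ⟨by positivity, ?_, ?_⟩
  · rw [div_le_div_iff₀ (by positivity) (by norm_num)]; linarith
  · rw [div_mul_eq_mul_div, div_le_div_iff₀ (by positivity) (by norm_num)]; linarith

lemma norm_taylor_le (hu : Bent u Λ) (y : ℝ) {h : ℝ} (hh : |h| ≤ 1) :
    ‖u (y + h) - u y - h • deriv u y‖ ≤ |h| * √(|h| * Λ) := by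
  refine (hu.per.norm_remainder_le y h).trans ?_
  refine mul_le_mul_of_nonneg_left ((hu.per.abs_integral_deriv2_le y hh).trans ?_) (abs_nonneg _)
  exact Real.sqrt_le_sqrt (mul_le_mul_of_nonneg_left hu.bend_le (abs_nonneg _))

lemma mul_one_sub_le (hu : Bent u Λ) {x y : ℝ} (h : |x - y| ≤ 1) :
    |x - y| * (1 - √(|x - y| * Λ)) ≤ ‖u x - u y‖ := by
  have h1 := hu.norm_taylor_le y h
  rw [show y + (x - y) = x by ring] at h1
  have h2 : ‖(x - y) • deriv u y‖ ≤ ‖u x - u y‖ + ‖u x - u y - (x - y) • deriv u y‖ := by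
    refine (le_of_eq ?_).trans (norm_sub_le _ _)
    congr 1; abel
  rw [norm_smul, Real.norm_eq_abs] at h2
  nlinarith [hu.one_le y, abs_nonneg (x - y)]

lemma half_le (hu : Bent u Λ) {x y : ℝ} (h : |x - y| ≤ locScale Λ) :
    |x - y| / 2 ≤ ‖u x - u y‖ := by
  obtain ⟨_, h2, h3⟩ := locScale_spec hu.nonneg
  refine le_trans ?_ (hu.mul_one_sub_le (by linarith))
  have : √(|x - y| * Λ) ≤ 1 / 2 := by
    rw [Real.sqrt_le_left (by norm_num)]
    nlinarith [hu.nonneg, mul_le_mul_of_nonneg_right h hu.nonneg]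
  nlinarith [abs_nonneg (x - y)]

lemma chord_le (hu : Bent u Λ) (x y : ℝ) : ‖u x - u y‖ ≤ 2 * |x - y| :=
  hu.per.norm_sub_le hu.speed x y

/-- Lower bound for the tangent-point kernel near a pair of points whose connecting chord is
orthogonal to the curve. -/
lemma le_norm_tpZ (hu : Bent u Λ) {x₀ y₀ x y h : ℝ} (hh : ‖u x₀ - u y₀‖ = h) (hpos : 0 < h)
    (hle : h ≤ 1) (hΛ : h * Λ ≤ 2) (horth : ⟪deriv u y₀, u x₀ - u y₀⟫ = 0)
    (hx : |x - x₀| ≤ h / 32) (hy : |y - y₀| ≤ h / 32) : (4 * h)⁻¹ ≤ ‖tpZ u (x, y)‖ := by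
  set d := u x₀ - u y₀ with hd
  have he : ‖u x - u y - d‖ ≤ h / 8 := by
    have h1 := hu.chord_le x x₀
    have h2 := hu.chord_le y y₀
    calc ‖u x - u y - d‖ = ‖(u x - u x₀) - (u y - u y₀)‖ := by rw [hd]; congr 1; abel
      _ ≤ _ := norm_sub_le _ _
      _ ≤ h / 8 := by linarith
  have hf : ‖deriv u y - deriv u y₀‖ ≤ 1 / 4 := by
    refine (hu.per.norm_deriv_sub_le_sqrt (by linarith)).trans ?_
    rw [Real.sqrt_le_left (by norm_num)]
    calc |y - y₀| * bend u ≤ h / 32 * Λ :=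
          mul_le_mul hy hu.bend_le (bend_nonneg u) (by linarith)
      _ ≤ _ := by linarith
  have hD : ‖u x - u y‖ ≤ 9 / 8 * h := by
    calc ‖u x - u y‖ = ‖d + (u x - u y - d)‖ := by congr 1; abel
      _ ≤ _ := norm_add_le _ _
      _ ≤ _ := by rw [hh]; linarith
  have hD0 : 7 / 8 * h ≤ ‖u x - u y‖ := by
    have : ‖d‖ ≤ ‖u x - u y‖ + ‖u x - u y - d‖ := by
      refine (le_of_eq ?_).trans (norm_sub_le _ _)
      congr 1; abel
    rw [hh] at this; linarith
  have hc0 : h ≤ ‖cr (deriv u y₀) d‖ := by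
    have h1 : ‖cr (deriv u y₀) d‖ ^ 2 = ‖deriv u y₀‖ ^ 2 * h ^ 2 := by
      rw [norm_cr_sq, wedgeSq, horth, hh]; ring
    have h2 : h ^ 2 ≤ ‖cr (deriv u y₀) d‖ ^ 2 := by
      rw [h1]
      have := one_le_pow₀ (hu.one_le y₀) (n := 2)
      nlinarith [sq_nonneg h]
    exact le_of_sq_le_sq h2 (norm_nonneg _)
  have hc : h / 2 ≤ ‖cr (deriv u y) (u x - u y)‖ := by
    have e : cr (deriv u y₀) d = cr (deriv u y) (u x - u y) -
        cr (deriv u y) (u x - u y - d) - cr (deriv u y - deriv u y₀) d := by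
      simp only [cr_sub_right, cr_sub_left]; abel
    have h1 : ‖cr (deriv u y₀) d‖ ≤ ‖cr (deriv u y) (u x - u y)‖ +
        ‖cr (deriv u y) (u x - u y - d)‖ + ‖cr (deriv u y - deriv u y₀) d‖ := by
      rw [e]
      exact (norm_sub_le _ _).trans (by gcongr; exact norm_sub_le _ _)
    have h2 : ‖cr (deriv u y) (u x - u y - d)‖ ≤ 2 * (h / 8) :=
      (norm_cr_le _ _).trans (mul_le_mul (hu.speed y) he (norm_nonneg _) (by norm_num))
    have h3 : ‖cr (deriv u y - deriv u y₀) d‖ ≤ 1 / 4 * h :=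
      (norm_cr_le _ _).trans (mul_le_mul hf hh.le (norm_nonneg _) (by norm_num))
    linarith
  unfold tpZ
  rw [norm_smul, Real.norm_of_nonneg (by positivity)]
  have hDp : 0 < ‖u x - u y‖ := by linarith
  rw [inv_mul_eq_div, le_div_iff₀ (by positivity), inv_mul_le_iff₀ (by positivity)]
  have : ‖u x - u y‖ ^ 2 ≤ (9 / 8 * h) ^ 2 := pow_le_pow_left₀ hDp.le hD 2
  nlinarith

/-- A chord orthogonal to the curve at one of its ends forces tangent-point energy. -/
lemma le_TPr (hu : Bent u Λ) {q : ℝ} (hq : 2 < q) (hfin : TPe q u ≠ ⊤) {x₀ y₀ h : ℝ}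
    (hh : ‖u x₀ - u y₀‖ = h) (hpos : 0 < h)
    (hle : h ≤ 1) (hΛ : h * Λ ≤ 2) (horth : ⟪deriv u y₀, u x₀ - u y₀⟫ = 0) :
    1 / q * ((4 * h)⁻¹ ^ q * (h / 32) ^ 2) ≤ TPr q u := by
  set r := h / 32 with hr
  have hr0 : 0 < r := by positivity
  have hr1 : r ≤ 1 := by linarith
  have hper := hu.per.periodic
  have hper' := hu.per.periodic_deriv
  rw [TPr, ← ENNReal.ofReal_le_iff_le_toReal hfin]
  have hTP : TPe q u = ENNReal.ofReal (1 / q) * ∫⁻ p in unitSq, ENNReal.ofReal (tpI q u p) := rfl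
  rw [hTP, ENNReal.ofReal_mul (by positivity)]
  gcongr
  rw [lintegral_unitSq hu.per.measurable_tpI.ennreal_ofReal
    (fun x y => by simp only [tpI, hper x]) (fun x y => by simp only [tpI, hper y, hper' y])
    y₀ (x₀ - y₀ - r)]
  calc ENNReal.ofReal ((4 * h)⁻¹ ^ q * r ^ 2) = ∫⁻ y in Ioc y₀ (y₀ + r),
        ∫⁻ k in Ioc (x₀ - y₀ - r) (x₀ - y₀), ENNReal.ofReal ((4 * h)⁻¹ ^ q) := by
        simp only [lintegral_const, Measure.restrict_apply, MeasurableSet.univ, univ_inter,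
          Real.volume_Ioc, add_sub_cancel_left, sub_sub_cancel]
        rw [← ENNReal.ofReal_mul (by positivity), ← ENNReal.ofReal_mul (by positivity)]
        congr 1; ring
    _ ≤ ∫⁻ y in Ioc y₀ (y₀ + r), ∫⁻ k in Ioc (x₀ - y₀ - r) (x₀ - y₀),
        ENNReal.ofReal (tpI q u (y + k, y)) := by
        refine setLIntegral_mono' measurableSet_Ioc fun y hy => ?_
        refine setLIntegral_mono' measurableSet_Ioc fun k hk => ?_
        refine ENNReal.ofReal_le_ofReal ?_
        rw [tpI_eq]
        refine Real.rpow_le_rpow (by positivity) ?_ (by linarith)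
        refine hu.le_norm_tpZ hh hpos hle hΛ horth ?_ ?_
        · rw [abs_le]; constructor <;> linarith [hy.1, hy.2, hk.1, hk.2]
        · rw [abs_le]; constructor <;> linarith [hy.1, hy.2]
    _ ≤ ∫⁻ y in Ioc y₀ (y₀ + r), ∫⁻ k in Ioc (x₀ - y₀ - r) (x₀ - y₀ - r + 1),
        ENNReal.ofReal (tpI q u (y + k, y)) := by
        refine lintegral_mono fun y => ?_
        exact lintegral_mono_set (Ioc_subset_Ioc_right (by linarith))
    _ ≤ _ := lintegral_mono_set (Ioc_subset_Ioc_right (by linarith))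

end Bent

lemma exists_chord_scale {q : ℝ} (hq : 2 < q) (B Λ : ℝ) (hΛ : 0 ≤ Λ) :
    ∃ h₁ : ℝ, 0 < h₁ ∧ h₁ ≤ 1 ∧ h₁ * Λ ≤ 2 ∧
      ∀ h, 0 < h → h < h₁ → B < 1 / q * ((4 * h)⁻¹ ^ q * (h / 32) ^ 2) := by
  have h1 : Tendsto (fun h : ℝ => 1 / q * (4⁻¹ ^ q * (32⁻¹ ^ 2)) * h ^ (-(q - 2))) (𝓝[>] 0)
      atTop := (tendsto_rpow_neg_nhdsGT_zero (by linarith)).const_mul_atTop (by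
      have : (0 : ℝ) < 4⁻¹ ^ q := by positivity
      have : 0 < q := by linarith
      positivity)
  have h2 := h1.eventually (eventually_gt_atTop B)
  rw [eventually_nhdsWithin_iff, Metric.eventually_nhds_iff] at h2
  obtain ⟨ε, hε, hε'⟩ := h2
  refine ⟨min ε (min 1 (2 / (Λ + 1))), by positivity, (min_le_right _ _).trans (min_le_left _ _),
    ?_, fun h h0 hlt => ?_⟩
  · have : min ε (min 1 (2 / (Λ + 1))) ≤ 2 / (Λ + 1) :=
      (min_le_right _ _).trans (min_le_right _ _)
    calc _ ≤ 2 / (Λ + 1) * (Λ + 1) := by gcongr; linarith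
      _ = 2 := by field_simp
  · have := hε' (y := h) (by
      rw [Real.dist_eq, sub_zero, abs_of_pos h0]; exact hlt.trans_le (min_le_left _ _)) h0
    refine this.trans_le (le_of_eq ?_)
    rw [mul_inv, Real.mul_rpow (by positivity) (by positivity), Real.inv_rpow h0.le,
      Real.rpow_neg h0.le, Real.rpow_sub h0, Real.rpow_two]
    have : 0 < h ^ q := Real.rpow_pos_of_pos h0 _
    field_simp

namespace Bent

variable {u : ℝ → E3} {Λ : ℝ}

lemma chord_dichotomy (hu : Bent u Λ) {q B h₁ : ℝ} (hq : 2 < q) (hfin : TPe q u ≠ ⊤)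
    (hB : TPr q u ≤ B) (hh : h₁ ≤ 1) (hΛ : h₁ * Λ ≤ 2)
    (hs : ∀ h, 0 < h → h < h₁ → B < 1 / q * ((4 * h)⁻¹ ^ q * (h / 32) ^ 2)) {x₀ y₀ : ℝ}
    (horth : ⟪deriv u y₀, u x₀ - u y₀⟫ = 0) : u x₀ = u y₀ ∨ h₁ ≤ ‖u x₀ - u y₀‖ := by
  by_contra! hc
  obtain ⟨hne, hlt⟩ := hc
  have hpos : 0 < ‖u x₀ - u y₀‖ := norm_pos_iff.2 (sub_ne_zero.2 hne)
  have h1 := hu.le_TPr hq hfin rfl hpos (hlt.le.trans hh)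
    ((mul_le_mul_of_nonneg_right hlt.le hu.nonneg).trans hΛ) horth
  linarith [hs _ hpos hlt]

end Bent

lemma inner_deriv_eq_zero_of_isLocalMin {u : ℝ → E3} (hu : C2Per u) (c : E3) {y₀ : ℝ}
    (hmin : IsLocalMin (fun y => ‖c - u y‖) y₀) : ⟪deriv u y₀, c - u y₀⟫ = 0 := by
  have h1 : IsLocalMin (fun y => ‖c - u y‖ ^ 2) y₀ := by
    filter_upwards [hmin] with y hy
    exact pow_le_pow_left₀ (norm_nonneg _) hy 2
  have h2 : HasDerivAt (fun y => ‖c - u y‖ ^ 2) (2 * ⟪c - u y₀, -deriv u y₀⟫) y₀ :=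
    ((hu.hasDerivAt y₀).const_sub c).norm_sq
  have h3 := h1.hasDerivAt_eq_zero h2
  rw [inner_neg_right, real_inner_comm] at h3
  linarith

/-- The lower bi-Lipschitz constant obtained from the orthogonal-chord bound. -/
def bilConst (Λ h₁ : ℝ) : ℝ := min (1 / 2) (min (locScale Λ / 2) h₁)

lemma bilConst_pos {Λ h₁ : ℝ} (hΛ : 0 ≤ Λ) (h : 0 < h₁) : 0 < bilConst Λ h₁ := by
  have := (locScale_spec hΛ).1
  unfold bilConst; positivity

namespace Bent

variable {u : ℝ → E3} {Λ : ℝ}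

/-- Quantitative embeddedness: a curve without self-intersections is uniformly bi-Lipschitz. -/
lemma tame (hu : Bent u Λ) {q B h₁ : ℝ} (hq : 2 < q) (hfin : TPe q u ≠ ⊤)
    (hB : TPr q u ≤ B) (hh : h₁ ≤ 1) (hΛ : h₁ * Λ ≤ 2)
    (hs : ∀ h, 0 < h → h < h₁ → B < 1 / q * ((4 * h)⁻¹ ^ q * (h / 32) ^ 2))
    (hinj : ∀ y, ∀ s ∈ Icc (locScale Λ) (1 - locScale Λ), u (y + s) ≠ u y) :
    Tame u Λ (bilConst Λ h₁) := by
  refine ⟨hu.per, hu.speed, hu.bend_le, ?_⟩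
  obtain ⟨d1, d2, d3⟩ := locScale_spec hu.nonneg
  set δ := locScale Λ with hδ
  obtain ⟨⟨y₀, s₀⟩, ⟨hy₀, hs₀ : s₀ ∈ Icc δ (1 - δ)⟩, hmin⟩ := (isCompact_Icc.prod isCompact_Icc).exists_isMinOn
    (s := Icc (0 : ℝ) 1 ×ˢ Icc δ (1 - δ)) ⟨(0, δ), ⟨by simp, by simp; linarith⟩⟩
    (f := fun p : ℝ × ℝ => ‖u (p.1 + p.2) - u p.1‖) (by
      have := hu.per.continuous
      exact Continuous.continuousOn (by fun_prop))
  have hmin' : ∀ y, ∀ s ∈ Icc δ (1 - δ), ‖u (y₀ + s₀) - u y₀‖ ≤ ‖u (y + s) - u y‖ := by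
    intro y s hs
    have h1 := hmin (show (Int.fract y, s) ∈ Icc (0 : ℝ) 1 ×ˢ Icc δ (1 - δ) from
      ⟨⟨Int.fract_nonneg y, (Int.fract_lt_one y).le⟩, hs⟩)
    have e : ∀ t, u (Int.fract y + t) = u (y + t) := by
      intro t
      rw [← (hu.per.periodic.int_mul ⌊y⌋) (Int.fract y + t)]
      congr 1; rw [Int.fract]; ring
    have e0 := e 0
    simp only [add_zero] at e0
    simpa [e, e0] using h1
  have hm : min (δ / 2) h₁ ≤ ‖u (y₀ + s₀) - u y₀‖ := by
    rcases hs₀.1.eq_or_lt with h | h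
    · refine (min_le_left _ _).trans ?_
      have := hu.half_le (x := y₀ + s₀) (y := y₀) (by
        rw [add_sub_cancel_left, ← h, abs_of_pos d1])
      rw [add_sub_cancel_left, ← h, abs_of_pos d1] at this
      rwa [← h]
    rcases hs₀.2.eq_or_lt with h' | h'
    · refine (min_le_left _ _).trans ?_
      have e : u (y₀ + s₀) = u (y₀ - δ) := by
        rw [← hu.per.periodic (y₀ - δ), h']; congr 1; ring
      have := hu.half_le (x := y₀ - δ) (y := y₀) (by
        rw [sub_sub_cancel_left, abs_neg, abs_of_pos d1])
      rw [sub_sub_cancel_left, abs_neg, abs_of_pos d1] at this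
      rwa [e]
    · refine (min_le_right _ _).trans ?_
      refine (hu.chord_dichotomy hq hfin hB hh hΛ hs ?_).resolve_left (hinj y₀ s₀ hs₀)
      refine inner_deriv_eq_zero_of_isLocalMin hu.per _ ?_
      have hev : ∀ᶠ y in 𝓝 y₀, y₀ + s₀ - y ∈ Ioo δ (1 - δ) := by
        have hc : ContinuousAt (fun y => y₀ + s₀ - y) y₀ := by fun_prop
        refine hc.eventually (isOpen_Ioo.mem_nhds ?_)
        show y₀ + s₀ - y₀ ∈ Ioo δ (1 - δ)
        rw [add_sub_cancel_left]; exact ⟨h, h'⟩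
      filter_upwards [hev] with y hy
      have := hmin' y (y₀ + s₀ - y) ⟨hy.1.le, hy.2.le⟩
      rwa [add_sub_cancel] at this
  intro x y
  rw [hu.per.sub_eq_wrap x y]
  set w := wrap (x - y) with hw
  obtain ⟨w1, w2⟩ := wrap_mem (x - y)
  rw [← hw] at w1 w2
  rcases le_or_gt |w| δ with h | h
  · have := hu.half_le (x := y + w) (y := y) (by rwa [add_sub_cancel_left])
    rw [add_sub_cancel_left] at this
    refine le_trans ?_ this
    have : bilConst Λ h₁ ≤ 1 / 2 := min_le_left _ _
    nlinarith [abs_nonneg w]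
  · have hwa : |w| ≤ 1 / 2 := abs_wrap_le _
    have h2 : ‖u (y₀ + s₀) - u y₀‖ ≤ ‖u (y + w) - u y‖ := by
      rcases le_total 0 w with h0 | h0
      · rw [abs_of_nonneg h0] at h
        exact hmin' y w ⟨h.le, by linarith⟩
      · rw [abs_of_nonpos h0] at h
        have := hmin' y (w + 1) ⟨by linarith, by linarith⟩
        rwa [← add_assoc, hu.per.periodic] at this
    have h3 : bilConst Λ h₁ ≤ min (δ / 2) h₁ := min_le_right _ _
    have h4 : 0 ≤ min (δ / 2) h₁ ∨ min (δ / 2) h₁ < 0 := le_or_gt _ _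
    rcases h4 with h4 | h4
    · calc bilConst Λ h₁ * |w| ≤ min (δ / 2) h₁ * 1 :=
            mul_le_mul h3 (by linarith) (abs_nonneg _) h4
        _ ≤ _ := by linarith
    · have : bilConst Λ h₁ * |w| ≤ 0 := mul_nonpos_of_nonpos_of_nonneg (by linarith) (abs_nonneg _)
      exact this.trans (norm_nonneg _)

end Bent
end Geometry

section Classification

/-- A function on an interval that is Hölder continuous with exponent `3 / 2` is constant. -/
lemma eq_of_abs_sub_le_mul_sqrt {f : ℝ → ℝ} {s : Set ℝ} (hs : Convex ℝ s) {C : ℝ}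
    (h : ∀ x ∈ s, ∀ y ∈ s, |f y - f x| ≤ C * |y - x| * √|y - x|) {x y : ℝ} (hx : x ∈ s)
    (hy : y ∈ s) : f x = f y := by
  have hd : ∀ z ∈ s, HasDerivWithinAt f 0 s z := by
    intro z hz
    rw [hasDerivWithinAt_iff_isLittleO, Asymptotics.isLittleO_iff]
    intro ε hε
    have hc : Tendsto (fun t => C * √|t - z|) (𝓝[s] z) (𝓝 0) := by
      have : Continuous fun t => C * √|t - z| := by fun_prop
      have h2 := this.tendsto z
      simp only [sub_self, abs_zero, Real.sqrt_zero, mul_zero] at h2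
      exact h2.mono_left nhdsWithin_le_nhds
    filter_upwards [hc.eventually (gt_mem_nhds hε), self_mem_nhdsWithin] with t ht hts
    rw [smul_zero, sub_zero, Real.norm_eq_abs, Real.norm_eq_abs]
    refine (h z hz t hts).trans ?_
    nlinarith [abs_nonneg (t - z)]
  have := hs.norm_image_sub_le_of_norm_hasDerivWithin_le (C := 0) hd (by simp) hx hy
  rw [zero_mul, norm_le_zero_iff, sub_eq_zero] at this
  exact this.symm

namespace Bent

variable {u : ℝ → E3} {Λ : ℝ}

lemma eq_of_eq (hu : Bent u Λ) {x y : ℝ} (h : |x - y| ≤ locScale Λ) (e : u x = u y) : x = y := by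
  have := hu.half_le h
  rw [e, sub_self, norm_zero] at this
  have h2 : |x - y| = 0 := le_antisymm (by linarith) (abs_nonneg _)
  exact sub_eq_zero.1 (abs_eq_zero.1 h2)

/-- Near a self-intersection, one strand is contained in the other one. -/
lemma exists_on_strand (hu : Bent u Λ) {q B h₁ : ℝ} (hq : 2 < q) (hfin : TPe q u ≠ ⊤)
    (hB : TPr q u ≤ B) (hh : h₁ ≤ 1) (hΛ : h₁ * Λ ≤ 2)
    (hs : ∀ h, 0 < h → h < h₁ → B < 1 / q * ((4 * h)⁻¹ ^ q * (h / 32) ^ 2))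
    {x₀ y₀ η : ℝ} (h0 : u x₀ = u y₀) (hη0 : 0 < η) (hη : η ≤ locScale Λ / 32) (hη' : η ≤ h₁ / 4)
    {y : ℝ} (hy : |y - y₀| ≤ η) : ∃ x, |x - x₀| ≤ locScale Λ / 2 ∧ u x = u y := by
  obtain ⟨d1, d2, d3⟩ := locScale_spec hu.nonneg
  set δ := locScale Λ with hδ
  obtain ⟨x₁, hx₁, hmin⟩ := isCompact_Icc.exists_isMinOn (s := Icc (x₀ - δ / 2) (x₀ + δ / 2))
    ⟨x₀, by constructor <;> linarith⟩ (f := fun x => ‖u y - u x‖) (by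
      have := hu.per.continuous
      exact Continuous.continuousOn (by fun_prop))
  have h2 : ‖u y - u x₁‖ ≤ 2 * η := by
    have h3 : ‖u y - u x₁‖ ≤ ‖u y - u x₀‖ := hmin ⟨by linarith, by linarith⟩
    rw [h0] at h3
    have := hu.chord_le y y₀
    linarith
  have hend : |x₁ - x₀| < δ / 2 := by
    have h4 := hu.half_le (x := x₁) (y := x₀) (by
      rw [abs_le]; constructor <;> linarith [hx₁.1, hx₁.2])
    have h5 : ‖u x₁ - u x₀‖ ≤ ‖u y - u x₁‖ + ‖u y - u y₀‖ := by
      rw [h0, norm_sub_rev (u y) (u x₁)]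
      refine (le_of_eq ?_).trans (norm_add_le _ _)
      congr 1; abel
    have := hu.chord_le y y₀
    linarith
  rw [abs_lt] at hend
  refine ⟨x₁, by rw [abs_le]; constructor <;> linarith, ?_⟩
  have hloc : IsLocalMin (fun x => ‖u y - u x‖) x₁ :=
    hmin.isLocalMin (Icc_mem_nhds (by linarith) (by linarith))
  rcases hu.chord_dichotomy hq hfin hB hh hΛ hs
    (inner_deriv_eq_zero_of_isLocalMin hu.per _ hloc) with h | h
  · exact h.symm
  · linarith

/-- At a self-intersection of minimal period, both strands of an arclength-parametrized curve of
finite energy coincide locally. -/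
lemma eq_near_of_minimal_return (hu : Bent u Λ) {q B h₁ : ℝ} (hq : 2 < q) (hfin : TPe q u ≠ ⊤)
    (hB : TPr q u ≤ B) (hh : h₁ ≤ 1) (hΛ : h₁ * Λ ≤ 2)
    (hs : ∀ h, 0 < h → h < h₁ → B < 1 / q * ((4 * h)⁻¹ ^ q * (h / 32) ^ 2))
    (hunit : ∀ x, ‖deriv u x‖ ≤ 1) {a y₀ η : ℝ} (ha : locScale Λ ≤ a)
    (hmin : ∀ y s, 0 < s → s < a → u (y + s) ≠ u y) (h0 : u (y₀ + a) = u y₀)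
    (hη0 : 0 < η) (hη : η ≤ locScale Λ / 32) (hη' : η ≤ h₁ / 4)
    {y : ℝ} (hy : |y - y₀| ≤ η) : u (y + a) = u y := by
  obtain ⟨d1, d2, d3⟩ := locScale_spec hu.nonneg
  have hex := fun y (hy : |y - y₀| ≤ η) =>
    hu.exists_on_strand hq hfin hB hh hΛ hs h0 hη0 hη hη' hy
  choose! X hX1 hX2 using hex
  set δ := locScale Λ with hδ
  have hmem : ∀ {y}, y ∈ Icc (y₀ - η) (y₀ + η) → |y - y₀| ≤ η := fun h => by
    rw [abs_le]; constructor <;> linarith [h.1, h.2]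
  have hchord : ∀ x y, ‖u x - u y‖ ≤ |x - y| := fun x y => by
    simpa using hu.per.norm_sub_le hunit x y
  have hLip : ∀ y ∈ Icc (y₀ - η) (y₀ + η), ∀ y' ∈ Icc (y₀ - η) (y₀ + η),
      |X y - X y'| ≤ 2 * |y - y'| := by
    intro y hy y' hy'
    have h1 := hX1 y (hmem hy)
    have h2 := hX1 y' (hmem hy')
    rw [abs_le] at h1 h2
    have h3 := hu.half_le (x := X y) (y := X y') (by
      rw [abs_le]; constructor <;> linarith)
    rw [hX2 y (hmem hy), hX2 y' (hmem hy')] at h3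
    linarith [hchord y y']
  have hX0 : X y₀ = y₀ + a := by
    have h1 : |y₀ - y₀| ≤ η := by simpa using hη0.le
    refine hu.eq_of_eq ((hX1 y₀ h1).trans (by linarith)) ?_
    rw [hX2 y₀ h1, h0]
  have hcont : ContinuousOn X (Icc (y₀ - η) (y₀ + η)) := by
    refine (LipschitzOnWith.of_dist_le_mul (K := 2) fun x hx y hy => ?_).continuousOn
    exact hLip x hx y hy
  have hinj : InjOn X (Icc (y₀ - η) (y₀ + η)) := by
    intro y hy y' hy' e
    refine hu.eq_of_eq ?_ ?_
    · rw [abs_le]; constructor <;> linarith [hy.1, hy.2, hy'.1, hy'.2]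
    · rw [← hX2 y (hmem hy), ← hX2 y' (hmem hy'), e]
  have hy₀ : y₀ ∈ Icc (y₀ - η) (y₀ + η) := ⟨by linarith, by linarith⟩
  have hy₁ : y₀ + η ∈ Icc (y₀ - η) (y₀ + η) := ⟨by linarith, le_rfl⟩
  have hyI : y ∈ Icc (y₀ - η) (y₀ + η) := by
    rw [abs_le] at hy; constructor <;> linarith [hy.1, hy.2]
  rcases hcont.strictMonoOn_of_injOn_Icc' (by linarith) hinj with hm | hm
  · have key : X y₀ - y₀ = X y - y := by
      refine eq_of_abs_sub_le_mul_sqrt (f := fun t => X t - t) (C := 2 * √(2 * Λ))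
        (convex_Icc _ _) ?_ hy₀ hyI
      have hpos : ∀ x ∈ Icc (y₀ - η) (y₀ + η), ∀ y ∈ Icc (y₀ - η) (y₀ + η),
          |(X y - y) - (X x - x)| = |(|X y - X x| - |y - x|)| := by
        intro x hx y hy
        rcases le_total x y with h | h
        · have := hm.monotoneOn hx hy h
          rw [abs_of_nonneg (sub_nonneg.2 this), abs_of_nonneg (sub_nonneg.2 h)]
          congr 1; ring
        · have := hm.monotoneOn hy hx h
          rw [abs_of_nonpos (sub_nonpos.2 this), abs_of_nonpos (sub_nonpos.2 h), ← abs_neg]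
          congr 1; ring
      intro x hx y hy
      rw [hpos x hx y hy]
      have hN := hLip y hy x hx
      have hn : |y - x| ≤ 1 / 2 := by
        rw [abs_le]; constructor <;> linarith [hy.1, hy.2, hx.1, hx.2]
      have e : ‖u (X y) - u (X x)‖ = ‖u y - u x‖ := by rw [hX2 y (hmem hy), hX2 x (hmem hx)]
      have h1 := hu.mul_one_sub_le (x := X y) (y := X x) (by linarith)
      have h2 := hu.mul_one_sub_le (x := y) (y := x) (by linarith)
      rw [e] at h1
      rw [← e] at h2
      have h1' := h1.trans (hchord y x)
      have h2' := h2.trans (hchord _ _)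
      have hsq : √(|X y - X x| * Λ) ≤ √(2 * Λ) * √|y - x| := by
        rw [← Real.sqrt_mul (by linarith [hu.nonneg])]
        exact Real.sqrt_le_sqrt (by nlinarith [hu.nonneg])
      have hsq' : √(|y - x| * Λ) ≤ √(2 * Λ) * √|y - x| := by
        rw [← Real.sqrt_mul (by linarith [hu.nonneg])]
        exact Real.sqrt_le_sqrt (by nlinarith [hu.nonneg, mul_nonneg (abs_nonneg (y - x)) hu.nonneg])
      have hr : 0 ≤ √(2 * Λ) * √|y - x| := by positivity
      have hrw : 2 * √(2 * Λ) * |y - x| * √|y - x| = 2 * |y - x| * (√(2 * Λ) * √|y - x|) := by ring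
      rw [hrw, abs_le]
      constructor
      · nlinarith [abs_nonneg (y - x)]
      · nlinarith [abs_nonneg (X y - X x), abs_nonneg (y - x)]
    have : X y = y + a := by linarith
    rw [← this]; exact hX2 y (hmem hyI)
  · exfalso
    have h1 := hm hy₀ hy₁ (by linarith)
    have h2 := hX1 _ (hmem hy₁)
    rw [abs_le] at h2
    refine hmin (y₀ + η) (X (y₀ + η) - (y₀ + η)) (by linarith) (by linarith) ?_
    rw [add_sub_cancel]
    exact hX2 _ (hmem hy₁)

/-- An arclength-parametrized curve of finite energy with a self-intersection is multiply
covered. -/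
lemma exists_periodic (hu : Bent u Λ) {q B h₁ : ℝ} (hq : 2 < q) (hfin : TPe q u ≠ ⊤)
    (hB : TPr q u ≤ B) (h0 : 0 < h₁) (hh : h₁ ≤ 1) (hΛ : h₁ * Λ ≤ 2)
    (hs : ∀ h, 0 < h → h < h₁ → B < 1 / q * ((4 * h)⁻¹ ^ q * (h / 32) ^ 2))
    (hunit : ∀ x, ‖deriv u x‖ ≤ 1)
    (hret : ∃ y, ∃ s ∈ Icc (locScale Λ) (1 - locScale Λ), u (y + s) = u y) :
    ∃ a, 0 < a ∧ a < 1 ∧ Function.Periodic u a := by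
  obtain ⟨d1, d2, d3⟩ := locScale_spec hu.nonneg
  have hfr : ∀ y t, u (Int.fract y + t) = u (y + t) := by
    intro y t
    rw [← (hu.per.periodic.int_mul ⌊y⌋) (Int.fract y + t)]
    congr 1; rw [Int.fract]; ring
  have hfr0 : ∀ y, u (Int.fract y) = u y := fun y => by simpa using hfr y 0
  set R : Set (ℝ × ℝ) := (Icc (0 : ℝ) 1 ×ˢ Icc (locScale Λ) (1 - locScale Λ)) ∩
    {p | u (p.1 + p.2) = u p.1} with hR
  have hc := hu.per.continuous
  have hRc : IsCompact R := (isCompact_Icc.prod isCompact_Icc).inter_right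
    (isClosed_eq (by fun_prop) (by fun_prop))
  have hmem : ∀ y, ∀ s ∈ Icc (locScale Λ) (1 - locScale Λ), u (y + s) = u y →
      (Int.fract y, s) ∈ R := fun y s hs e =>
    ⟨⟨⟨Int.fract_nonneg y, (Int.fract_lt_one y).le⟩, hs⟩, by
      show u (Int.fract y + s) = u (Int.fract y)
      rw [hfr, hfr0, e]⟩
  have hRn : R.Nonempty := by
    obtain ⟨y, s, hs, e⟩ := hret
    exact ⟨_, hmem y s hs e⟩
  obtain ⟨⟨y₀, a⟩, ⟨⟨_, ha : a ∈ Icc (locScale Λ) (1 - locScale Λ)⟩, he : u (y₀ + a) = u y₀⟩, hm⟩ :=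
    hRc.exists_isMinOn hRn (f := Prod.snd) continuous_snd.continuousOn
  have hmin : ∀ y s, 0 < s → s < a → u (y + s) ≠ u y := by
    intro y s hs hsa e
    rcases le_or_gt s (locScale Λ) with h | h
    · have := hu.eq_of_eq (x := y + s) (y := y) (by
        rwa [add_sub_cancel_left, abs_of_pos hs]) e
      linarith
    · have : a ≤ s := hm (hmem y s ⟨h.le, by linarith [ha.2]⟩ e)
      linarith
  refine ⟨a, by linarith [ha.1], by linarith [ha.2], ?_⟩
  set η := min (locScale Λ / 32) (h₁ / 4) with hη
  have hη0 : 0 < η := by positivity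
  have hcl : IsClopen {y | u (y + a) = u y} := by
    refine ⟨isClosed_eq (by fun_prop) (by fun_prop), Metric.isOpen_iff.2 fun z hz => ?_⟩
    refine ⟨η, hη0, fun y hy => ?_⟩
    rw [Metric.mem_ball, Real.dist_eq] at hy
    exact hu.eq_near_of_minimal_return hq hfin hB hh hΛ hs hunit ha.1 hmin hz hη0
      (min_le_left _ _) (min_le_right _ _) hy.le
  have huniv := hcl.eq_univ ⟨y₀, he⟩
  intro y
  exact (Set.ext_iff.1 huniv y).2 (mem_univ y)

end Bent
end Classification

section Multicover

lemma not_integrableOn_of_le_sub_inv {G : ℝ × ℝ → ℝ} (hG : Measurable G)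
    (h1 : ∀ x y, G (x + 1, y) = G (x, y)) (h2 : ∀ x y, G (x, y + 1) = G (x, y))
    {a y₀ c ε : ℝ} (hc : 0 < c) (hε : 0 < ε) (hε1 : ε ≤ 1)
    (hle : ∀ y d, y₀ < y → y ≤ y₀ + ε → -ε < d → d < 0 → c ≤ |d| * |G (y + (a + d), y)|) :
    ¬ IntegrableOn G unitSq := by
  intro h_int
  have hfin : ∫⁻ p in unitSq, ‖G p‖ₑ < ⊤ := h_int.2
  rw [lintegral_unitSq (G := fun p => ‖G p‖ₑ) hG.enorm (by simp [h1]) (by simp [h2]) y₀ (a - ε)]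
    at hfin
  have hI : ∫⁻ h in Ioo (a - ε) a, ENNReal.ofReal (c * (a - h)⁻¹) = ⊤ := by
    by_contra hne
    have hi : IntegrableOn (fun h => c * (a - h)⁻¹) (Ioo (a - ε) a) := by
      refine ⟨by fun_prop, ?_⟩
      rw [hasFiniteIntegral_iff_ofReal]
      · exact lt_top_iff_ne_top.2 hne
      · filter_upwards [ae_restrict_mem measurableSet_Ioo] with h hh
        have : 0 < a - h := by linarith [hh.2]
        positivity
    have hi2 : IntervalIntegrable (fun h => (h - a)⁻¹) volume (a - ε) a := by
      rw [intervalIntegrable_iff_integrableOn_Ioo_of_le (by linarith)]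
      refine IntegrableOn.congr_fun (f := fun h => -c⁻¹ * (c * (a - h)⁻¹))
        (Integrable.const_mul hi _) (fun h hh => ?_) measurableSet_Ioo
      dsimp only
      have : a - h ≠ 0 := by have := hh.2; linarith
      have h' : h - a ≠ 0 := by have := hh.2; intro h0; apply this.ne; linarith
      field_simp; ring
    rw [intervalIntegrable_sub_inv_iff] at hi2
    rcases hi2 with h | h
    · linarith
    · exact h right_mem_uIcc
  have hlow : ∀ y ∈ Ioc y₀ (y₀ + ε),
      ⊤ ≤ ∫⁻ h in Ioc (a - ε) (a - ε + 1), ‖G (y + h, y)‖ₑ := by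
    intro y hy
    rw [← hI]
    refine (setLIntegral_mono' measurableSet_Ioo fun h hh => ?_).trans
      (lintegral_mono_set (fun h hh => ⟨hh.1, by linarith [hh.2]⟩))
    have hd := hle y (h - a) hy.1 hy.2 (by linarith [hh.1]) (by linarith [hh.2])
    rw [show a + (h - a) = h by ring, abs_of_neg (show h - a < 0 by linarith [hh.2]), neg_sub] at hd
    rw [← ofReal_norm]
    refine ENNReal.ofReal_le_ofReal ?_
    rw [Real.norm_eq_abs, mul_inv_le_iff₀ (by linarith [hh.2]), mul_comm]
    exact hd
  have : (⊤ : ℝ≥0∞) ≤ ∫⁻ y in Ioc y₀ (y₀ + 1), ∫⁻ h in Ioc (a - ε) (a - ε + 1),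
      ‖G (y + h, y)‖ₑ := by
    calc (⊤ : ℝ≥0∞) = ∫⁻ y in Ioc y₀ (y₀ + ε), ⊤ := by
          rw [setLIntegral_const, Real.volume_Ioc, ENNReal.top_mul]
          simpa using hε
      _ ≤ ∫⁻ y in Ioc y₀ (y₀ + ε), ∫⁻ h in Ioc (a - ε) (a - ε + 1), ‖G (y + h, y)‖ₑ :=
          setLIntegral_mono' measurableSet_Ioc hlow
      _ ≤ _ := lintegral_mono_set (Ioc_subset_Ioc_right (by linarith))
  exact absurd (lt_of_le_of_lt this hfin) (lt_irrefl _)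

lemma not_integrableOn_of_continuousAt {G : ℝ × ℝ → ℝ} (hG : Measurable G)
    (h1 : ∀ x y, G (x + 1, y) = G (x, y)) (h2 : ∀ x y, G (x, y + 1) = G (x, y))
    {a y₀ : ℝ} {F : ℝ × ℝ → ℝ} (hF : ContinuousAt F (y₀, 0)) (hF0 : F (y₀, 0) ≠ 0)
    (hle : ∀ᶠ p in 𝓝 (y₀, (0 : ℝ)), p.2 < 0 → |F p| ≤ |p.2| * |G (p.1 + (a + p.2), p.1)|) :
    ¬ IntegrableOn G unitSq := by
  have hc : 0 < |F (y₀, 0)| / 2 := by positivity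
  have hev := (hF.abs.eventually (lt_mem_nhds (half_lt_self (abs_pos.2 hF0)))).and hle
  obtain ⟨ε, hε, hball⟩ := Metric.eventually_nhds_iff.1 hev
  have hε' : 0 < min (ε / 2) 1 := by positivity
  refine not_integrableOn_of_le_sub_inv (a := a) (y₀ := y₀) hG h1 h2 hc hε' (min_le_right _ _)
    fun y d hy hy' hd hd' => ?_
  have hm := min_le_left (ε / 2) 1
  obtain ⟨h3, h4⟩ := @hball (y, d) (by
    rw [Prod.dist_eq, Real.dist_eq, Real.dist_eq, abs_of_pos (by simpa using hy), abs_of_neg (by simpa using hd')]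
    simp only [sub_zero]
    exact max_lt (by linarith) (by linarith))
  exact h3.le.trans (h4 hd')

variable {u v w : ℝ → E3} {q a : ℝ}

/-- The averaged second derivative in the first-order Taylor formula. -/
def taylorRem (u : ℝ → E3) (p : ℝ × ℝ) : E3 :=
  ∫ s in (0 : ℝ)..1, (1 - s) • deriv (deriv u) (p.1 + s * p.2)

lemma C2Per.continuous_taylorRem (hu : C2Per u) : Continuous (taylorRem u) := by
  have h := hu.continuous_deriv2
  unfold taylorRem
  refine intervalIntegral.continuous_parametric_intervalIntegral_of_continuous' ?_ 0 1
  fun_prop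

lemma C2Per.taylorRem_zero (_hu : C2Per u) (y : ℝ) :
    taylorRem u (y, 0) = (1 / 2 : ℝ) • deriv (deriv u) y := by
  simp only [taylorRem, mul_zero, add_zero]
  rw [intervalIntegral.integral_smul_const]
  congr 1
  rw [intervalIntegral.integral_sub (by simp) (by simp)]
  simp; norm_num

lemma C2Per.taylor (hu : C2Per u) (y d : ℝ) :
    u (y + d) - u y = d • (deriv u y + d • taylorRem u (y, d)) := by
  have hd : ∀ s ∈ uIcc (0 : ℝ) 1, HasDerivAt
      (fun s => ((1 - s) * d) • deriv u (y + s * d) + u (y + s * d))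
      ((d ^ 2) • (1 - s) • deriv (deriv u) (y + s * d)) s := by
    intro s _
    have hi : HasDerivAt (fun s : ℝ => y + s * d) d s := by
      simpa using ((hasDerivAt_id s).mul_const d).const_add y
    have h1 := (hu.hasDerivAt_deriv (y + s * d)).scomp s hi
    have h2 := (hu.hasDerivAt (y + s * d)).scomp s hi
    have h3 : HasDerivAt (fun s : ℝ => (1 - s) * d) (-d) s := by
      simpa using ((hasDerivAt_id s).const_sub 1).mul_const d
    refine ((h3.smul h1).add h2).congr_deriv ?_
    simp only [Function.comp_apply]
    module
  have hcont : Continuous fun s : ℝ => (d ^ 2) • (1 - s) • deriv (deriv u) (y + s * d) := by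
    have h := hu.continuous_deriv2
    fun_prop
  have := intervalIntegral.integral_eq_sub_of_hasDerivAt hd (hcont.intervalIntegrable _ _)
  rw [intervalIntegral.integral_smul] at this
  simp only [one_mul, sub_self, zero_mul, zero_smul, zero_add, sub_zero, add_zero] at this
  have h' : u (y + d) - u y = d ^ 2 • taylorRem u (y, d) + d • deriv u y := by
    rw [taylorRem, this]; abel
  rw [h']; module

lemma Mintegrand_periodic (hu : C2Per u) (hv : C2Per v) (hw : C2Per w) :
    (∀ x y, Mintegrand q u v w (x + 1, y) = Mintegrand q u v w (x, y)) ∧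
    ∀ x y, Mintegrand q u v w (x, y + 1) = Mintegrand q u v w (x, y) := by
  constructor
  · intro x y
    simp only [Mintegrand, hu.periodic x, hw.periodic x,
      show x + 1 - y = x - y + 1 by ring, wrap_add_one]
  · intro x y
    simp only [Mintegrand, hu.periodic y, hw.periodic y, hu.periodic_deriv y, hv.periodic_deriv y,
      hw.periodic_deriv y, show x - (y + 1) = x - y - 1 by ring, wrap_sub_one]

lemma Aintegrand_periodic (hu : C2Per u) (hv : C2Per v) (hw : C2Per w) :
    (∀ x y, Aintegrand q u v w (x + 1, y) = Aintegrand q u v w (x, y)) ∧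
    ∀ x y, Aintegrand q u v w (x, y + 1) = Aintegrand q u v w (x, y) := by
  constructor
  · intro x y
    simp only [Aintegrand, hu.periodic x, hw.periodic x, hv.periodic x]
  · intro x y
    simp only [Aintegrand, hu.periodic y, hw.periodic y, hu.periodic_deriv y, hv.periodic y]

/-- The rescaled chord of a multiply covered curve between neighbouring strands. -/
def strandChord (u : ℝ → E3) (p : ℝ × ℝ) : E3 := deriv u p.1 + p.2 • taylorRem u p

/-- The tangent-point quotient of a multiply covered curve between neighbouring strands. -/
def strandZ (u : ℝ → E3) (p : ℝ × ℝ) : E3 :=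
  (‖strandChord u p‖ ^ 2)⁻¹ • cr (deriv u p.1) (taylorRem u p)

lemma C2Per.continuous_strandChord (hu : C2Per u) : Continuous (strandChord u) := by
  have := hu.continuous_taylorRem
  have := hu.continuous_deriv
  unfold strandChord
  fun_prop

lemma continuous_cr {X : Type*} [TopologicalSpace X] {f g : X → E3} (hf : Continuous f)
    (hg : Continuous g) : Continuous fun x => cr (f x) (g x) := by
  unfold cr
  fun_prop

lemma strandChord_zero (y : ℝ) : strandChord u (y, 0) = deriv u y := by simp [strandChord]

lemma C2Per.continuousAt_strandZ (hu : C2Per u) {y : ℝ} (hy : deriv u y ≠ 0) :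
    ContinuousAt (strandZ u) (y, 0) := by
  unfold strandZ
  refine ContinuousAt.smul (ContinuousAt.inv₀ (hu.continuous_strandChord.norm.pow 2).continuousAt ?_)
    (continuous_cr (hu.continuous_deriv.comp continuous_fst) hu.continuous_taylorRem).continuousAt
  show ‖strandChord u (y, 0)‖ ^ 2 ≠ 0
  rw [strandChord_zero]
  exact pow_ne_zero _ (norm_ne_zero_iff.2 hy)

lemma C2Per.strand_sub (hu : C2Per u) (hper : Function.Periodic u a) (y d : ℝ) :
    u (y + (a + d)) - u y = d • strandChord u (y, d) := by
  rw [show y + (a + d) = y + d + a by ring, hper, hu.taylor]; rfl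

lemma C2Per.tpZ_strand (hu : C2Per u) (hper : Function.Periodic u a) (y : ℝ) {d : ℝ} (hd : d ≠ 0) :
    tpZ u (y + (a + d), y) = strandZ u (y, d) := by
  have hcr : cr (deriv u y) (d • strandChord u (y, d)) =
      d ^ 2 • cr (deriv u y) (taylorRem u (y, d)) := by
    rw [strandChord, cr_smul_right, cr_add_right, cr_self, zero_add, cr_smul_right, smul_smul, sq]
  simp only [tpZ, strandZ]
  rw [hu.strand_sub hper, hcr, norm_smul, smul_smul, mul_pow, Real.norm_eq_abs, sq_abs]
  congr 1
  by_cases h : ‖strandChord u (y, d)‖ = 0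
  · simp [h]
  · field_simp

lemma C2Per.not_integrableOn_M (hu : C2Per u) (hv : C2Per v) (hw : C2Per w) (hq : 2 < q)
    (hper : Function.Periodic u a) (ha : 0 < a) (ha' : a ≤ 1 / 2) {y : ℝ} (hy : deriv u y ≠ 0)
    (hc : cr (deriv u y) (deriv (deriv u) y) ≠ 0)
    (hne : ⟪cr (deriv u y) (deriv (deriv u) y),
      cr (deriv v y) (w (y + a) - w y - a • deriv w y)⟫ ≠ 0) :
    ¬ IntegrableOn (Mintegrand q u v w) unitSq := by
  set F : ℝ × ℝ → ℝ := fun p => ‖strandZ u p‖ ^ (q - 2) * ⟪strandZ u p, (‖strandChord u p‖ ^ 2)⁻¹ •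
    cr (deriv v p.1) (w (p.1 + (a + p.2)) - w p.1 - (a + p.2) • deriv w p.1)⟫ with hFdef
  have hy' : 0 < ‖deriv u y‖ := norm_pos_iff.2 hy
  have hZ := hu.continuousAt_strandZ hy
  have hF : ContinuousAt F (y, 0) := by
    have hD : Continuous fun p : ℝ × ℝ =>
        cr (deriv v p.1) (w (p.1 + (a + p.2)) - w p.1 - (a + p.2) • deriv w p.1) := by
      have h1 := hv.continuous_deriv
      have h2 := hw.continuous_deriv
      have h3 := hw.continuous
      exact continuous_cr (by fun_prop) (by fun_prop)
    refine (hZ.norm.rpow_const (Or.inr (by linarith))).mul (hZ.inner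
      (ContinuousAt.smul (ContinuousAt.inv₀ (hu.continuous_strandChord.norm.pow 2).continuousAt ?_)
        hD.continuousAt))
    show ‖strandChord u (y, 0)‖ ^ _ ≠ 0
    rw [strandChord_zero]; positivity
  have hZ0 : strandZ u (y, 0) = ((‖deriv u y‖ ^ 2)⁻¹ * (1 / 2)) •
      cr (deriv u y) (deriv (deriv u) y) := by
    simp only [strandZ]
    rw [strandChord_zero, hu.taylorRem_zero, cr_smul_right, smul_smul]
  refine not_integrableOn_of_continuousAt (measurable_Mintegrand hu hv hw)
    (Mintegrand_periodic hu hv hw).1 (Mintegrand_periodic hu hv hw).2 (a := a) hF ?_ ?_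
  · simp only [hFdef]
    rw [hZ0, strandChord_zero, add_zero, real_inner_smul_left, real_inner_smul_right]
    have hn := norm_pos_iff.2 hc
    have : 0 < ‖((‖deriv u y‖ ^ 2)⁻¹ * (1 / 2)) • cr (deriv u y) (deriv (deriv u) y)‖ :=
      norm_pos_iff.2 (smul_ne_zero (mul_pos (by positivity) (by norm_num)).ne' hc)
    have h1 := (Real.rpow_pos_of_pos this (q - 2)).ne'
    exact mul_ne_zero h1 (mul_ne_zero (mul_pos (by positivity) (by norm_num)).ne'
      (mul_ne_zero (by positivity) hne))
  · have hm : 0 < min a 1 := by positivity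
    filter_upwards [(continuous_snd.tendsto (y, (0 : ℝ))).eventually
      (Ioo_mem_nhds (neg_lt_zero.2 hm) hm)] with p hp hp2
    obtain ⟨x, d⟩ := p
    simp only at hp hp2
    have hd1 : |d| ≤ 1 := by
      rw [abs_of_neg hp2]; linarith [hp.1, min_le_right a 1]
    have hda : -a < d := by linarith [hp.1, min_le_left a 1]
    rw [Mintegrand_eq _ _ _ _ hq, hu.tpZ_strand hper _ hp2.ne]
    simp only
    rw [add_sub_cancel_left, wrap_of_mem (by linarith) (by linarith), hu.strand_sub hper, norm_smul,
      mul_pow, mul_inv, mul_smul, real_inner_smul_right _ _ ((‖d‖ ^ 2)⁻¹),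
      mul_left_comm (‖strandZ u (x, d)‖ ^ (q - 2)), Real.norm_eq_abs]
    change |F (x, d)| ≤ |d| * |(|d| ^ 2)⁻¹ * F (x, d)|
    generalize F (x, d) = z
    rw [abs_mul, ← mul_assoc, abs_of_nonneg (show 0 ≤ (|d| ^ 2)⁻¹ by positivity)]
    have hdpos := abs_pos.2 hp2.ne
    refine le_mul_of_one_le_left (abs_nonneg _) ?_
    rw [← div_eq_mul_inv, le_div_iff₀ (by positivity)]
    nlinarith

lemma C2Per.not_integrableOn_A (hu : C2Per u) (hw : C2Per w) (hq : 2 < q)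
    (hper : Function.Periodic u a) {y : ℝ} (hy : deriv u y ≠ 0)
    (hc : cr (deriv u y) (deriv (deriv u) y) ≠ 0)
    (hne : ⟪deriv u y, w (y + a) - w y⟫ ≠ 0) :
    ¬ IntegrableOn (Aintegrand q u u w) unitSq := by
  set F : ℝ × ℝ → ℝ := fun p => ‖strandZ u p‖ ^ (q - 2) * ⟪strandZ u p,
    (⟪strandChord u p, w (p.1 + (a + p.2)) - w p.1⟫ / ‖strandChord u p‖ ^ 4) •
    cr (deriv u p.1) (taylorRem u p)⟫ with hFdef
  have hy' : 0 < ‖deriv u y‖ := norm_pos_iff.2 hy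
  have hZ := hu.continuousAt_strandZ hy
  have hF : ContinuousAt F (y, 0) := by
    have hD : Continuous fun p : ℝ × ℝ => ⟪strandChord u p, w (p.1 + (a + p.2)) - w p.1⟫ := by
      have h1 := hu.continuous_strandChord
      have h3 := hw.continuous
      fun_prop
    have hD2 : Continuous fun p : ℝ × ℝ => cr (deriv u p.1) (taylorRem u p) :=
      continuous_cr (hu.continuous_deriv.comp continuous_fst) hu.continuous_taylorRem
    refine (hZ.norm.rpow_const (Or.inr (by linarith))).mul (hZ.inner
      (ContinuousAt.smul (hD.continuousAt.div (hu.continuous_strandChord.norm.pow 4).continuousAt ?_)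
        hD2.continuousAt))
    show ‖strandChord u (y, 0)‖ ^ _ ≠ 0
    rw [strandChord_zero]; positivity
  have hZ0 : strandZ u (y, 0) = ((‖deriv u y‖ ^ 2)⁻¹ * (1 / 2)) •
      cr (deriv u y) (deriv (deriv u) y) := by
    simp only [strandZ]
    rw [strandChord_zero, hu.taylorRem_zero, cr_smul_right, smul_smul]
  refine not_integrableOn_of_continuousAt (measurable_Aintegrand hu hu hw)
    (Aintegrand_periodic hu hu hw).1 (Aintegrand_periodic hu hu hw).2 (a := a) hF ?_ ?_
  · simp only [hFdef]
    rw [hZ0, strandChord_zero, add_zero, hu.taylorRem_zero, cr_smul_right, real_inner_smul_left,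
      real_inner_smul_right, real_inner_smul_right, real_inner_self_eq_norm_sq]
    have hn := norm_pos_iff.2 hc
    have : 0 < ‖((‖deriv u y‖ ^ 2)⁻¹ * (1 / 2)) • cr (deriv u y) (deriv (deriv u) y)‖ :=
      norm_pos_iff.2 (smul_ne_zero (mul_pos (by positivity) (by norm_num)).ne' hc)
    have h1 := (Real.rpow_pos_of_pos this (q - 2)).ne'
    exact mul_ne_zero h1 (mul_ne_zero (mul_pos (by positivity) (by norm_num)).ne'
      (mul_ne_zero (div_ne_zero hne (by positivity))
        (mul_ne_zero (by norm_num) (by positivity))))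
  · refine Eventually.of_forall fun p hp2 => ?_
    obtain ⟨x, d⟩ := p
    simp only at hp2
    have hcr : cr (deriv u x) (d • strandChord u (x, d)) =
        d ^ 2 • cr (deriv u x) (taylorRem u (x, d)) := by
      rw [strandChord, cr_smul_right, cr_add_right, cr_self, zero_add, cr_smul_right, smul_smul, sq]
    rw [Aintegrand_eq _ _ _ _ hq, hu.tpZ_strand hper _ hp2.ne]
    simp only [hFdef]
    rw [hu.strand_sub hper, hcr, norm_smul, real_inner_smul_left, smul_smul, ← abs_mul]
    refine le_of_eq ?_
    rw [real_inner_smul_right, real_inner_smul_right, mul_left_comm d, ← mul_assoc d,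
      mul_pow, Real.norm_eq_abs, show |d| ^ 4 = d ^ 4 by
        rw [show |d| ^ 4 = (|d| ^ 2) ^ 2 by ring, sq_abs]; ring]
    congr 3
    by_cases h : ‖strandChord u (x, d)‖ = 0
    · simp [h]
    · have := hp2.ne
      field_simp

lemma C2Per.deltaTP_eq_zero (hu : C2Per u) (hw : C2Per w) (hq : 2 < q)
    (hper : Function.Periodic u a) (ha : 0 < a) (ha' : a ≤ 1 / 2) {y : ℝ} (hy : deriv u y ≠ 0)
    (hc : cr (deriv u y) (deriv (deriv u) y) ≠ 0)
    (h1 : ⟪cr (deriv u y) (deriv (deriv u) y),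
      cr (deriv u y) (w (y + a) - w y - a • deriv w y)⟫ ≠ 0)
    (h2 : ⟪cr (deriv u y) (deriv (deriv u) y), cr (deriv u y) (deriv w y)⟫ ≠ 0)
    (h3 : ⟪deriv u y, w (y + a) - w y⟫ ≠ 0) : deltaTP q u w = 0 := by
  have e1 : Mfun q u u w = 0 :=
    integral_undef (hu.not_integrableOn_M hu hw hq hper ha ha' hy hc h1)
  have e2 : Mfun q u w u = 0 := by
    refine integral_undef (hu.not_integrableOn_M hw hu hq hper ha ha' hy hc ?_)
    rw [hper, sub_self, zero_sub, ← neg_smul, cr_smul_right, real_inner_smul_right]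
    refine mul_ne_zero (by simpa using ha.ne') ?_
    rw [inner_cr, wedgeInner] at h2 ⊢
    intro h0; apply h2; linarith
  have e3 : Afun q u u w = 0 :=
    integral_undef (hu.not_integrableOn_A hw hq hper hy hc h3)
  rw [deltaTP, e1, e2, e3]; norm_num

end Multicover

section TestFields

/-- A smooth `1`-periodic bump supported within distance `δ` of `m + ℤ`. -/
def perBump (m δ t : ℝ) : ℝ :=
  expNegInvGlue (Real.cos (2 * Real.pi * (t - m)) - Real.cos (2 * Real.pi * δ))

lemma contDiff_perBump (m δ : ℝ) : ContDiff ℝ 1 (perBump m δ) := by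
  have h : ContDiff ℝ 1 fun t : ℝ =>
      Real.cos (2 * Real.pi * (t - m)) - Real.cos (2 * Real.pi * δ) := by fun_prop
  exact (expNegInvGlue.contDiff (n := 1)).comp h

lemma perBump_periodic (m δ : ℝ) : Function.Periodic (perBump m δ) 1 := fun t => by
  unfold perBump
  rw [show 2 * Real.pi * (t + 1 - m) = 2 * Real.pi * (t - m) + 2 * Real.pi by ring,
    Real.cos_add_two_pi]

lemma perBump_pos {m δ t : ℝ} (hδ : δ ≤ 1 / 2) (h : |t - m| < δ) : 0 < perBump m δ t := by
  refine expNegInvGlue.pos_of_pos (sub_pos.2 ?_)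
  have hp := Real.pi_pos
  rw [← Real.cos_abs (2 * Real.pi * (t - m)), abs_mul, abs_of_pos (by positivity : 0 < 2 * Real.pi)]
  exact Real.cos_lt_cos_of_nonneg_of_le_pi (by positivity) (by nlinarith) (by gcongr)

lemma perBump_eq_zero {m δ t : ℝ} (hδ : 0 ≤ δ) (h : δ ≤ |t - m|) (h' : |t - m| ≤ 1 - δ) :
    perBump m δ t = 0 := by
  refine expNegInvGlue.zero_of_nonpos (sub_nonpos.2 ?_)
  have hp := Real.pi_pos
  rw [← Real.cos_abs (2 * Real.pi * (t - m)), abs_mul, abs_of_pos (by positivity : 0 < 2 * Real.pi)]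
  rcases le_total |t - m| (1 / 2) with h2 | h2
  · exact Real.cos_le_cos_of_nonneg_of_le_pi (by positivity) (by nlinarith) (by gcongr)
  · rw [← Real.cos_two_pi_sub (2 * Real.pi * |t - m|)]
    exact Real.cos_le_cos_of_nonneg_of_le_pi (by positivity) (by nlinarith) (by nlinarith)

/-- Test fields which preserve the speed of `u` to first order. -/
structure Admissible (u w : ℝ → E3) : Prop where
  per : C2Per w
  orth : ∀ x, ⟪deriv w x, deriv u x⟫ = 0

variable {u v w : ℝ → E3} {q a : ℝ}

lemma Admissible.add_smul (hv : Admissible u v) (hw : Admissible u w) (c : ℝ) :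
    Admissible u (fun t => v t + c • w t) :=
  ⟨hv.per.add (hw.per.smul c), fun x => by
    rw [hv.per.deriv_add (hw.per.smul c), hw.per.deriv_smul c]
    simp only
    rw [inner_add_left, real_inner_smul_left, hv.orth, hw.orth]; simp⟩

lemma admissible_integral (hper : Function.Periodic u a) {ζ : ℝ → E3}
    (hζ : ContDiff ℝ 1 ζ) (hζp : Function.Periodic ζ 1) (horth : ∀ x, ⟪ζ x, deriv u x⟫ = 0) :
    Admissible u (fun t => ∫ s in (t - a)..t, ζ s) ∧
      deriv (fun t => ∫ s in (t - a)..t, ζ s) = fun t => ζ t - ζ (t - a) := by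
  have hc := hζ.continuous
  have hd : ∀ t, HasDerivAt (fun t => ∫ s in (t - a)..t, ζ s) (ζ t - ζ (t - a)) t := by
    intro t
    have e : (fun t => ∫ s in (t - a)..t, ζ s) =
        fun t => (∫ s in (0 : ℝ)..t, ζ s) - ∫ s in (0 : ℝ)..(t - a), ζ s := by
      ext1 t
      rw [intervalIntegral.integral_interval_sub_left (hc.intervalIntegrable _ _)
        (hc.intervalIntegrable _ _)]
    rw [e]
    have h1 : ∀ t, HasDerivAt (fun t => ∫ s in (0 : ℝ)..t, ζ s) (ζ t) t := fun t =>
      intervalIntegral.integral_hasDerivAt_right (hc.intervalIntegrable _ _)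
        hc.aestronglyMeasurable.stronglyMeasurableAtFilter hc.continuousAt
    have h2 := (h1 (t - a)).scomp t ((hasDerivAt_id t).sub_const a)
    rw [one_smul] at h2
    exact (h1 t).sub h2
  have hd' : deriv (fun t => ∫ s in (t - a)..t, ζ s) = fun t => ζ t - ζ (t - a) :=
    funext fun t => (hd t).deriv
  refine ⟨⟨⟨?_, ?_⟩, ?_⟩, hd'⟩
  · rw [show (2 : WithTop ℕ∞) = 1 + 1 by norm_num, contDiff_succ_iff_deriv, hd']
    refine ⟨fun t => (hd t).differentiableAt, by simp, hζ.sub (hζ.comp ?_)⟩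
    fun_prop
  · intro t
    simp only
    have := intervalIntegral.integral_comp_add_right (a := t - a) (b := t) ζ 1
    rw [show t + 1 - a = t - a + 1 by ring, ← this]
    exact intervalIntegral.integral_congr fun s _ => hζp s
  · intro x
    rw [hd']
    have := horth (x - a)
    rw [(periodic_deriv hper).sub_eq] at this
    simp only
    rw [inner_sub_left, horth, this, sub_zero]

/-- The multiple `|b|² e - ⟨e,b⟩ b` of the projection of `e` off `b`. -/
def offProj (b e : E3) : E3 := ‖b‖ ^ 2 • e - ⟪e, b⟫ • b

lemma inner_offProj (b e : E3) : ⟪offProj b e, b⟫ = 0 := by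
  rw [offProj, inner_sub_left, real_inner_smul_left, real_inner_smul_left,
    real_inner_self_eq_norm_sq]; ring

lemma exists_admissible_bump (hu : C2Per u) (hper : Function.Periodic u a) (m δ : ℝ) (e : E3) :
    Admissible u (fun t => ∫ s in (t - a)..t, perBump m δ s • offProj (deriv u s) e) ∧
      deriv (fun t => ∫ s in (t - a)..t, perBump m δ s • offProj (deriv u s) e) =
        fun t => perBump m δ t • offProj (deriv u t) e -
          perBump m δ (t - a) • offProj (deriv u (t - a)) e := by
  have h1 := hu.contDiff_deriv
  refine admissible_integral hper (ζ := fun s => perBump m δ s • offProj (deriv u s) e) ?_ ?_ ?_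
  · refine (contDiff_perBump m δ).smul ?_
    unfold offProj
    exact ((h1.norm_sq ℝ).smul contDiff_const).sub ((contDiff_const.inner ℝ h1).smul h1)
  · intro s
    simp only [perBump_periodic m δ s, hu.periodic_deriv s]
  · intro s
    rw [real_inner_smul_left, inner_offProj, mul_zero]

lemma continuous_inner_offProj (hu : C2Per u) (ν e : E3) :
    Continuous fun t => ⟪ν, offProj (deriv u t) e⟫ := by
  have := hu.continuous_deriv
  unfold offProj
  fun_prop

lemma exists_admissible_jump (hu : C2Per u) (hper : Function.Periodic u a)
    (ha' : a ≤ 1 / 2) {y ε : ℝ} {ν e : E3} (hε : 0 < ε) (hεa : ε ≤ a)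
    (hpos : ∀ t, y < t → t < y + ε → 0 < ⟪ν, offProj (deriv u t) e⟫) :
    ∃ w, Admissible u w ∧ deriv w y = 0 ∧ ⟪ν, w (y + a) - w y⟫ ≠ 0 := by
  have hz : ∀ s, y - a ≤ s → s ≤ y → perBump (y + ε / 2) (ε / 2) s = 0 := fun s hs hs' => by
    have : |s - (y + ε / 2)| = y + ε / 2 - s := by rw [abs_of_nonpos] <;> linarith
    exact perBump_eq_zero (by positivity) (by linarith) (by linarith)
  have hz' : ∀ s, y + ε ≤ s → s ≤ y + a → perBump (y + ε / 2) (ε / 2) s = 0 := fun s hs hs' => by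
    have : |s - (y + ε / 2)| = s - (y + ε / 2) := by rw [abs_of_nonneg]; linarith
    exact perBump_eq_zero (by positivity) (by linarith) (by linarith)
  obtain ⟨hadm, hder⟩ := exists_admissible_bump hu hper (y + ε / 2) (ε / 2) e
  have hcζ : Continuous fun s => perBump (y + ε / 2) (ε / 2) s • offProj (deriv u s) e := by
    have h1 := hu.continuous_deriv
    have h2 := (contDiff_perBump (y + ε / 2) (ε / 2)).continuous
    unfold offProj
    fun_prop
  refine ⟨_, hadm, ?_, ?_⟩
  · rw [hder]
    simp only
    rw [hz y (by linarith) le_rfl, hz (y - a) le_rfl (by linarith)]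
    simp
  · have e1 : ∫ s in (y - a)..y, perBump (y + ε / 2) (ε / 2) s • offProj (deriv u s) e = 0 := by
      rw [intervalIntegral.integral_congr (g := fun _ => (0 : E3)), intervalIntegral.integral_zero]
      intro s hs
      rw [uIcc_of_le (by linarith)] at hs
      simp only
      rw [hz s hs.1 hs.2, zero_smul]
    have e2 : ∫ s in (y + ε)..(y + a),
        perBump (y + ε / 2) (ε / 2) s • offProj (deriv u s) e = 0 := by
      rw [intervalIntegral.integral_congr (g := fun _ => (0 : E3)), intervalIntegral.integral_zero]
      intro s hs
      rw [uIcc_of_le (by linarith)] at hs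
      simp only
      rw [hz' s hs.1 hs.2, zero_smul]
    rw [e1, sub_zero, add_sub_cancel_right, ← intervalIntegral.integral_add_adjacent_intervals
      (hcζ.intervalIntegrable y (y + ε)) (hcζ.intervalIntegrable (y + ε) (y + a)), e2, add_zero,
      ← innerSL_apply_apply ℝ, ← ContinuousLinearMap.intervalIntegral_comp_comm _
        (hcζ.intervalIntegrable _ _)]
    refine (intervalIntegral.intervalIntegral_pos_of_pos_on
      (((innerSL ℝ ν).continuous.comp hcζ).intervalIntegrable _ _) (fun s hs => ?_)
      (by linarith)).ne'
    change 0 < ⟪ν, perBump (y + ε / 2) (ε / 2) s • offProj (deriv u s) e⟫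
    rw [real_inner_smul_right]
    refine mul_pos (perBump_pos (by linarith) ?_) (hpos s hs.1 hs.2)
    rw [abs_lt]; constructor <;> linarith [hs.1, hs.2]

lemma inner_cr_left (n b x : E3) : ⟪n, cr b x⟫ = ⟪cr n b, x⟫ := by
  simp [cr, PiLp.inner_apply, Fin.sum_univ_three]; ring

lemma inner_cr_offProj (b e : E3) : ⟪cr b e, cr b (offProj b e)⟫ = ‖b‖ ^ 2 * ‖cr b e‖ ^ 2 := by
  rw [offProj, cr_sub_right, cr_smul_right, cr_smul_right, cr_self, smul_zero, sub_zero,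
    real_inner_smul_right, real_inner_self_eq_norm_sq]

lemma inner_offProj_self (b e : E3) : ⟪e, offProj b e⟫ = ‖cr b e‖ ^ 2 := by
  rw [norm_cr_sq, wedgeSq, offProj, inner_sub_right, real_inner_smul_right, real_inner_smul_right,
    real_inner_self_eq_norm_sq, real_inner_comm]; ring

/-- The coefficients of the singularities of the integrands of the first variation at a
point `y` of a curve covered with period `a`. -/
def singCoeff (u : ℝ → E3) (a y : ℝ) (w : ℝ → E3) : Fin 3 → ℝ :=
  ![⟪cr (deriv u y) (deriv (deriv u) y), cr (deriv u y) (w (y + a) - w y - a • deriv w y)⟫,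
    ⟪cr (deriv u y) (deriv (deriv u) y), cr (deriv u y) (deriv w y)⟫,
    ⟪deriv u y, w (y + a) - w y⟫]

lemma singCoeff_add_smul (hv : C2Per v) (hw : C2Per w) (a y c : ℝ) (i : Fin 3) :
    singCoeff u a y (fun t => v t + c • w t) i = singCoeff u a y v i + c * singCoeff u a y w i := by
  have e1 : v (y + a) + c • w (y + a) - (v y + c • w y) =
      (v (y + a) - v y) + c • (w (y + a) - w y) := by module
  have e2 : (v (y + a) - v y) + c • (w (y + a) - w y) - a • (deriv v y + c • deriv w y) =
      (v (y + a) - v y - a • deriv v y) + c • (w (y + a) - w y - a • deriv w y) := by module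
  fin_cases i <;>
  · simp only [singCoeff, hv.deriv_add (hw.smul c), hw.deriv_smul c, e1, e2]
    simp [cr_add_right, cr_smul_right, inner_add_right, real_inner_smul_right]

lemma exists_singCoeff_ne (hu : C2Per u) (hper : Function.Periodic u a) (ha : 0 < a)
    (ha' : a ≤ 1 / 2) {y : ℝ} (hc : cr (deriv u y) (deriv (deriv u) y) ≠ 0) (i : Fin 3) :
    ∃ w, Admissible u w ∧ singCoeff u a y w i ≠ 0 := by
  have hn := norm_pos_iff.2 hc
  have hT : 0 < ‖deriv u y‖ := by
    refine norm_pos_iff.2 fun h => hc ?_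
    rw [h, ← zero_smul ℝ (0 : E3), cr_smul_left, zero_smul, zero_smul]
  have hjump : ∀ ν e : E3, (∀ᶠ t in 𝓝[>] y, 0 < ⟪ν, offProj (deriv u t) e⟫) →
      ∃ w, Admissible u w ∧ deriv w y = 0 ∧ ⟪ν, w (y + a) - w y⟫ ≠ 0 := by
    intro ν e h
    obtain ⟨b, hb, hsub⟩ := mem_nhdsGT_iff_exists_Ioo_subset.1 h
    have hb : y < b := hb
    refine exists_admissible_jump hu hper ha' (ε := min (b - y) a) (by simp [hb, ha])
      (min_le_right _ _) fun t ht ht' => hsub ⟨ht, ?_⟩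
    linarith [min_le_left (b - y) a]
  fin_cases i
  · obtain ⟨w, hw, hw0, hne⟩ := hjump (cr (cr (deriv u y) (deriv (deriv u) y)) (deriv u y))
      (deriv (deriv u) y) (by
        refine nhdsWithin_le_nhds ((continuous_inner_offProj hu _ _).continuousAt.eventually
          (lt_mem_nhds ?_))
        simp only
        rw [← inner_cr_left, inner_cr_offProj]; positivity)
    refine ⟨w, hw, ?_⟩
    simp only [singCoeff, hw0, smul_zero, sub_zero, inner_cr_left _ _ (w (y + a) - w y)]
    exact hne
  · obtain ⟨hadm, hder⟩ := exists_admissible_bump hu hper y (a / 2) (deriv (deriv u) y)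
    refine ⟨_, hadm, ?_⟩
    simp only [singCoeff, hder]
    have h0 : perBump y (a / 2) (y - a) = 0 := by
      have : |y - a - y| = a := by rw [sub_sub_cancel_left, abs_neg, abs_of_pos ha]
      exact perBump_eq_zero (by positivity) (by linarith) (by linarith)
    have h1 : 0 < perBump y (a / 2) y := perBump_pos (by linarith) (by simpa using ha)
    rw [h0, zero_smul, sub_zero, cr_smul_right]
    simp only [Fin.mk_one, Matrix.cons_val_one, Matrix.cons_val_zero]
    rw [real_inner_smul_right, inner_cr_offProj]
    positivity
  · obtain ⟨w, hw, hw0, hne⟩ := hjump (deriv u y) (deriv u y) (by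
        have hd : HasDerivAt (fun t => ⟪cr (cr (deriv u y) (deriv (deriv u) y)) (deriv u y),
            deriv u t⟫) (‖cr (deriv u y) (deriv (deriv u) y)‖ ^ 2) y := by
          have := ((innerSL ℝ (cr (cr (deriv u y) (deriv (deriv u) y)) (deriv u y))).hasFDerivAt
            (x := deriv u y)).comp_hasDerivAt y (hu.hasDerivAt_deriv y)
          simp only [innerSL_apply_apply, ← inner_cr_left, real_inner_self_eq_norm_sq] at this
          exact this
        have hev := hd.eventually_ne (c := 0) (by positivity)
        have hev' := nhdsWithin_mono y (fun t (ht : t ∈ Ioi y) => (ne_of_gt ht : t ≠ y)) hev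
        filter_upwards [hev'] with t ht
        rw [inner_offProj_self]
        have : cr (deriv u t) (deriv u y) ≠ 0 := by
          intro h0
          apply ht
          have h1 : cr (deriv u y) (deriv u t) = 0 := by
            rw [← norm_eq_zero, ← sq_eq_zero_iff, norm_cr_sq] at h0 ⊢
            rw [wedgeSq] at h0 ⊢
            rw [← h0, real_inner_comm]; ring
          rw [← inner_cr_left, h1, inner_zero_right]
        positivity)
    exact ⟨w, hw, hne⟩

lemma exists_add_mul_ne_zero (x y : Fin 3 → ℝ) :
    ∃ c : ℝ, ∀ i, x i ≠ 0 ∨ y i ≠ 0 → x i + c * y i ≠ 0 := by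
  obtain ⟨c, hc⟩ := (Set.finite_range fun i => -x i / y i).exists_notMem
  refine ⟨c, fun i hi h0 => ?_⟩
  by_cases hy : y i = 0
  · rw [hy, mul_zero, add_zero] at h0
    simp [h0, hy] at hi
  · exact hc ⟨i, by simp only; rw [div_eq_iff hy]; linarith⟩

lemma exists_singCoeff_all_ne (hu : C2Per u) (hper : Function.Periodic u a) (ha : 0 < a)
    (ha' : a ≤ 1 / 2) {y : ℝ} (hc : cr (deriv u y) (deriv (deriv u) y) ≠ 0) :
    ∃ w, Admissible u w ∧ ∀ i, singCoeff u a y w i ≠ 0 := by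
  choose W hW hWne using exists_singCoeff_ne hu hper ha ha' hc
  have step : ∀ v w, Admissible u v → Admissible u w → ∃ z, Admissible u z ∧
      ∀ i, singCoeff u a y v i ≠ 0 ∨ singCoeff u a y w i ≠ 0 → singCoeff u a y z i ≠ 0 := by
    intro v w hv hw
    obtain ⟨c, h⟩ := exists_add_mul_ne_zero (singCoeff u a y v) (singCoeff u a y w)
    exact ⟨_, hv.add_smul hw c, fun i hi => by
      rw [singCoeff_add_smul hv.per hw.per]; exact h i hi⟩
  obtain ⟨z, hz, hz'⟩ := step _ _ (hW 0) (hW 1)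
  obtain ⟨z', hzz, hzz'⟩ := step _ _ hz (hW 2)
  refine ⟨z', hzz, fun i => hzz' i ?_⟩
  fin_cases i
  · exact Or.inl (hz' 0 (Or.inl (hWne 0)))
  · exact Or.inl (hz' 1 (Or.inr (hWne 1)))
  · exact Or.inr (hWne 2)

lemma C2Per.exists_cr_ne_zero (hu : C2Per u) (hreg : ∀ x, deriv u x ≠ 0) :
    ∃ y, cr (deriv u y) (deriv (deriv u) y) ≠ 0 := by
  by_contra! hall
  have hcont : Continuous fun x => ‖u x‖ ^ 2 := hu.continuous.norm.pow 2
  obtain ⟨y, _, hy⟩ := (isCompact_Icc (a := (0 : ℝ)) (b := 1)).exists_isMaxOn ⟨0, by simp⟩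
    hcont.continuousOn
  have hmax : ∀ x, ‖u x‖ ^ 2 ≤ ‖u y‖ ^ 2 := fun x => by
    obtain ⟨z, hz, hzx⟩ := hu.periodic.exists_mem_Ico₀ one_pos x
    rw [hzx]; exact hy ⟨hz.1, hz.2.le⟩
  have hd1 : deriv (fun x => ‖u x‖ ^ 2) = fun x => 2 * ⟪u x, deriv u x⟫ :=
    funext fun x => (hu.hasDerivAt x).norm_sq.deriv
  have hd2 : ∀ x, deriv (deriv fun x => ‖u x‖ ^ 2) x =
      2 * (⟪u x, deriv (deriv u) x⟫ + ‖deriv u x‖ ^ 2) := fun x => by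
    rw [hd1, (((hu.hasDerivAt x).inner ℝ (hu.hasDerivAt_deriv x)).const_mul 2).deriv,
      real_inner_self_eq_norm_sq]
  have hloc : IsLocalMax (fun x => ‖u x‖ ^ 2) y := Eventually.of_forall hmax
  have hz : ⟪u y, deriv u y⟫ = 0 := by
    have := hloc.deriv_eq_zero
    rw [hd1] at this
    simpa using this
  have hT := norm_pos_iff.2 (hreg y)
  have hS : ⟪u y, deriv (deriv u) y⟫ = 0 := by
    set T := deriv u y
    set S := deriv (deriv u) y
    have h0 : ‖‖T‖ ^ 2 • S - ⟪T, S⟫ • T‖ ^ 2 = ‖T‖ ^ 2 * ‖cr T S‖ ^ 2 := by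
      rw [norm_sub_sq_real, norm_smul, norm_smul, norm_cr_sq, wedgeSq, real_inner_smul_left,
        real_inner_smul_right, real_inner_comm T S, mul_pow, mul_pow, Real.norm_eq_abs,
        Real.norm_eq_abs, sq_abs, sq_abs]
      ring
    rw [hall y, norm_zero, zero_pow two_ne_zero, mul_zero, sq_eq_zero_iff, norm_eq_zero,
      sub_eq_zero] at h0
    have h1 : ⟪u y, ‖T‖ ^ 2 • S⟫ = 0 := by rw [h0, real_inner_smul_right, hz, mul_zero]
    rw [real_inner_smul_right] at h1
    exact (mul_eq_zero.1 h1).resolve_left (by positivity)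
  have hpos : 0 < deriv (deriv fun x => ‖u x‖ ^ 2) y := by
    rw [hd2, hS]; positivity
  have hmin := isLocalMin_of_deriv_deriv_pos hpos hloc.deriv_eq_zero hcont.continuousAt
  have hev : (fun x => ‖u x‖ ^ 2) =ᶠ[𝓝 y] fun _ => ‖u y‖ ^ 2 := by
    filter_upwards [hmin] with x hx
    exact le_antisymm (hmax x) hx
  rw [hev.deriv.deriv_eq] at hpos
  simp at hpos

/-- A functional on admissible fields given by the first variation at a multiply covered curve
vanishes. -/
lemma eq_zero_of_eq_deltaTP (hu : C2Per u) (hreg : ∀ x, deriv u x ≠ 0) (hq : 2 < q)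
    (hper : Function.Periodic u a) (ha : 0 < a) (ha1 : a < 1) {ℓ : (ℝ → E3) → ℝ} {ρ : ℝ}
    (hℓ : ∀ v w c, Admissible u v → Admissible u w → ℓ (fun t => v t + c • w t) = ℓ v + c * ℓ w)
    (h : ∀ w, Admissible u w → ℓ w = -(ρ * deltaTP q u w)) (hv : Admissible u v) : ℓ v = 0 := by
  obtain ⟨a, hper, ha, ha'⟩ : ∃ a, Function.Periodic u a ∧ 0 < a ∧ a ≤ 1 / 2 := by
    rcases le_total a (1 / 2) with h | h
    · exact ⟨a, hper, ha, h⟩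
    · exact ⟨1 - a, hu.periodic.sub_period hper, by linarith, by linarith⟩
  obtain ⟨y, hc⟩ := hu.exists_cr_ne_zero hreg
  have hz : ∀ w, Admissible u w → (∀ i, singCoeff u a y w i ≠ 0) → ℓ w = 0 := fun w hw hne => by
    rw [h w hw, hu.deltaTP_eq_zero hw.per hq hper ha ha' (hreg y) hc (hne 0) (hne 1) (hne 2),
      mul_zero, neg_zero]
  obtain ⟨w, hw, hne⟩ := exists_singCoeff_all_ne hu hper ha ha' hc
  obtain ⟨c, hcc⟩ := exists_add_mul_ne_zero (singCoeff u a y v) (singCoeff u a y w)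
  have h1 := hz _ (hv.add_smul hw c) fun i => by
    rw [singCoeff_add_smul hv.per hw.per]; exact hcc i (Or.inr (hne i))
  rw [hℓ v w c hv hw, hz w hw hne, mul_zero, add_zero] at h1
  exact h1

end TestFields

section Scheme

variable {u v w f g f' g' : ℝ → E3} {q a κ ρ τ : ℝ}

/-- The bilinear form on the left-hand side of the scheme. -/
def flowForm (κ : ℝ) (v u w : ℝ → E3) : ℝ :=
  H2inner v w + κ * ∫ x in Ioc (0 : ℝ) 1, ⟪deriv (deriv u) x, deriv (deriv w) x⟫

/-- The integrand of `flowForm`. -/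
def flowDensity (κ : ℝ) (v u w : ℝ → E3) (x : ℝ) : ℝ :=
  ⟪v x, w x⟫ + ⟪deriv v x, deriv w x⟫ + ⟪deriv (deriv v) x, deriv (deriv w) x⟫ +
    κ * ⟪deriv (deriv u) x, deriv (deriv w) x⟫

lemma continuous_flowDensity (hv : C2Per v) (hu : C2Per u) (hw : C2Per w) :
    Continuous (flowDensity κ v u w) := by
  have := hv.continuous; have := hv.continuous_deriv; have := hv.continuous_deriv2
  have := hw.continuous; have := hw.continuous_deriv; have := hw.continuous_deriv2
  have := hu.continuous_deriv2
  unfold flowDensity; fun_prop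

lemma flowForm_eq (hv : C2Per v) (hu : C2Per u) (hw : C2Per w) :
    flowForm κ v u w = ∫ x in Ioc (0 : ℝ) 1, flowDensity κ v u w x := by
  have := hv.continuous; have := hv.continuous_deriv; have := hv.continuous_deriv2
  have := hw.continuous; have := hw.continuous_deriv; have := hw.continuous_deriv2
  have := hu.continuous_deriv2
  unfold flowForm H2inner flowDensity
  rw [← integral_const_mul, ← integral_add]
  · exact Continuous.integrableOn_Ioc (by fun_prop)
  · exact Continuous.integrableOn_Ioc (by fun_prop)

lemma flowForm_add_smul (hv : C2Per v) (hu : C2Per u) (hf : C2Per f) (hg : C2Per g) (c : ℝ) :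
    flowForm κ v u (fun t => f t + c • g t) = flowForm κ v u f + c * flowForm κ v u g := by
  rw [flowForm_eq hv hu (hf.add (hg.smul c)), flowForm_eq hv hu hf, flowForm_eq hv hu hg,
    ← integral_const_mul, ← integral_add]
  · congr 1
    ext x
    unfold flowDensity
    rw [hf.deriv2_add (hg.smul c), hg.deriv2_smul c, hf.deriv_add (hg.smul c), hg.deriv_smul c]
    simp only [inner_add_right, real_inner_smul_right]
    ring
  · exact (continuous_flowDensity hv hu hf).integrableOn_Ioc
  · exact ((continuous_flowDensity hv hu hg).const_mul c).integrableOn_Ioc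

lemma flowForm_sub_left (hf : C2Per f) (hg : C2Per g) (hf' : C2Per f') (hg' : C2Per g')
    (hw : C2Per w) : flowForm κ (fun t => f t - g t) (fun t => f' t - g' t) w =
      flowForm κ f f' w - flowForm κ g g' w := by
  rw [flowForm_eq (hf.sub hg) (hf'.sub hg') hw, flowForm_eq hf hf' hw, flowForm_eq hg hg' hw,
    ← integral_sub]
  · congr 1
    ext x
    unfold flowDensity
    rw [hf.deriv2_sub hg, hf'.deriv2_sub hg', hf.deriv_sub hg]
    simp only [inner_sub_left]
    ring
  · exact (continuous_flowDensity hf hf' hw).integrableOn_Ioc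
  · exact (continuous_flowDensity hg hg' hw).integrableOn_Ioc

lemma flowForm_shift (hv : C2Per v) (hu : C2Per u) (hw : C2Per w) (a : ℝ) :
    flowForm κ v u (fun t => w (t + -a)) =
      flowForm κ (fun t => v (t + a)) (fun t => u (t + a)) w := by
  rw [flowForm_eq hv hu (hw.shift _), flowForm_eq (hv.shift a) (hu.shift a) hw]
  have hp : Function.Periodic (flowDensity κ v u fun t => w (t + -a)) 1 := fun x => by
    have h1 := (hw.shift (-a))
    simp only [flowDensity, hv.periodic x, hv.periodic_deriv x, hv.periodic_deriv2 x,
      hu.periodic_deriv2 x, h1.periodic_deriv x, h1.periodic_deriv2 x]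
    rw [show x + 1 + -a = x + -a + 1 by ring, hw.periodic]
  rw [← integral_shift hp a]
  congr 1
  ext x
  simp only [flowDensity, deriv_comp_add_right, add_neg_cancel_right]

lemma H2inner_self_nonneg (v : ℝ → E3) : 0 ≤ H2inner v v := by
  refine integral_nonneg fun x => ?_
  simp only [Pi.zero_apply, real_inner_self_eq_norm_sq]
  positivity

lemma C2Per.bend_le_H2inner (hv : C2Per v) : bend v ≤ H2inner v v := by
  have := hv.continuous; have := hv.continuous_deriv; have := hv.continuous_deriv2
  refine integral_mono (Continuous.integrableOn_Ioc (by fun_prop))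
    (Continuous.integrableOn_Ioc (by fun_prop)) fun x => ?_
  simp only [real_inner_self_eq_norm_sq]
  nlinarith [sq_nonneg ‖v x‖, sq_nonneg ‖deriv v x‖]

lemma C2Per.norm_deriv_sq_le_H2inner (hv : C2Per v) (x : ℝ) : ‖deriv v x‖ ^ 2 ≤ H2inner v v :=
  (hv.norm_deriv_sq_le x).trans hv.bend_le_H2inner

lemma C2Per.eq_zero_of_H2inner (hv : C2Per v) (h : H2inner v v ≤ 0) (x : ℝ) : v x = 0 := by
  have hd : ∀ x, deriv v x = 0 := fun x => by
    have := (hv.norm_deriv_sq_le_H2inner x).trans h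
    exact norm_eq_zero.1 (pow_eq_zero_iff two_ne_zero |>.1 (le_antisymm this (sq_nonneg _)))
  have hc : ∀ y, v y = v x := fun y =>
    is_const_of_deriv_eq_zero (hv.smooth.differentiable (by norm_num)) hd y x
  have h1 : H2inner v v = ‖v x‖ ^ 2 := by
    have h2 : deriv v = fun _ => 0 := funext hd
    unfold H2inner
    simp only [h2, deriv_const', hc, inner_zero_left, add_zero, real_inner_self_eq_norm_sq]
    simp
  rw [h1] at h
  exact norm_eq_zero.1 (pow_eq_zero_iff two_ne_zero |>.1 (le_antisymm h (sq_nonneg _)))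

/-- One step `u₀ ↦ u₀ + τ v` of the semi-implicit scheme. -/
structure Step (κ ρ q τ : ℝ) (u₀ v : ℝ → E3) : Prop where
  pos : 0 < τ
  per : C2Per u₀
  adm : Admissible u₀ v
  eqn : ∀ w, Admissible u₀ w → flowForm κ v (fun t => u₀ t + τ • v t) w = -(ρ * deltaTP q u₀ w)

variable {u₀ : ℝ → E3}

namespace Step

lemma per_next (h : Step κ ρ q τ u₀ v) : C2Per (fun t => u₀ t + τ • v t) :=
  h.per.add (h.adm.per.smul τ)

lemma bending_identity (h : Step κ ρ q τ u₀ v) :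
    τ * H2inner v v + κ / 2 * bend (fun t => u₀ t + τ • v t) + κ / 2 * τ ^ 2 * bend v =
      κ / 2 * bend u₀ + τ * flowForm κ v (fun t => u₀ t + τ • v t) v := by
  have h0 := h.per.continuous_deriv2
  have h1 := h.adm.per.continuous_deriv2
  have e1 : bend u₀ = bend (fun t => u₀ t + τ • v t) + τ ^ 2 * bend v - 2 * τ *
      ∫ x in Ioc (0 : ℝ) 1, ⟪deriv (deriv fun t => u₀ t + τ • v t) x, deriv (deriv v) x⟫ := by
    unfold bend
    rw [h.per.deriv2_add (h.adm.per.smul τ), h.adm.per.deriv2_smul τ, ← integral_const_mul,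
      ← integral_const_mul, ← integral_add, ← integral_sub]
    · congr 1
      ext x
      rw [norm_add_sq_real, norm_smul, inner_add_left, real_inner_smul_left,
        real_inner_smul_right, real_inner_self_eq_norm_sq, mul_pow, Real.norm_eq_abs, sq_abs]
      ring
    all_goals exact Continuous.integrableOn_Ioc (by fun_prop)
  rw [flowForm, e1]
  ring

lemma norm_deriv_sq (h : Step κ ρ q τ u₀ v) (x : ℝ) :
    ‖deriv (fun t => u₀ t + τ • v t) x‖ ^ 2 = ‖deriv u₀ x‖ ^ 2 + τ ^ 2 * ‖deriv v x‖ ^ 2 := by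
  rw [h.per.deriv_add (h.adm.per.smul τ), h.adm.per.deriv_smul τ]
  simp only
  rw [norm_add_sq_real, real_inner_smul_right, real_inner_comm, h.adm.orth, norm_smul,
    Real.norm_eq_abs, mul_pow, sq_abs]
  ring

/-- A step whose right-hand side vanishes dissipates the bending energy. -/
lemma energy_of_vanish (h : Step κ ρ q τ u₀ v) (hκ : 0 < κ)
    (hz : flowForm κ v (fun t => u₀ t + τ • v t) v = 0) :
    τ * H2inner v v + κ / 2 * bend (fun t => u₀ t + τ • v t) ≤ κ / 2 * bend u₀ := by
  have h1 := h.bending_identity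
  rw [hz, mul_zero, add_zero] at h1
  have := bend_nonneg v
  have : 0 ≤ κ / 2 * τ ^ 2 * bend v := by positivity
  linarith

lemma periodic_next (h : Step κ ρ q τ u₀ v) (hκ : 0 < κ) (hper : Function.Periodic u₀ a)
    (hz : ∀ w, Admissible u₀ w → flowForm κ v (fun t => u₀ t + τ • v t) w = 0) :
    Function.Periodic (fun t => u₀ t + τ • v t) a := by
  have hv := h.adm.per
  have hu := h.per_next
  set D : ℝ → E3 := fun t => v t - v (t + a) with hD
  have hDper : C2Per D := hv.sub (hv.shift a)
  have hdp := _root_.periodic_deriv hper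
  have hshift : ∀ {w : ℝ → E3} {b : ℝ}, Function.Periodic (deriv u₀) b → Admissible u₀ w →
      Admissible u₀ fun t => w (t + b) := fun {w b} hb hw =>
    ⟨hw.per.shift b, fun x => by
      rw [deriv_comp_add_right]
      simp only
      rw [← hb x, hw.orth]⟩
  have hDadm : Admissible u₀ D := by
    have := h.adm.add_smul (hshift hdp h.adm) (-1)
    convert this using 2 with t
    module
  have h1 := hz _ hDadm
  have h2 := hz _ (hshift hdp.neg hDadm)
  rw [flowForm_shift hv hu hDper] at h2
  have h3 := flowForm_sub_left (κ := κ) hv (hv.shift a) hu (hu.shift a) hDper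
  rw [h1, h2, sub_zero] at h3
  have e : (fun t => u₀ t + τ • v t - (u₀ (t + a) + τ • v (t + a))) = fun t => τ • D t := by
    ext1 t; rw [hper, hD]; module
  rw [e, flowForm, hDper.deriv2_smul τ] at h3
  simp only [real_inner_smul_left, real_inner_self_eq_norm_sq] at h3
  rw [integral_const_mul] at h3
  change H2inner D D + κ * (τ * bend D) = 0 at h3
  have hb := bend_nonneg D
  have ht := h.pos
  have h4 : 0 ≤ κ * (τ * bend D) := by positivity
  intro t
  have h5 := hDper.eq_zero_of_H2inner (by linarith) t
  have h6 : v (t + a) = v t := by rw [hD, sub_eq_zero] at h5; exact h5.symm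
  simp only [hper t, h6]

end Step

/-- Either the tangent-point energy is absent or the curve is multiply covered. -/
def Flat (ρ : ℝ) (u : ℝ → E3) : Prop :=
  ρ = 0 ∨ ∃ a, 0 < a ∧ a < 1 ∧ Function.Periodic u a

lemma Step.flat (h : Step κ ρ q τ u₀ v) (hκ : 0 < κ) (hq : 2 < q)
    (hreg : ∀ x, 1 ≤ ‖deriv u₀ x‖) (hf : Flat ρ u₀) :
    Flat ρ (fun t => u₀ t + τ • v t) ∧
      τ * H2inner v v + κ / 2 * bend (fun t => u₀ t + τ • v t) ≤ κ / 2 * bend u₀ := by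
  have hz : ∀ w, Admissible u₀ w → flowForm κ v (fun t => u₀ t + τ • v t) w = 0 := by
    intro w hw
    rcases hf with rfl | ⟨a, ha, ha1, hper⟩
    · simpa using h.eqn w hw
    · have hreg' : ∀ x, deriv u₀ x ≠ 0 := fun x hx => by
        have := hreg x; rw [hx, norm_zero] at this; linarith
      exact eq_zero_of_eq_deltaTP h.per hreg' hq hper ha ha1
        (fun v' w' c hv' hw' => flowForm_add_smul h.adm.per h.per_next hv'.per hw'.per c) h.eqn hw
  refine ⟨?_, h.energy_of_vanish hκ (hz v h.adm)⟩
  rcases hf with h0 | ⟨a, ha, ha1, hper⟩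
  · exact Or.inl h0
  · exact Or.inr ⟨a, ha, ha1, h.periodic_next hκ hper hz⟩

lemma deltaTP_smul (hw : C2Per w) (c : ℝ) :
    deltaTP q u (fun t => c • w t) = c * deltaTP q u w := by
  have e1 : Mfun q u u (fun t => c • w t) = c * Mfun q u u w := by
    unfold Mfun
    rw [← integral_const_mul]
    congr 1; ext p
    simp only [Mintegrand, hw.deriv_smul c]
    rw [show c • w p.1 - c • w p.2 - wrap (p.1 - p.2) • c • deriv w p.2 =
      c • (w p.1 - w p.2 - wrap (p.1 - p.2) • deriv w p.2) by module]
    simp only [wedgeInner, real_inner_smul_right]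
    ring
  have e2 : Mfun q u (fun t => c • w t) u = c * Mfun q u w u := by
    unfold Mfun
    rw [← integral_const_mul]
    congr 1; ext p
    simp only [Mintegrand, hw.deriv_smul c, wedgeInner, real_inner_smul_right]
    ring
  have e3 : Afun q u u (fun t => c • w t) = c * Afun q u u w := by
    unfold Afun
    rw [← integral_const_mul]
    congr 1; ext p
    simp only [Aintegrand, ← smul_sub, real_inner_smul_right]
    ring
  rw [deltaTP, deltaTP, e1, e2, e3]; ring

/-- The Lipschitz constant of the first variation on a class of tame curves. -/
def varConst (Λ ℓ : ℝ) : ℝ := 64 / ℓ ^ 9 * (27 * (1 + 144 * Λ ^ 2 + 144))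

/-- The second-order constant of the tangent-point energy on a class of tame curves. -/
def remConst (Λ ℓ : ℝ) : ℝ := 10 ^ 8 / ℓ ^ 12 * (27 * (1 + 144 * Λ ^ 2 + 144))

lemma varConst_nonneg {Λ ℓ : ℝ} (hℓ : 0 < ℓ) : 0 ≤ varConst Λ ℓ := by
  unfold varConst; positivity

lemma remConst_nonneg {Λ ℓ : ℝ} (hℓ : 0 < ℓ) : 0 ≤ remConst Λ ℓ := by
  unfold remConst; positivity

/-- One step from a tame curve is short, keeps the energy finite and dissipates it. -/
lemma Step.of_tame {Λ ℓ e₀ : ℝ} (h : Step κ ρ q τ u₀ v) (hκ : 0 < κ) (hρ : 0 ≤ ρ) (hq : 2 < q)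
    (hq4 : q ≤ 4) (hu : Tame u₀ Λ ℓ) (hℓ : 0 < ℓ) (hℓ1 : ℓ ≤ 1) (hfin : TPe q u₀ ≠ ⊤)
    (hbend : κ / 2 * bend u₀ ≤ e₀) (hτ₁ : τ * (16 * e₀) ≤ ℓ ^ 2)
    (hτ₂ : τ * (8 * (ρ * varConst Λ ℓ)) ≤ ℓ) (hτ₃ : τ * (2 * (ρ * remConst Λ ℓ)) ≤ 1) :
    τ * √(H2inner v v) ≤ ℓ / 2 ∧ TPe q (fun t => u₀ t + τ • v t) ≠ ⊤ ∧
    τ / 2 * H2inner v v + (κ / 2 * bend (fun t => u₀ t + τ • v t) +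
      ρ * TPr q (fun t => u₀ t + τ • v t)) ≤ κ / 2 * bend u₀ + ρ * TPr q u₀ := by
  have hτ := h.pos
  have hv := h.adm.per
  rcases (H2inner_self_nonneg v).eq_or_lt with h0 | h0
  · have e : (fun t => u₀ t + τ • v t) = u₀ := by
      ext1 t; rw [hv.eq_zero_of_H2inner h0.ge, smul_zero, add_zero]
    rw [e, ← h0, Real.sqrt_zero]
    exact ⟨by linarith, hfin, by linarith⟩
  set n := √(H2inner v v) with hn
  have hn0 : 0 < n := Real.sqrt_pos.2 h0
  have hn2 : H2inner v v = n ^ 2 := (Real.sq_sqrt h0.le).symm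
  set ψ : ℝ → E3 := fun t => n⁻¹ • v t with hψdef
  have hψ : C2Per ψ := hv.smul _
  have hψ1 : bend ψ ≤ 1 := by
    have : bend ψ = (n⁻¹) ^ 2 * bend v := by
      unfold bend
      rw [hψdef, hv.deriv2_smul, ← integral_const_mul]
      congr 1; ext x
      rw [norm_smul, mul_pow, Real.norm_eq_abs, sq_abs]
    rw [this, inv_pow, inv_mul_le_iff₀ (by positivity), mul_one, ← hn2]
    exact hv.bend_le_H2inner
  have hδ : deltaTP q u₀ v = n * deltaTP q u₀ ψ := by
    rw [hψdef, deltaTP_smul hv, mul_inv_cancel_left₀ hn0.ne']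
  have hC : |deltaTP q u₀ ψ| ≤ varConst Λ ℓ := hu.abs_deltaTP_le hℓ hℓ1 hq hq4 hψ hψ1
  have hid := h.bending_identity
  rw [h.eqn v h.adm, hδ, hn2] at hid
  have hb1 := bend_nonneg (fun t => u₀ t + τ • v t)
  have hbv : 0 ≤ κ / 2 * τ ^ 2 * bend v := by have := bend_nonneg v; positivity
  have hb1' : 0 ≤ κ / 2 * bend (fun t => u₀ t + τ • v t) := by positivity
  have hC' := abs_le.1 hC
  have hCn := varConst_nonneg (Λ := Λ) hℓ
  have hRn := remConst_nonneg (Λ := Λ) hℓ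
  have hNsmall : τ * n ≤ ℓ / 2 := by
    by_contra! hlt
    have h1 : τ * n ^ 2 ≤ e₀ + τ * n * (ρ * varConst Λ ℓ) := by
      have : -(ρ * deltaTP q u₀ ψ) ≤ ρ * varConst Λ ℓ := by nlinarith
      have := mul_le_mul_of_nonneg_left this (show 0 ≤ τ * n by positivity)
      nlinarith
    have h2 : (τ * n) ^ 2 ≤ ℓ ^ 2 / 16 + τ * n * (ℓ / 8) := by
      have a1 := mul_le_mul_of_nonneg_left h1 hτ.le
      have a2 := mul_le_mul_of_nonneg_left hτ₂ (show 0 ≤ τ * n by positivity)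
      nlinarith
    nlinarith
  have key := hu.TPr_add_le (N := τ * n) hℓ hℓ1 hq hq4 hψ hψ1 (by positivity) hNsmall
  have e : (fun t => u₀ t + (τ * n) • ψ t) = fun t => u₀ t + τ • v t := by
    ext1 t
    rw [hψdef, smul_smul, mul_assoc, mul_inv_cancel₀ hn0.ne', mul_one]
  rw [e] at key
  refine ⟨hNsmall, key.1, ?_⟩
  have k1 := mul_le_mul_of_nonneg_left key.2 hρ
  change _ ≤ ρ * (_ + _ + remConst Λ ℓ * (τ * n) ^ 2) at k1
  have k2 := mul_le_mul_of_nonneg_left hτ₃ (show 0 ≤ τ * n ^ 2 by positivity)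
  rw [hn2]
  nlinarith

lemma wrap_ne_zero {s : ℝ} (h0 : 0 < s) (h1 : s < 1) : wrap s ≠ 0 := by
  obtain ⟨n, hn⟩ := wrap_eq_add s
  intro h
  rw [hn] at h
  have h2 : (-1 : ℝ) < n := by linarith
  have h3 : (n : ℝ) < 0 := by linarith
  have h4 : -1 < n := by exact_mod_cast h2
  have h5 : n < 0 := by exact_mod_cast h3
  omega

/-- Short steps do not create self-intersections. -/
lemma Tame.ne_of_short {Λ ℓ : ℝ} (hu : Tame u₀ Λ ℓ) (hℓ : 0 < ℓ) (hτ : 0 < τ) (hv : C2Per v)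
    (hN : τ * √(H2inner v v) ≤ ℓ / 2) (y : ℝ) {s : ℝ} (h0 : 0 < s) (h1 : s < 1) :
    u₀ (y + s) + τ • v (y + s) ≠ u₀ y + τ • v y := by
  intro heq
  have hw := abs_pos.2 (wrap_ne_zero h0 h1)
  have hsep := hu.sep (y + s) y
  rw [add_sub_cancel_left] at hsep
  have hv1 : ‖v (y + s) - v y‖ ≤ √(H2inner v v) * |wrap s| := by
    rw [hv.sub_eq_wrap (y + s) y, add_sub_cancel_left]
    have := hv.norm_sub_le (M := √(H2inner v v))
      (fun x => Real.le_sqrt_of_sq_le (hv.norm_deriv_sq_le_H2inner x)) (y + wrap s) y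
    rwa [add_sub_cancel_left] at this
  have e : u₀ (y + s) - u₀ y = -(τ • (v (y + s) - v y)) := by
    rw [smul_sub, neg_sub, sub_eq_sub_iff_add_eq_add, heq]; abel
  rw [e, norm_neg, norm_smul, Real.norm_of_nonneg hτ.le] at hsep
  have := mul_le_mul_of_nonneg_left hv1 hτ.le
  nlinarith [mul_le_mul_of_nonneg_right hN hw.le]

end Scheme

section Induction

variable {κ ρ q e₀ τ c Λ ℓ S E : ℝ} {u v : ℝ → E3}

/-- The properties propagated by the scheme: `S` is the accumulated squared `H²`-norm of the
difference quotients and `E` the energy, without tangent-point part for multiply covered curves. -/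
structure Iterate (κ ρ q e₀ τ c Λ ℓ : ℝ) (u : ℝ → E3) (S E : ℝ) : Prop where
  per : C2Per u
  nonneg : 0 ≤ S
  energy_nonneg : 0 ≤ E
  total_le : τ / 2 * S + E ≤ e₀
  one_le : ∀ x, 1 ≤ ‖deriv u x‖
  speed_le : ∀ x, ‖deriv u x‖ ^ 2 ≤ 1 + τ ^ 2 * S
  speed_le_mul : ∀ x, ‖deriv u x‖ ^ 2 ≤ 1 + c ^ 2 * τ ^ 2 * S
  dichotomy : (Flat ρ u ∧ E = κ / 2 * bend u) ∨
    (0 < ρ ∧ Tame u Λ ℓ ∧ TPe q u ≠ ⊤ ∧ E = κ / 2 * bend u + ρ * TPr q u)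

lemma bend_le_of_energy (hκ : 0 < κ) (h : κ / 2 * bend u ≤ e₀) : bend u ≤ 2 * e₀ / κ := by
  rw [le_div_iff₀ hκ]; linarith

lemma TPr_nonneg (q : ℝ) (u : ℝ → E3) : 0 ≤ TPr q u := ENNReal.toReal_nonneg

lemma Iterate.initial {h₁ : ℝ} (hκ : 0 < κ) (hρ : 0 ≤ ρ) (hq : 2 < q)
    (hu : C2Per u) (hunit : ∀ x, ‖deriv u x‖ = 1) (hfin : TPe q u ≠ ⊤)
    (hE : κ / 2 * bend u + ρ * TPr q u ≤ e₀) (h0 : 0 < h₁) (hh : h₁ ≤ 1)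
    (hΛ : h₁ * (2 * e₀ / κ) ≤ 2)
    (hs : ∀ h, 0 < h → h < h₁ → e₀ / ρ < 1 / q * ((4 * h)⁻¹ ^ q * (h / 32) ^ 2)) :
    ∃ E, Iterate κ ρ q e₀ τ c (2 * e₀ / κ) (bilConst (2 * e₀ / κ) h₁) u 0 E := by
  have hT := TPr_nonneg q u
  have hb := bend_nonneg u
  have hρT : 0 ≤ ρ * TPr q u := mul_nonneg hρ hT
  have hκb : 0 ≤ κ / 2 * bend u := by positivity
  have flat (hf : Flat ρ u) :
      ∃ E, Iterate κ ρ q e₀ τ c (2 * e₀ / κ) (bilConst (2 * e₀ / κ) h₁) u 0 E :=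
    ⟨κ / 2 * bend u, hu, le_rfl, hκb, by linarith, fun x => (hunit x).ge,
      fun x => by simp [hunit], fun x => by simp [hunit], .inl ⟨hf, rfl⟩⟩
  rcases hρ.eq_or_lt with rfl | hρ'
  · exact flat (.inl rfl)
  have hB : TPr q u ≤ e₀ / ρ := by rw [le_div_iff₀ hρ']; linarith
  have hbent : Bent u (2 * e₀ / κ) := ⟨hu, fun x => (hunit x).ge,
    fun x => by rw [hunit]; norm_num, bend_le_of_energy hκ (by linarith)⟩
  by_cases hret : ∃ y, ∃ s ∈ Icc (locScale (2 * e₀ / κ)) (1 - locScale (2 * e₀ / κ)),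
      u (y + s) = u y
  · exact flat (.inr (hbent.exists_periodic hq hfin hB h0 hh hΛ hs (fun x => (hunit x).le) hret))
  · push Not at hret
    exact ⟨κ / 2 * bend u + ρ * TPr q u, hu, le_rfl, by positivity, by linarith,
      fun x => (hunit x).ge, fun x => by simp [hunit], fun x => by simp [hunit],
      .inr ⟨hρ', hbent.tame hq hfin hB hh hΛ hs hret, hfin, rfl⟩⟩

lemma Iterate.next {h₁ : ℝ} (hκ : 0 < κ) (hq : 2 < q) (hq4 : q ≤ 4) (he₀ : 0 < e₀)
    (h0 : 0 < h₁) (hh : h₁ ≤ 1) (hΛ : h₁ * (2 * e₀ / κ) ≤ 2)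
    (hs : ∀ h, 0 < h → h < h₁ → e₀ / ρ < 1 / q * ((4 * h)⁻¹ ^ q * (h / 32) ^ 2))
    (hℓ : ℓ = bilConst (2 * e₀ / κ) h₁) (hτ₀ : 2 * τ * e₀ ≤ 3)
    (hτ₁ : τ * (16 * e₀) ≤ ℓ ^ 2) (hτ₂ : τ * (8 * (ρ * varConst (2 * e₀ / κ) ℓ)) ≤ ℓ)
    (hτ₃ : τ * (2 * (ρ * remConst (2 * e₀ / κ) ℓ)) ≤ 1)
    (hu : Iterate κ ρ q e₀ τ c (2 * e₀ / κ) ℓ u S E) (h : Step κ ρ q τ u v)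
    (hc : ∀ x, ‖deriv v x‖ ^ 2 ≤ c ^ 2 * bend v) :
    ∃ S' E', Iterate κ ρ q e₀ τ c (2 * e₀ / κ) ℓ (fun t => u t + τ • v t) S' E' := by
  have hv := h.adm.per
  have hN := H2inner_self_nonneg v
  have hτ := h.pos
  have hΛ0 : 0 ≤ 2 * e₀ / κ := by positivity
  have hS := hu.nonneg
  have one_le : ∀ x, 1 ≤ ‖deriv (fun t => u t + τ • v t) x‖ := fun x => by
    have h1 := h.norm_deriv_sq x
    have h2 := one_le_pow₀ (hu.one_le x) (n := 2)
    have h3 : 0 ≤ τ ^ 2 * ‖deriv v x‖ ^ 2 := by positivity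
    exact (one_le_sq_iff₀ (norm_nonneg _)).1 (by linarith)
  have speed_le : ∀ x, ‖deriv (fun t => u t + τ • v t) x‖ ^ 2 ≤
      1 + τ ^ 2 * (S + H2inner v v) := fun x => by
    have h1 := hu.speed_le x
    have h2 := mul_le_mul_of_nonneg_left (hv.norm_deriv_sq_le_H2inner x) (sq_nonneg τ)
    rw [h.norm_deriv_sq]; linarith
  have speed_le_mul : ∀ x, ‖deriv (fun t => u t + τ • v t) x‖ ^ 2 ≤
      1 + c ^ 2 * τ ^ 2 * (S + H2inner v v) := fun x => by
    have h1 := hu.speed_le_mul x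
    have h2 := mul_le_mul_of_nonneg_left ((hc x).trans
      (mul_le_mul_of_nonneg_left hv.bend_le_H2inner (sq_nonneg c))) (sq_nonneg τ)
    rw [h.norm_deriv_sq]; linarith
  have hb1 := bend_nonneg fun t => u t + τ • v t
  have hκb1 : 0 ≤ κ / 2 * bend fun t => u t + τ • v t := by positivity
  have htot := hu.total_le
  have hτN : 0 ≤ τ * H2inner v v := by positivity
  have hτS : 0 ≤ τ * S := by positivity
  rcases hu.dichotomy with ⟨hf, hE⟩ | ⟨hρ, ht, hfin, hE⟩
  · obtain ⟨hf', hen⟩ := h.flat hκ hq hu.one_le hf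
    exact ⟨S + H2inner v v, _, h.per_next, by positivity, hκb1, by linarith, one_le, speed_le,
      speed_le_mul, .inl ⟨hf', rfl⟩⟩
  · have hT := mul_nonneg hρ.le (TPr_nonneg q u)
    have hT1 := mul_nonneg hρ.le (TPr_nonneg q fun t => u t + τ • v t)
    have hℓ0 : 0 < ℓ := hℓ ▸ bilConst_pos hΛ0 h0
    have hℓ1 : ℓ ≤ 1 := by
      rw [hℓ]; exact (min_le_left _ _).trans (by norm_num)
    obtain ⟨hshort, hfin', hen⟩ := h.of_tame hκ hρ.le hq hq4 ht hℓ0 hℓ1 hfin (by linarith)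
      hτ₁ hτ₂ hτ₃
    have htot' : τ / 2 * (S + H2inner v v) + (κ / 2 * bend (fun t => u t + τ • v t) +
      ρ * TPr q (fun t => u t + τ • v t)) ≤ e₀ := by linarith
    have hbent : Bent (fun t => u t + τ • v t) (2 * e₀ / κ) := by
      refine ⟨h.per_next, one_le, fun x => ?_, bend_le_of_energy hκ (by linarith)⟩
      have h1 := speed_le x
      have h2 : τ * (τ * (S + H2inner v v)) ≤ τ * (2 * e₀) :=
        mul_le_mul_of_nonneg_left (by linarith) hτ.le
      exact (abs_le_of_sq_le_sq' (by linarith) two_pos.le).2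
    obtain ⟨d1, d2, -⟩ := locScale_spec hΛ0
    refine ⟨S + H2inner v v, _, h.per_next, by positivity, by linarith, htot', one_le, speed_le,
      speed_le_mul, .inr ⟨hρ, ?_, hfin', rfl⟩⟩
    rw [hℓ]
    exact hbent.tame hq hfin' (by rw [le_div_iff₀ hρ]; linarith) hh hΛ hs fun y s hs =>
      ht.ne_of_short hℓ0 hτ hv hshort y (d1.trans_le hs.1) (by linarith [hs.2])

lemma Iterate.abs_sub_one_le (hτ : 0 < τ) (he₀ : 0 < e₀)
    (hu : Iterate κ ρ q e₀ τ c Λ ℓ u S E) (x : ℝ) :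
    |‖deriv u x‖ ^ 2 - 1| ≤ 4 * τ * c ^ 2 * e₀ := by
  have h1 := one_le_pow₀ (hu.one_le x) (n := 2)
  have h2 := hu.speed_le_mul x
  have h3 : τ * c ^ 2 * (τ * S) ≤ τ * c ^ 2 * (2 * e₀) :=
    mul_le_mul_of_nonneg_left (by linarith [hu.total_le, hu.energy_nonneg]) (by positivity)
  have h4 : 0 ≤ τ * c ^ 2 * e₀ := by positivity
  rw [abs_of_nonneg (by linarith)]
  linarith

end Induction
/-- Proposition 2.3, maintenance of the arclength
parametrization: with the stability constant `c'` of the energy-stable scheme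
and `τ c' ≤ 1/2`, the iterates satisfy
`max_k ‖ |(u^k)'|² - 1 ‖_{L^∞} ≤ 4 τ c_∞² e₀`, where `c_∞` is the constant in the
Sobolev inequality `‖w'‖_{L^∞} ≤ c_∞ ‖w''‖_{L²}` for `C²` periodic `w`. -/
theorem arclength_maintenance (κ ρ q e₀ : ℝ)
    (hκ : 0 < κ) (hρ : 0 ≤ ρ) (hq : 2 < q) (hq4 : q ≤ 4) (he₀ : 0 < e₀) :
    ∃ c' : ℝ, 0 < c' ∧ ∀ (τ : ℝ) (K : ℕ) (u : ℕ → ℝ → EuclideanSpace ℝ (Fin 3)),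
      0 < τ → τ * c' ≤ 1 / 2 →
      (∀ k ≤ K, ContDiff ℝ 2 (u k) ∧ Function.Periodic (u k) 1) →
      (∀ x : ℝ, ‖deriv (u 0) x‖ = 1) →
      TPe q (u 0) ≠ ⊤ →
      energyE κ ρ q (u 0) ≤ e₀ →
      (∀ k, 1 ≤ k → k ≤ K →
        (∀ x : ℝ,
          ⟪deriv (fun t => τ⁻¹ • (u k t - u (k - 1) t)) x, deriv (u (k - 1)) x⟫ = 0) ∧
        (∀ w : ℝ → EuclideanSpace ℝ (Fin 3), ContDiff ℝ 2 w → Function.Periodic w 1 →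
          (∀ x : ℝ, ⟪deriv w x, deriv (u (k - 1)) x⟫ = 0) →
          H2inner (fun t => τ⁻¹ • (u k t - u (k - 1) t)) w +
              κ * (∫ x in Ioc (0 : ℝ) 1, ⟪deriv (deriv (u k)) x, deriv (deriv w) x⟫) =
            -(ρ * deltaTP q (u (k - 1)) w))) →
      ∀ cinf : ℝ, 0 < cinf →
        (∀ w : ℝ → EuclideanSpace ℝ (Fin 3), ContDiff ℝ 2 w → Function.Periodic w 1 →
          ∀ x : ℝ, ‖deriv w x‖ ≤
            cinf * (∫ t in Ioc (0 : ℝ) 1, ‖deriv (deriv w) t‖ ^ 2) ^ ((1 : ℝ) / 2)) →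
        ∀ k ≤ K, ∀ x : ℝ, |‖deriv (u k) x‖ ^ 2 - 1| ≤ 4 * τ * cinf ^ 2 * e₀ := by
  have hΛ0 : 0 ≤ 2 * e₀ / κ := by positivity
  obtain ⟨h₁, h0, hh, hΛ, hs⟩ := exists_chord_scale hq (e₀ / ρ) (2 * e₀ / κ) hΛ0
  obtain ⟨ℓ, hℓ⟩ : ∃ ℓ, ℓ = bilConst (2 * e₀ / κ) h₁ := ⟨_, rfl⟩
  have hℓ0 : 0 < ℓ := hℓ ▸ bilConst_pos hΛ0 h0
  have hV := mul_nonneg hρ (varConst_nonneg (Λ := 2 * e₀ / κ) hℓ0)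
  have hR := mul_nonneg hρ (remConst_nonneg (Λ := 2 * e₀ / κ) hℓ0)
  set V := ρ * varConst (2 * e₀ / κ) ℓ with hVdef
  set R := ρ * remConst (2 * e₀ / κ) ℓ with hRdef
  refine ⟨8 * e₀ / ℓ ^ 2 + 4 * V / ℓ + R + e₀, by positivity, ?_⟩
  intro τ K u hτ hτc hC2 hunit hfin hE hstep cinf hcinf hsob
  have a1 : 0 ≤ τ * (8 * e₀ / ℓ ^ 2) := by positivity
  have a2 : 0 ≤ τ * (4 * V / ℓ) := by positivity
  have a3 : 0 ≤ τ * R := by positivity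
  have a4 : 0 ≤ τ * e₀ := by positivity
  rw [mul_add, mul_add, mul_add] at hτc
  have b1 : τ * (8 * e₀ / ℓ ^ 2) ≤ 1 / 2 := by linarith
  have b2 : τ * (4 * V / ℓ) ≤ 1 / 2 := by linarith
  rw [← mul_div_assoc, div_le_iff₀ (by positivity)] at b1 b2
  have inv : ∀ k ≤ K, ∃ S E, Iterate κ ρ q e₀ τ cinf (2 * e₀ / κ) ℓ (u k) S E := by
    intro k
    induction k with
    | zero =>
      intro _
      have := Iterate.initial (τ := τ) (c := cinf) hκ hρ hq ⟨(hC2 0 K.zero_le).1, (hC2 0 K.zero_le).2⟩ hunit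
        hfin hE h0 hh hΛ hs
      rw [← hℓ] at this
      exact ⟨0, this⟩
    | succ k ih =>
      intro hk
      obtain ⟨S, E, hu⟩ := ih (by omega)
      obtain ⟨horth, heqn⟩ := hstep (k + 1) (by omega) hk
      rw [Nat.add_sub_cancel] at horth heqn
      set v : ℝ → E3 := fun t => τ⁻¹ • (u (k + 1) t - u k t) with hvdef
      have hnext : u (k + 1) = fun t => u k t + τ • v t := by
        ext1 t
        rw [hvdef, smul_inv_smul₀ hτ.ne', add_sub_cancel]
      have hv : C2Per v :=
        (C2Per.sub ⟨(hC2 _ hk).1, (hC2 _ hk).2⟩ hu.per).smul τ⁻¹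
      have step : Step κ ρ q τ (u k) v :=
        ⟨hτ, hu.per, ⟨hv, horth⟩, fun w hw => by
          rw [← hnext]; exact heqn w hw.per.smooth hw.per.periodic hw.orth⟩
      rw [hnext]
      refine hu.next hκ hq hq4 he₀ h0 hh hΛ hs hℓ (by linarith) (by linarith) (by linarith)
        (by linarith) step fun x => ?_
      have h1 := hsob v hv.smooth hv.periodic x
      rw [← Real.sqrt_eq_rpow, ← bend] at h1
      have h2 := pow_le_pow_left₀ (norm_nonneg _) h1 2
      rwa [mul_pow, Real.sq_sqrt (bend_nonneg v)] at h2
  intro k hk x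
  obtain ⟨S, E, hu⟩ := inv k hk
  exact hu.abs_sub_one_le hτ he₀ x
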